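/- Let μ be an ergodic process on Σ = 𝒜^{ℤ_{≥0}^d} with entropy rate h_μ, let 0 < φ < 1, and let α_0 > 0. For x ∈ Σ set B_{α_0}^+ := {k : M_k(x) ≥ A^{k^d(h_μ+α_0)}}, B_{α_0}^− := {k : M_k(x) ≤ A^{k^d(h_μ−α_0)}}, and B_{α_0} := B_{α_0}^+ ∪ B_{α_0}^−. Then for μ-almost every x, the upper asymptotic density of the set ∪_{k∈B_{α_0}} L_k(x) ⊆ ℤ_{≥0}^d is zero. -/

import Mathlib

open MeasureTheory Filter Topology

namespace SRU1408

/-- A site of the lattice `ℤ_{≥0}^d`. -/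
abbrev Site (d : ℕ) := Fin d → ℕ

/-- An infinite array over the alphabet `Fin A`, i.e. an element of `Σ = 𝒜^{ℤ_{≥0}^d}`. -/
abbrev Config (A d : ℕ) := Site d → Fin A

/-- A cubical `k`-word, i.e. an element of `Σ^k = 𝒜^{Λ_k}`. -/
abbrev Word (A d k : ℕ) := (Fin d → Fin k) → Fin A

variable {A d : ℕ}

/-- The pattern of `x` on the cube `Λ_k + c`, as a `k`-word. -/
def wordAt (x : Config A d) (k : ℕ) (c : Site d) : Word A d k :=
  fun i => x fun j => c j + (i j : ℕ)

/-- The lattice shift `σ_r`. -/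
def shift (r : Site d) (x : Config A d) : Config A d := fun i => x (i + r)

/-- Stationarity: invariance under all shifts. -/
def Stationary (μ : Measure (Config A d)) : Prop := ∀ r : Site d, μ.map (shift r) = μ

/-- Ergodicity: stationary, and every measurable set invariant under all shifts is trivial. -/
def ErgodicShift (μ : Measure (Config A d)) : Prop :=
  Stationary μ ∧ ∀ E : Set (Config A d), MeasurableSet E →
    (∀ r : Site d, shift r ⁻¹' E = E) → μ E = 0 ∨ μ E = 1

/-- The `k`-word marginal distribution `μ^k`, as a probability vector on `Σ^k`. -/
noncomputable def wordDist (μ : Measure (Config A d)) (k : ℕ) : Word A d k → ℝ :=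
  fun w => (μ {x | wordAt x k 0 = w}).toReal

/-- Base-`A` entropy of a probability vector. -/
noncomputable def entH (A : ℕ) {W : Type*} [Fintype W] (p : W → ℝ) : ℝ :=
  -∑ w, p w * Real.logb A (p w)

/-- `μ` has entropy rate `h` (base-`A` logarithms): `H(μ^n)/n^d → h`. -/
def HasEntropyRate (μ : Measure (Config A d)) (h : ℝ) : Prop :=
  Tendsto (fun n : ℕ => entH A (wordDist μ n) / (n : ℝ) ^ d) atTop (𝓝 h)

/-- Lexicographically ordered list of the tuples in `Λ_n ⊂ ℤ_{≥0}^d`. -/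
def tuples : (d : ℕ) → ℕ → List (Fin d → ℕ)
  | 0, _ => [fun i => i.elim0]
  | d + 1, n => (List.range n).flatMap fun a => (tuples d n).map fun t => Fin.cons a t

/-- State of the `SRU_φ` parser: parsed cube `Λ_m`, current block size `k`, and the current
parsing, a list of cubical blocks (corner and side length) in the order they were parsed. -/
structure PState (d : ℕ) where
  m : ℕ
  k : ℕ
  blocks : List ((Fin d → ℕ) × ℕ)

/-- The recurrence quantity `J(P, k)`: the fraction of `k`-blocks of the parsing whose words
occur at least twice among the parsed `k`-words (`0` if there are no `k`-blocks). -/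
noncomputable def Jval (x : Config A d) (P : List ((Fin d → ℕ) × ℕ)) (k : ℕ) : ℝ :=
  let Pk := P.filter fun b => decide (b.2 = k)
  ((Pk.filter fun b =>
      decide (2 ≤ (Pk.filter fun b' =>
        decide (wordAt x k b'.1 = wordAt x k b.1)).length)).length : ℝ) / (Pk.length : ℝ)

open scoped Classical in
/-- One step of the `SRU_φ` parser: if `J(P_m, k) ≥ φ`, increase the block size; otherwise
parse the boundary region `L = Λ_{⌊m/k⌋k+k} \ Λ_{⌊m/k⌋k}` regularly into `k`-blocks,
appending them in lexicographic order of their corners, and set `m := ⌊m/k⌋k + k`. -/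
noncomputable def step (φ : ℝ) (x : Config A d) (s : PState d) : PState d :=
  if φ ≤ Jval x s.blocks s.k then { s with k := s.k + 1 }
  else
    { m := s.m / s.k * s.k + s.k
      k := s.k
      blocks := s.blocks ++
        (((tuples d (s.m / s.k + 1)).filter fun r => decide (¬ ∀ j, r j < s.m / s.k)).map
          fun r => (fun j => s.k * r j, s.k)) }

/-- The `SRU_φ` parser iterated from the initial state `m = 0`, `k = 1`, empty parsing. -/
noncomputable def iter (φ : ℝ) (x : Config A d) : ℕ → PState d
  | 0 => ⟨0, 1, []⟩
  | t + 1 => step φ x (iter φ x t)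

/-- Membership of a site in a block. -/
def inBlock (i : Site d) (b : (Fin d → ℕ) × ℕ) : Prop :=
  ∀ j, b.1 j ≤ i j ∧ i j < b.1 j + b.2

/-- `L_k(x)`: the region parsed with block size `k`. -/
def Lregion (φ : ℝ) (x : Config A d) (k : ℕ) : Set (Site d) :=
  {i | ∃ t, ∃ b ∈ (iter φ x t).blocks, b.2 = k ∧ inBlock i b}

/-- `M_k(x)`: the number of distinct `k`-words parsed in `L_k(x)`. -/
noncomputable def Mk (φ : ℝ) (x : Config A d) (k : ℕ) : ℕ :=
  Set.ncard {w : Word A d k | ∃ t, ∃ b ∈ (iter φ x t).blocks, b.2 = k ∧ wordAt x k b.1 = w}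

/-- The cube `Λ_n` as a set of sites. -/
def cubeSet (d n : ℕ) : Set (Site d) := {i | ∀ j, i j < n}

/-- Upper asymptotic density of a set of sites. -/
noncomputable def upperDensity (S : Set (Site d)) : ℝ :=
  limsup (fun n : ℕ => (Set.ncard (S ∩ cubeSet d n) : ℝ) / (n : ℝ) ^ d) atTop

/-- `k` is a typical scale for `x`: `A^{k^d(h-α₀)} ≤ M_k(x) ≤ A^{k^d(h+α₀)}`. -/
def TypicalScale (φ : ℝ) (x : Config A d) (h α0 : ℝ) (k : ℕ) : Prop :=
  (A : ℝ) ^ ((k : ℝ) ^ d * (h - α0)) ≤ (Mk φ x k : ℝ) ∧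
    (Mk φ x k : ℝ) ≤ (A : ℝ) ^ ((k : ℝ) ^ d * (h + α0))

/-- The total volume `|L_l^u| = Σ_{l ≤ k ≤ u} |L_k(x)|`. -/
noncomputable def volIcc (φ : ℝ) (x : Config A d) (l u : ℕ) : ℝ :=
  ∑ k ∈ Finset.Icc l u, (Set.ncard (Lregion φ x k) : ℝ)

open scoped Classical in
/-- The `i`-th block ever appended by the parser (the block lists grow by appending). -/
noncomputable def blockSeq (φ : ℝ) (x : Config A d) (i : ℕ) : Option ((Fin d → ℕ) × ℕ) :=
  if h : ∃ t, i < (iter φ x t).blocks.length then ((iter φ x h.choose).blocks)[i]? else none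

/-- The side length of the largest leading sub-word of the `i`-th parsed word that occurs as
a leading sub-word of a previously parsed word (`0` if there is none). -/
noncomputable def matchLen (φ : ℝ) (x : Config A d) (i : ℕ) : ℕ :=
  sSup {l : ℕ | ∃ b, blockSeq φ x i = some b ∧ l ≤ b.2 ∧
    ∃ j < i, ∃ b', blockSeq φ x j = some b' ∧ l ≤ b'.2 ∧ wordAt x l b.1 = wordAt x l b'.1}

/-- The length (in alphabet symbols) of the code of the `i`-th parsed word: a pointer to a
previously parsed word, a descriptor of `O(log)` length (side length and position of the
block, and side length of the referenced leading sub-word), and the list of the entries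
outside the referenced leading sub-word. -/
noncomputable def codeLen (φ : ℝ) (x : Config A d) (i : ℕ) : ℕ :=
  match blockSeq φ x i with
  | none => 0
  | some b =>
    (Nat.log A (i + 1) + 1) + (Nat.log A (b.2 + 1) + 1) +
      (∑ j : Fin d, (Nat.log A (b.1 j + 1) + 1)) +
      (Nat.log A (matchLen φ x i + 1) + 1) + (b.2 ^ d - matchLen φ x i ^ d)

/-- The first time at which the parsed region covers `Λ_n`. -/
noncomputable def coverTime (φ : ℝ) (x : Config A d) (n : ℕ) : ℕ :=
  sInf {t | n ≤ (iter φ x t).m}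

/-- `|C_φ(x^n)|`: the total length of the code of the portion of the parsing covering `Λ_n`. -/
noncomputable def codeLength (φ : ℝ) (x : Config A d) (n : ℕ) : ℕ :=
  ∑ i ∈ Finset.range ((iter φ x (coverTime φ x n)).blocks.length), codeLen φ x i

/-- The cube with smallest site `c` and side length `k`. -/
def cube (c : Site d) (k : ℕ) : Finset (Site d) :=
  Fintype.piFinset fun j => Finset.Ico (c j) (c j + k)

theorem mem_cube {c i : Site d} {k : ℕ} : i ∈ cube c k ↔ ∀ j, c j ≤ i j ∧ i j < c j + k := by
  simp [cube]

theorem mem_cube_zero {i : Site d} {k : ℕ} : i ∈ cube (0 : Site d) k ↔ ∀ j, i j < k := by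
  simp [mem_cube]

theorem card_cube (c : Site d) (k : ℕ) : (cube c k).card = k ^ d := by
  simp [cube, Fintype.card_piFinset]

theorem cube_zero_mono {a b : ℕ} (h : a ≤ b) : cube (0 : Site d) a ⊆ cube 0 b := fun i hi => by
  rw [mem_cube_zero] at *
  exact fun j => (hi j).trans_le h

theorem self_mem_cube (c : Site d) {k : ℕ} (hk : 0 < k) : c ∈ cube c k :=
  mem_cube.2 fun j => by omega

theorem coe_cube_zero (n : ℕ) : (cube (0 : Site d) n : Set (Site d)) = cubeSet d n := by
  ext i
  simp [cubeSet, mem_cube_zero]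

theorem cube_subset_cube_zero {c : Site d} {k n : ℕ} (h : ∀ j, c j + k ≤ n) :
    cube c k ⊆ cube 0 n := fun i hi => by
  rw [mem_cube] at hi
  rw [mem_cube_zero]
  exact fun j => (hi j).2.trans_le (h j)

theorem add_le_of_cube_subset {c : Site d} {k n : ℕ} (hk : 0 < k) (h : cube c k ⊆ cube 0 n)
    (j : Fin d) : c j + k ≤ n := by
  have h1 : (fun l => c l + (k - 1)) ∈ cube c k := mem_cube.2 fun l => by omega
  have := mem_cube_zero.1 (h h1) j
  omega

theorem mem_cube_add {c i : Site d} {k : ℕ} : i + c ∈ cube c k ↔ i ∈ cube 0 k := by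
  rw [mem_cube, mem_cube_zero]
  refine forall_congr' fun j => ?_
  rw [Pi.add_apply]
  omega

/-- The total volume of a finite family of cubes. -/
def vol (Z : Finset (Site d × ℕ)) : ℕ := ∑ b ∈ Z, b.2 ^ d

/-- A finite family of pairwise disjoint cubes inside `Λ_n`. -/
def CubeFam (Z : Finset (Site d × ℕ)) (n : ℕ) : Prop :=
  (∀ b ∈ Z, cube b.1 b.2 ⊆ cube 0 n) ∧ (Z : Set (Site d × ℕ)).PairwiseDisjoint
    fun b => cube b.1 b.2

/-- The set of sites covered by a finite family of cubes. -/
def cover (Z : Finset (Site d × ℕ)) : Finset (Site d) := Z.biUnion fun b => cube b.1 b.2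

theorem mem_cover {Z : Finset (Site d × ℕ)} {i : Site d} :
    i ∈ cover Z ↔ ∃ b ∈ Z, i ∈ cube b.1 b.2 := by
  simp [cover]

theorem CubeFam.card_cover {Z : Finset (Site d × ℕ)} {n : ℕ} (h : CubeFam Z n) :
    (cover Z).card = vol Z := by
  rw [cover, Finset.card_biUnion h.2]
  simp [vol, card_cube]

theorem CubeFam.cover_subset {Z : Finset (Site d × ℕ)} {n : ℕ} (h : CubeFam Z n) :
    cover Z ⊆ cube 0 n := Finset.biUnion_subset.2 h.1

theorem CubeFam.vol_le {Z : Finset (Site d × ℕ)} {n : ℕ} (h : CubeFam Z n) :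
    vol Z ≤ n ^ d := by
  rw [← h.card_cover, ← card_cube (0 : Site d) n]
  exact Finset.card_le_card h.cover_subset

/-- Vitali covering by cubes: the corners are covered, up to `3 ^ d`, by a disjoint subfamily. -/
theorem exists_disjoint_cubes (R : Finset (Site d)) (n : Site d → ℕ) (hn : ∀ r ∈ R, 0 < n r) :
    ∃ u ⊆ R, (u : Set (Site d)).PairwiseDisjoint (fun r => cube r (n r)) ∧
      R.card ≤ 3 ^ d * ∑ r ∈ u, n r ^ d := by
  obtain ⟨u, huR, hdis, hcov⟩ := Vitali.exists_disjoint_subfamily_covering_enlargement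
    (fun r : Site d => (cube r (n r) : Set (Site d))) (R : Set (Site d)) (fun r => (n r : ℝ))
    2 (by norm_num) (fun _ _ => by positivity) ((R.sup n : ℕ) : ℝ)
    (fun a ha => by exact_mod_cast Finset.le_sup (f := n) ha)
    (fun a ha => ⟨a, by exact_mod_cast self_mem_cube a (hn a ha)⟩)
  lift u to Finset (Site d) using R.finite_toSet.subset huR
  refine ⟨u, by exact_mod_cast huR, fun a ha b hb hab => ?_, ?_⟩
  · have := hdis ha hb hab
    simpa [Function.onFun, Finset.disjoint_coe] using this
  · have : R ⊆ u.biUnion fun c => cube (fun j => c j - 2 * n c) (3 * n c) := by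
      intro r hr
      obtain ⟨c, hc, ⟨i, hi1, hi2⟩, hle⟩ := hcov r hr
      simp only [Finset.mem_coe, mem_cube] at hi1 hi2 hc
      have hle' : n r ≤ 2 * n c := by exact_mod_cast hle
      rw [Finset.mem_biUnion]
      refine ⟨c, hc, mem_cube.2 fun j => ?_⟩
      have h1 := hi1 j
      have h2 := hi2 j
      constructor <;> omega
    refine (Finset.card_le_card this).trans (Finset.card_biUnion_le.trans ?_)
    rw [Finset.mul_sum]
    refine Finset.sum_le_sum fun c _ => ?_
    rw [card_cube, mul_pow]

open scoped Classical in
/-- The families of disjoint cubes in `Λ_N` all of whose side lengths are at least `k₁`. -/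
noncomputable def fams (d k₁ N : ℕ) : Finset (Finset (Site d × ℕ)) :=
  ((cube (0 : Site d) N) ×ˢ Finset.Icc k₁ N).powerset.filter (CubeFam · N)

theorem mem_fams {k₁ N : ℕ} {Z : Finset (Site d × ℕ)} (hd : 1 ≤ d) (hk : 1 ≤ k₁)
    (hZ : CubeFam Z N) (h : ∀ b ∈ Z, k₁ ≤ b.2) : Z ∈ fams d k₁ N := by
  classical
  rw [fams, Finset.mem_filter, Finset.mem_powerset]
  refine ⟨fun b hb => ?_, hZ⟩
  have h1 : 0 < b.2 := hk.trans (h b hb)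
  rw [Finset.mem_product, Finset.mem_Icc]
  refine ⟨hZ.1 b hb (self_mem_cube _ h1), h b hb, ?_⟩
  have := add_le_of_cube_subset h1 (hZ.1 b hb) ⟨0, hd⟩
  omega

theorem exists_card_fams_le (hA : 2 ≤ A) (hd : 1 ≤ d) {η : ℝ} (hη : 0 < η) :
    ∃ k₁ ≥ 1, ∀ k ≥ k₁, ∀ N : ℕ, ((fams d k N).card : ℝ) ≤ (A : ℝ) ^ (η * (N : ℝ) ^ d) := by
  classical
  have hA1 : (1 : ℝ) < A := by exact_mod_cast hA
  have hA0 : (0 : ℝ) < A := by linarith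
  have hlog : 0 < Real.log A := Real.log_pos hA1
  set ρ : ℝ := (A : ℝ) ^ (-(η / 2)) with hρ
  have hρ0 : 0 < ρ := Real.rpow_pos_of_pos hA0 _
  have hρ1 : ρ < 1 := Real.rpow_lt_one_of_one_lt_of_neg hA1 (by linarith)
  have hsum := summable_geometric_of_lt_one hρ0.le hρ1
  obtain ⟨s, hs⟩ := summable_iff_vanishing_norm.1 hsum (η / 2 * Real.log A) (by positivity)
  refine ⟨s.sup id + 1, by omega, fun k hk N => ?_⟩
  have htail : ∑ j ∈ Finset.Icc k N, ρ ^ j ≤ η / 2 * Real.log A := by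
    refine (le_abs_self _).trans (hs _ ?_).le
    rw [Finset.disjoint_left]
    intro a ha has
    have : a ≤ s.sup id := Finset.le_sup (f := id) has
    rw [Finset.mem_Icc] at ha
    omega
  have hterm : ∀ j : ℕ, (A : ℝ) ^ (-(η / 2) * (j : ℝ) ^ d) ≤ ρ ^ j := fun j => by
    rw [hρ, ← Real.rpow_mul_natCast hA0.le]
    refine Real.rpow_le_rpow_of_exponent_le hA1.le ?_
    have : (j : ℝ) ≤ (j : ℝ) ^ d := by exact_mod_cast Nat.le_self_pow (by omega) j
    nlinarith
  have h1 : ∀ Z ∈ fams d k N, (1 : ℝ) ≤ (A : ℝ) ^ (η / 2 * (N : ℝ) ^ d) *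
      ∏ b ∈ Z, (A : ℝ) ^ (-(η / 2) * (b.2 : ℝ) ^ d) := fun Z hZ => by
    rw [← Real.rpow_sum_of_pos hA0, ← Real.rpow_add hA0]
    refine Real.one_le_rpow hA1.le ?_
    have hv : ((vol Z : ℕ) : ℝ) ≤ (N : ℝ) ^ d := by
      exact_mod_cast (Finset.mem_filter.1 hZ).2.vol_le
    rw [← Finset.mul_sum]
    rw [vol] at hv
    push_cast at hv
    nlinarith
  calc ((fams d k N).card : ℝ) = ∑ Z ∈ fams d k N, (1 : ℝ) := by simp
    _ ≤ ∑ Z ∈ fams d k N, (A : ℝ) ^ (η / 2 * (N : ℝ) ^ d) *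
      ∏ b ∈ Z, (A : ℝ) ^ (-(η / 2) * (b.2 : ℝ) ^ d) := Finset.sum_le_sum h1
    _ ≤ ∑ Z ∈ ((cube (0 : Site d) N) ×ˢ Finset.Icc k N).powerset,
        (A : ℝ) ^ (η / 2 * (N : ℝ) ^ d) *
      ∏ b ∈ Z, (A : ℝ) ^ (-(η / 2) * (b.2 : ℝ) ^ d) :=
        Finset.sum_le_sum_of_subset_of_nonneg (Finset.filter_subset _ _)
          fun _ _ _ => by positivity
    _ = (A : ℝ) ^ (η / 2 * (N : ℝ) ^ d) *
        ∏ b ∈ (cube (0 : Site d) N) ×ˢ Finset.Icc k N,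
          (1 + (A : ℝ) ^ (-(η / 2) * (b.2 : ℝ) ^ d)) := by
        rw [← Finset.mul_sum, Finset.prod_one_add]
    _ ≤ (A : ℝ) ^ (η / 2 * (N : ℝ) ^ d) *
        ∏ b ∈ (cube (0 : Site d) N) ×ˢ Finset.Icc k N, Real.exp (ρ ^ b.2) := by
        gcongr with b hb
        linarith [Real.add_one_le_exp (ρ ^ b.2), hterm b.2]
    _ = (A : ℝ) ^ (η / 2 * (N : ℝ) ^ d) *
        Real.exp ((N : ℝ) ^ d * ∑ j ∈ Finset.Icc k N, ρ ^ j) := by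
        rw [← Real.exp_sum, Finset.sum_product]
        simp [card_cube]
    _ ≤ (A : ℝ) ^ (η / 2 * (N : ℝ) ^ d) *
        Real.exp ((N : ℝ) ^ d * (η / 2 * Real.log A)) := by
        gcongr
    _ = (A : ℝ) ^ (η * (N : ℝ) ^ d) := by
        rw [show Real.exp ((N : ℝ) ^ d * (η / 2 * Real.log A))
          = (A : ℝ) ^ (η / 2 * (N : ℝ) ^ d) by rw [Real.rpow_def_of_pos hA0]; congr 1; ring,
          ← Real.rpow_add hA0]
        congr 1
        ring

open scoped Classical in
/-- Corners of the tiles of the regular tiling of side `p` and offset `v` contained in `R`. -/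
noncomputable def tiles (v : Site d) (p : ℕ) (R : Finset (Site d)) : Finset (Site d) :=
  R.filter fun c => (∀ j, c j % p = v j) ∧ cube c p ⊆ R

theorem tiles_pairwiseDisjoint (v : Site d) (p : ℕ) (R : Finset (Site d)) :
    (tiles v p R : Set (Site d)).PairwiseDisjoint fun c => cube c p := by
  intro a ha b hb hab
  rw [Function.onFun, Finset.disjoint_left]
  intro i hia hib
  refine hab (funext fun j => ?_)
  simp only [tiles, Finset.coe_filter, Set.mem_ofPred_eq] at ha hb
  have h1 := mem_cube.1 hia j
  have h2 := mem_cube.1 hib j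
  have h3 : a j % p = b j % p := (ha.2.1 j).trans (hb.2.1 j).symm
  have e1 := Nat.div_add_mod (a j) p
  have e2 := Nat.div_add_mod (b j) p
  have : a j / p = b j / p := by
    rcases lt_trichotomy (a j / p) (b j / p) with h | h | h
    · have := Nat.mul_le_mul_left p (Nat.succ_le_of_lt h)
      rw [Nat.mul_succ] at this
      omega
    · exact h
    · have := Nat.mul_le_mul_left p (Nat.succ_le_of_lt h)
      rw [Nat.mul_succ] at this
      omega
  rw [this] at e1
  omega

theorem card_tiles_mul_le (v : Site d) (p : ℕ) (R : Finset (Site d)) :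
    (tiles v p R).card * p ^ d ≤ R.card := by
  have h : ((tiles v p R).biUnion fun c => cube c p) ⊆ R :=
    Finset.biUnion_subset.2 fun c hc => (Finset.mem_filter.1 hc).2.2
  have := Finset.card_le_card h
  rwa [Finset.card_biUnion (tiles_pairwiseDisjoint v p R), Finset.sum_congr rfl
    (fun c _ => card_cube c p), Finset.sum_const, smul_eq_mul] at this

/-- A site of `Λ_n` away from the cubes of `Z` and not covered by a tile is close to the boundary
of `Λ_n` or to one of the cubes. -/
theorem uncovered_subset {p n : ℕ} (hp : 0 < p) {v : Site d} (hv : v ∈ cube (0 : Site d) p)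
    (Z : Finset (Site d × ℕ)) :
    (cube 0 n \ cover Z) \ (tiles v p (cube 0 n \ cover Z)).biUnion (fun c => cube c p) ⊆
      (cube 0 n \ cube (fun _ => p) (n - 2 * p)) ∪
      Z.biUnion fun b => cube (fun j => b.1 j - p) (b.2 + 2 * p) \ cube b.1 b.2 := by
  intro i hi
  rw [Finset.mem_sdiff] at hi
  obtain ⟨hiR, hiT⟩ := hi
  rw [Finset.mem_sdiff] at hiR
  rw [Finset.mem_union]
  by_cases hin : i ∈ cube (fun _ => p) (n - 2 * p)
  swap
  · exact Or.inl (Finset.mem_sdiff.2 ⟨hiR.1, hin⟩)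
  right
  rw [mem_cube] at hin hv
  set c : Site d := fun j => i j - (i j + (p - v j)) % p with hc
  have hlt : ∀ j, (i j + (p - v j)) % p < p := fun j => Nat.mod_lt _ hp
  have hcmod : ∀ j, c j % p = v j := fun j => by
    have h1 := Nat.div_add_mod (i j + (p - v j)) p
    have h2 := (hv j).2
    have h3 := hlt j
    have h4 := hin j
    have e : c j + p = v j + p * ((i j + (p - v j)) / p) := by
      simp only [Pi.zero_apply, zero_add] at h2
      simp only [hc]
      omega
    have : (c j + p) % p = v j % p := by rw [e, Nat.add_mul_mod_self_left]
    rw [Nat.add_mod_right] at this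
    rw [this, Nat.mod_eq_of_lt (by simpa using h2)]
  have hic : i ∈ cube c p := mem_cube.2 fun j => by
    have := hlt j
    have h4 := hin j
    simp only [hc]
    omega
  have hnot : ¬ cube c p ⊆ cube 0 n \ cover Z := fun hsub =>
    hiT (Finset.mem_biUnion.2 ⟨c, Finset.mem_filter.2
      ⟨hsub (self_mem_cube c hp), hcmod, hsub⟩, hic⟩)
  obtain ⟨i', hi', hi'R⟩ := Finset.not_subset.1 hnot
  rw [mem_cube] at hi' hic
  have hi'n : i' ∈ cube 0 n := mem_cube_zero.2 fun j => by
    have := hic j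
    have := hi' j
    have := hin j
    omega
  have hi'Z : i' ∈ cover Z := by
    by_contra h
    exact hi'R (Finset.mem_sdiff.2 ⟨hi'n, h⟩)
  obtain ⟨b, hb, hib⟩ := mem_cover.1 hi'Z
  refine Finset.mem_biUnion.2 ⟨b, hb, Finset.mem_sdiff.2 ⟨mem_cube.2 fun j => ?_, fun h =>
    hiR.2 (mem_cover.2 ⟨b, hb, h⟩)⟩⟩
  rw [mem_cube] at hib
  have := hic j
  have := hi' j
  have := hib j
  constructor <;> omega

theorem exists_pow_add_sub_le (d p : ℕ) {ε : ℝ} (hε : 0 < ε) :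
    ∃ k₀ ≥ 1, ∀ k : ℕ, k₀ ≤ k → ((k : ℝ) + 2 * p) ^ d - (k : ℝ) ^ d ≤ ε * (k : ℝ) ^ d := by
  have h : Tendsto (fun k : ℕ => (1 + 2 * (p : ℝ) / k) ^ d) atTop (𝓝 ((1 + 0) ^ d)) :=
    (tendsto_const_nhds.add (tendsto_const_div_atTop_nhds_zero_nat _)).pow d
  rw [add_zero, one_pow] at h
  obtain ⟨k₀, hk₀⟩ := eventually_atTop.1 (h.eventually_le_const (lt_add_of_pos_right 1 hε))
  refine ⟨k₀ + 1, by omega, fun k hk => ?_⟩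
  have hk0 : (0 : ℝ) < k := by exact_mod_cast (by omega : 0 < k)
  have := hk₀ k (by omega)
  have e : ((k : ℝ) + 2 * p) ^ d = (1 + 2 * (p : ℝ) / k) ^ d * (k : ℝ) ^ d := by
    rw [← mul_pow]; congr 1; field_simp
  rw [e]
  nlinarith [pow_pos hk0 d]

theorem exists_pow_sub_sub_le (d p : ℕ) {ε : ℝ} (hε : 0 < ε) :
    ∃ k₀ ≥ 1, ∀ k : ℕ, k₀ ≤ k →
      (k : ℝ) ^ d - ((k - 2 * p : ℕ) : ℝ) ^ d ≤ ε * (k : ℝ) ^ d := by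
  obtain ⟨k₀, hk₀, h⟩ := exists_pow_add_sub_le d p hε
  refine ⟨k₀ + 2 * p, by omega, fun k hk => ?_⟩
  have := h (k - 2 * p) (by omega)
  have e : ((k - 2 * p : ℕ) : ℝ) + 2 * p = k := by
    rw [Nat.cast_sub (by omega)]; push_cast; ring
  rw [e] at this
  refine this.trans ?_
  gcongr
  omega

/-- The boundary sites not covered by tiles have small relative volume. -/
theorem exists_card_uncovered_le {p : ℕ} (hp : 0 < p) {ε : ℝ} (hε : 0 < ε) :
    ∃ k₀ ≥ 1, ∀ n ≥ k₀, ∀ Z : Finset (Site d × ℕ), CubeFam Z n → (∀ b ∈ Z, k₀ ≤ b.2) →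
      ∀ v ∈ cube (0 : Site d) p,
      (((cube 0 n \ cover Z) \ (tiles v p (cube 0 n \ cover Z)).biUnion
        (fun c => cube c p)).card : ℝ) ≤ ε * (n : ℝ) ^ d := by
  obtain ⟨k₀, hk₀, h⟩ := exists_pow_add_sub_le d p (half_pos hε)
  obtain ⟨k₁, hk₁, h'⟩ := exists_pow_sub_sub_le d p (half_pos hε)
  refine ⟨max k₀ k₁, by omega, fun n hn Z hZ hZk v hv => ?_⟩
  have h1 := (Finset.card_le_card (uncovered_subset hp hv Z (n := n))).trans
    (Finset.card_union_le _ _)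
  have h2 : ((cube (0 : Site d) n \ cube (fun _ => p) (n - 2 * p)).card : ℝ)
      ≤ ε / 2 * (n : ℝ) ^ d := by
    refine le_trans ?_ (h' n (by omega))
    rw [Finset.card_sdiff_of_subset]
    · rw [card_cube, card_cube, Nat.cast_sub]
      · push_cast; rfl
      · exact Nat.pow_le_pow_left (by omega) d
    · intro i hi
      rw [mem_cube] at hi
      exact mem_cube_zero.2 fun j => by have := hi j; omega
  have h3 : ((Z.biUnion fun b => cube (fun j => b.1 j - p) (b.2 + 2 * p) \ cube b.1 b.2).card : ℝ)
      ≤ ε / 2 * (n : ℝ) ^ d := by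
    have hv : ((vol Z : ℕ) : ℝ) ≤ (n : ℝ) ^ d := by exact_mod_cast hZ.vol_le
    calc _ ≤ ((∑ b ∈ Z, (cube (fun j => b.1 j - p) (b.2 + 2 * p) \ cube b.1 b.2).card : ℕ) : ℝ) :=
          by exact_mod_cast Finset.card_biUnion_le
      _ ≤ ∑ b ∈ Z, ε / 2 * (b.2 : ℝ) ^ d := by
        push_cast
        refine Finset.sum_le_sum fun b hb => ?_
        refine le_trans ?_ (h b.2 ((le_max_left _ _).trans (hZk b hb)))
        rw [Finset.card_sdiff_of_subset]
        · rw [card_cube, card_cube, Nat.cast_sub]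
          · push_cast; rfl
          · exact Nat.pow_le_pow_left (by omega) d
        · intro i hi
          rw [mem_cube] at hi ⊢
          intro j
          have := hi j
          constructor <;> omega
      _ = ε / 2 * (vol Z : ℕ) := by rw [← Finset.mul_sum, vol]; push_cast; rfl
      _ ≤ _ := by gcongr
  have h4 := (Nat.cast_le (α := ℝ)).2 h1
  push_cast at h4
  linarith

theorem ncard_image_le_of_determined {α β γ : Type*} {W : Set α} {f : α → β} {g : α → γ}
    (hg : (g '' W).Finite) (h : ∀ y ∈ W, ∀ z ∈ W, g y = g z → f y = f z) :
    (f '' W).ncard ≤ (g '' W).ncard := by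
  rcases W.eq_empty_or_nonempty with rfl | ⟨x₀, -⟩
  · simp
  have : Nonempty α := ⟨x₀⟩
  have : ∀ u ∈ g '' W, ∃ y ∈ W, g y = u := fun u hu => hu
  choose! s hs hgs using this
  refine (Set.ncard_le_ncard (t := (fun u => f (s u)) '' (g '' W)) ?_ (hg.image _)).trans
    (Set.ncard_image_le hg)
  rintro _ ⟨y, hy, rfl⟩
  refine ⟨g y, Set.mem_image_of_mem _ hy, ?_⟩
  have hm := Set.mem_image_of_mem g hy
  exact h _ (hs _ hm) _ hy (hgs _ hm)

/-- The number of patterns on `F` of the configurations in `W`. -/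
noncomputable def pat (W : Set (Config A d)) (F : Finset (Site d)) : ℕ :=
  (F.restrict '' W).ncard

theorem restrict_eq_iff {F : Finset (Site d)} {y z : Config A d} :
    F.restrict y = F.restrict z ↔ ∀ i ∈ F, y i = z i :=
  ⟨fun h i hi => congrFun h ⟨i, hi⟩, fun h => funext fun i => h i.1 i.2⟩

theorem pat_mono {W W' : Set (Config A d)} (h : W ⊆ W') (F : Finset (Site d)) :
    pat W F ≤ pat W' F :=
  Set.ncard_le_ncard (Set.image_mono h) (Set.toFinite _)

theorem pat_le (W : Set (Config A d)) (F : Finset (Site d)) : pat W F ≤ A ^ F.card := by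
  refine (Set.ncard_le_card _).trans ?_
  simp

theorem pat_le_of_determined {V : Set (Config A d)} {F F₁ : Finset (Site d)}
    (h : ∀ y ∈ V, ∀ z ∈ V, (∀ i ∈ F₁, y i = z i) → ∀ i ∈ F, y i = z i) :
    pat V F ≤ pat V F₁ :=
  ncard_image_le_of_determined (Set.toFinite _) fun y hy z hz hyz =>
    restrict_eq_iff.2 (h y hy z hz (restrict_eq_iff.1 hyz))

theorem pat_cube (W : Set (Config A d)) (c : Site d) (k : ℕ) :
    pat W (cube c k) = ((fun x => wordAt x k c) '' W).ncard := by
  refine le_antisymm (ncard_image_le_of_determined (Set.toFinite _) fun y _ z _ h => ?_)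
    (ncard_image_le_of_determined (Set.toFinite _) fun y _ z _ h => ?_)
  · refine restrict_eq_iff.2 fun i hi => ?_
    rw [mem_cube] at hi
    have := congrFun h fun j => ⟨i j - c j, by have := hi j; omega⟩
    have e : (fun j => c j + (i j - c j)) = i := funext fun j => by have := hi j; omega
    simpa only [wordAt, e] using this
  · funext i
    exact restrict_eq_iff.1 h _ (mem_cube.2 fun j => ⟨by omega, by have := (i j).2; omega⟩)

theorem pat_biUnion_le {ι : Type*} {W : Set (Config A d)} (S : Finset ι)
    {V : ι → Set (Config A d)} (h : W ⊆ ⋃ s ∈ S, V s) (F : Finset (Site d)) :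
    pat W F ≤ ∑ s ∈ S, pat (V s) F := by
  classical
  have h1 : F.restrict '' W ⊆ ⋃ s ∈ S, F.restrict '' V s := by
    rintro _ ⟨y, hy, rfl⟩
    obtain ⟨s, hs, hys⟩ := Set.mem_iUnion₂.1 (h hy)
    exact Set.mem_iUnion₂.2 ⟨s, hs, Set.mem_image_of_mem _ hys⟩
  exact (Set.ncard_le_ncard h1 (Set.toFinite _)).trans (Finset.set_ncard_biUnion_le _ _)

theorem pat_le_sum_of_finite {β : Type*} [Fintype β] (f : Config A d → β)
    (W : Set (Config A d)) (F : Finset (Site d)) {K : ℝ}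
    (hK : ∀ x ∈ W, (pat {y ∈ W | f y = f x} F : ℝ) ≤ K) :
    (pat W F : ℝ) ≤ K * (f '' W).ncard := by
  classical
  have h : W ⊆ ⋃ u ∈ (Set.toFinite (f '' W)).toFinset, {y ∈ W | f y = u} := fun y hy =>
    Set.mem_iUnion₂.2 ⟨f y, by simpa using ⟨y, hy, rfl⟩, hy, rfl⟩
  have h1 := pat_biUnion_le _ h F
  calc (pat W F : ℝ) ≤ ((∑ u ∈ (Set.toFinite (f '' W)).toFinset,
        pat {y ∈ W | f y = u} F : ℕ) : ℝ) := by exact_mod_cast h1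
    _ ≤ ∑ u ∈ (Set.toFinite (f '' W)).toFinset, K := by
      push_cast
      refine Finset.sum_le_sum fun u hu => ?_
      obtain ⟨x, hx, rfl⟩ := (Set.Finite.mem_toFinset _).1 hu
      exact hK x hx
    _ = K * (f '' W).ncard := by
      rw [Finset.sum_const, nsmul_eq_mul, mul_comm, Set.ncard_eq_toFinset_card _ (Set.toFinite _)]

/-- Fibre bound: given the pattern on `F₂` there are at most `K` patterns on `F`. -/
theorem pat_le_mul_pat {W : Set (Config A d)} {F F₂ : Finset (Site d)} {K : ℝ}
    (hK : ∀ x ∈ W, (pat {y ∈ W | ∀ i ∈ F₂, y i = x i} F : ℝ) ≤ K) :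
    (pat W F : ℝ) ≤ K * pat W F₂ := by
  refine pat_le_sum_of_finite F₂.restrict W F fun x hx => ?_
  simpa only [restrict_eq_iff] using hK x hx

theorem pat_union_le [DecidableEq (Site d)] (W : Set (Config A d)) (F₁ F₂ : Finset (Site d)) :
    pat W (F₁ ∪ F₂) ≤ pat W F₁ * pat W F₂ := by
  have h := pat_le_mul_pat (W := W) (F := F₁ ∪ F₂) (F₂ := F₂) (K := pat W F₁) fun x hx => by
    refine Nat.cast_le.2 ((pat_le_of_determined (F₁ := F₁) ?_).trans
      (pat_mono (fun y hy => hy.1) _))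
    intro y hy z hz h i hi
    rcases Finset.mem_union.1 hi with hi | hi
    · exact h i hi
    · exact (hy.2 i hi).trans (hz.2 i hi).symm
  exact_mod_cast h

theorem pat_biUnion_le_prod {ι : Type*} [DecidableEq (Site d)] (W : Set (Config A d))
    (S : Finset ι) (f : ι → Finset (Site d)) :
    pat W (S.biUnion f) ≤ ∏ c ∈ S, pat W (f c) := by
  classical
  induction S using Finset.induction_on with
  | empty => simpa using pat_le W ∅
  | insert a s ha ih =>
    rw [Finset.biUnion_insert, Finset.prod_insert ha]
    exact (pat_union_le _ _ _).trans (Nat.mul_le_mul_left _ ih)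

theorem pat_subset (W : Set (Config A d)) {F F' : Finset (Site d)} (h : F ⊆ F') :
    pat W F ≤ pat W F' :=
  pat_le_of_determined fun _ _ _ _ hyz i hi => hyz i (h hi)

open scoped Classical in
/-- Sites of `Λ_n` at which the `p`-word is not in `G`. -/
noncomputable def badSites {p : ℕ} (G : Finset (Word A d p)) (n : ℕ) (x : Config A d) :
    Finset (Site d) :=
  (cube 0 n).filter fun i => wordAt x p i ∉ G

/-- Configurations for which the `p`-words in `Λ_n` are mostly in `G`. -/
def good {p : ℕ} (G : Finset (Word A d p)) (δ : ℝ) (n : ℕ) : Set (Config A d) :=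
  {x | ((badSites G n x).card : ℝ) ≤ δ * (n : ℝ) ^ d}

/-- Some regular tiling of side `p` carries at most the average share of the weight `g`. -/
theorem exists_offset {p : ℕ} (hp : 0 < p) (R : Finset (Site d)) {g : Site d → ℝ}
    (hg : ∀ i, 0 ≤ g i) : ∃ v ∈ cube (0 : Site d) p,
      (∑ c ∈ tiles v p R, g c) * (p : ℝ) ^ d ≤ ∑ i ∈ R, g i := by
  classical
  by_contra! hcon
  have hne : (cube (0 : Site d) p).Nonempty := ⟨0, self_mem_cube 0 hp⟩
  have hlt := Finset.sum_lt_sum_of_nonempty hne hcon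
  rw [Finset.sum_const, card_cube, nsmul_eq_mul, ← Finset.sum_mul] at hlt
  have hle : ∑ v ∈ cube (0 : Site d) p, ∑ c ∈ tiles v p R, g c ≤ ∑ i ∈ R, g i := by
    rw [← Finset.sum_biUnion]
    · exact Finset.sum_le_sum_of_subset_of_nonneg
        (Finset.biUnion_subset.2 fun v _ => Finset.filter_subset _ _) fun i _ _ => hg i
    · intro v _ w _ hvw
      rw [Function.onFun, Finset.disjoint_left]
      intro c hc hc'
      refine hvw (funext fun j => ?_)
      rw [← ((Finset.mem_filter.1 hc).2.1 j), ← ((Finset.mem_filter.1 hc').2.1 j)]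
  have hp0 : (0 : ℝ) < (p : ℝ) ^ d := by positivity
  push_cast at hlt
  nlinarith

theorem exists_pat_good_le (hA : 2 ≤ A) (hd : 1 ≤ d) {p : ℕ} (hp : 0 < p) {h δ : ℝ} (hh : 0 ≤ h)
    (hδ : 0 < δ) (hδp : 1 ≤ δ * (p : ℝ) ^ d) (G : Finset (Word A d p))
    (hG : (G.card : ℝ) ≤ (A : ℝ) ^ ((p : ℝ) ^ d * (h + δ))) :
    ∃ k₀ ≥ 1, ∀ n ≥ k₀, ∀ Z : Finset (Site d × ℕ), CubeFam Z n → (∀ b ∈ Z, k₀ ≤ b.2) →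
      (pat (good G δ n) (cube 0 n \ cover Z) : ℝ) ≤
        (A : ℝ) ^ (h * ((n : ℝ) ^ d - vol Z) + 5 * δ * (n : ℝ) ^ d) := by
  classical
  have hA1 : (1 : ℝ) < A := by exact_mod_cast hA
  have hA0 : (0 : ℝ) < A := by linarith
  obtain ⟨k₀, hk₀, hunc⟩ := exists_card_uncovered_le (d := d) hp hδ
  obtain ⟨k₁, hk₁⟩ := exists_nat_ge ((p : ℝ) ^ d / δ)
  refine ⟨max k₀ k₁, by omega, fun n hn Z hZ hZk => ?_⟩
  set R := cube 0 n \ cover Z with hR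
  have hRcard : (R.card : ℝ) = (n : ℝ) ^ d - vol Z := by
    rw [hR, Finset.card_sdiff_of_subset hZ.cover_subset, card_cube, hZ.card_cover,
      Nat.cast_sub hZ.vol_le]
    push_cast; rfl
  have hRn : (R.card : ℝ) ≤ (n : ℝ) ^ d := by
    rw [hRcard]; have : (0 : ℝ) ≤ vol Z := Nat.cast_nonneg _; linarith
  set T := fun v => tiles v p R with hT
  set S : Finset ((_ : Site d) × Finset (Site d)) := (cube (0 : Site d) p).sigma
    fun v => (T v).powerset.filter fun Y => (Y.card : ℝ) * (p : ℝ) ^ d ≤ δ * (n : ℝ) ^ d with hS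
  set V : ((_ : Site d) × Finset (Site d)) → Set (Config A d) :=
    fun s => {x | ∀ c ∈ T s.1 \ s.2, wordAt x p c ∈ G} with hV
  have hTcard : ∀ v, ((T v).card : ℝ) * (p : ℝ) ^ d ≤ R.card := fun v => by
    exact_mod_cast card_tiles_mul_le v p R
  have hp0 : (0 : ℝ) < (p : ℝ) ^ d := by positivity
  have hcov : good G δ n ⊆ ⋃ s ∈ S, V s := by
    intro x hx
    obtain ⟨v, hv, hvc⟩ := exists_offset hp R (g := fun i => if i ∈ badSites G n x then 1 else 0)
      fun i => by split_ifs <;> norm_num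
    rw [Finset.sum_boole, Finset.sum_boole] at hvc
    replace hvc := (hvc.trans (Nat.cast_le.2 (Finset.card_le_card
      fun i hi => (Finset.mem_filter.1 hi).2))).trans hx
    refine Set.mem_iUnion₂.2 ⟨⟨v, (T v).filter (· ∈ badSites G n x)⟩, ?_, ?_⟩
    · rw [hS, Finset.mem_sigma, Finset.mem_filter, Finset.mem_powerset]
      exact ⟨hv, Finset.filter_subset _ _, hvc⟩
    · intro c hc
      rw [Finset.mem_sdiff, Finset.mem_filter] at hc
      by_contra hcG
      have hcR : c ∈ cube 0 n := (Finset.mem_sdiff.1 (Finset.mem_filter.1 hc.1).1).1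
      exact hc.2 ⟨hc.1, Finset.mem_filter.2 ⟨hcR, hcG⟩⟩
  have hVbound : ∀ s ∈ S, (pat (V s) R : ℝ) ≤
      (A : ℝ) ^ (h * R.card + 3 * δ * (n : ℝ) ^ d) := by
    rintro ⟨v, Y⟩ hs
    rw [hS, Finset.mem_sigma, Finset.mem_filter, Finset.mem_powerset] at hs
    obtain ⟨hv, hYT, hY⟩ := hs
    simp only at hv hYT hY
    set U := R \ (T v).biUnion fun c => cube c p with hU
    have hUc : (U.card : ℝ) ≤ δ * (n : ℝ) ^ d :=
      hunc n (by omega) Z hZ (fun b hb => (le_max_left _ _).trans (hZk b hb)) v hv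
    have hRsub : R ⊆ ((T v \ Y).biUnion fun c => cube c p) ∪
        ((Y.biUnion fun c => cube c p) ∪ U) := by
      intro i hi
      by_cases hiT : i ∈ (T v).biUnion fun c => cube c p
      · obtain ⟨c, hc, hic⟩ := Finset.mem_biUnion.1 hiT
        by_cases hcY : c ∈ Y
        · exact Finset.mem_union_right _ (Finset.mem_union_left _
            (Finset.mem_biUnion.2 ⟨c, hcY, hic⟩))
        · exact Finset.mem_union_left _
            (Finset.mem_biUnion.2 ⟨c, Finset.mem_sdiff.2 ⟨hc, hcY⟩, hic⟩)
      · exact Finset.mem_union_right _ (Finset.mem_union_right _ (Finset.mem_sdiff.2 ⟨hi, hiT⟩))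
    have h1 : pat (V ⟨v, Y⟩) ((T v \ Y).biUnion fun c => cube c p) ≤ G.card ^ (T v \ Y).card := by
      refine (pat_biUnion_le_prod _ _ _).trans (Finset.prod_le_pow_card _ _ _ fun c hc => ?_)
      rw [pat_cube, ← Set.ncard_coe_finset]
      refine Set.ncard_le_ncard ?_ (Set.toFinite _)
      rintro _ ⟨x, hx, rfl⟩
      exact hx c hc
    have h2 : pat (V ⟨v, Y⟩) (Y.biUnion fun c => cube c p) ≤ A ^ (Y.card * p ^ d) := by
      refine (pat_le _ _).trans (Nat.pow_le_pow_right (by omega) ?_)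
      refine Finset.card_biUnion_le.trans ?_
      simp [card_cube]
    have h3 : pat (V ⟨v, Y⟩) U ≤ A ^ U.card := pat_le _ _
    have h4 : pat (V ⟨v, Y⟩) R ≤ G.card ^ (T v \ Y).card * (A ^ (Y.card * p ^ d) * A ^ U.card) :=
      (pat_subset _ hRsub).trans ((pat_union_le _ _ _).trans (Nat.mul_le_mul h1
        ((pat_union_le _ _ _).trans (Nat.mul_le_mul h2 h3))))
    have h5 : ((G.card : ℝ)) ^ (T v \ Y).card ≤ (A : ℝ) ^ (h * R.card + δ * (n : ℝ) ^ d) := by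
      calc ((G.card : ℝ)) ^ (T v \ Y).card
          ≤ ((A : ℝ) ^ ((p : ℝ) ^ d * (h + δ))) ^ (T v \ Y).card := by gcongr
        _ = (A : ℝ) ^ (((p : ℝ) ^ d * (h + δ)) * (T v \ Y).card) := by
            rw [Real.rpow_mul_natCast hA0.le]
        _ ≤ _ := by
            refine Real.rpow_le_rpow_of_exponent_le hA1.le ?_
            have e1 : ((T v \ Y).card : ℝ) ≤ (T v).card := by
              exact_mod_cast Finset.card_le_card Finset.sdiff_subset
            have e2 := hTcard v
            have e3 : ((T v \ Y).card : ℝ) * (p : ℝ) ^ d ≤ R.card := by nlinarith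
            nlinarith
    calc (pat (V ⟨v, Y⟩) R : ℝ)
        ≤ (G.card : ℝ) ^ (T v \ Y).card * ((A : ℝ) ^ (Y.card * p ^ d) * (A : ℝ) ^ U.card) := by
          exact_mod_cast h4
      _ ≤ (A : ℝ) ^ (h * R.card + δ * (n : ℝ) ^ d) *
          ((A : ℝ) ^ (δ * (n : ℝ) ^ d) * (A : ℝ) ^ (δ * (n : ℝ) ^ d)) := by
          rw [← Real.rpow_natCast (A : ℝ) (Y.card * p ^ d), ← Real.rpow_natCast (A : ℝ) U.card]
          gcongr
          · exact hA1.le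
          · push_cast; exact hY
          · exact hA1.le
      _ = _ := by
          rw [← Real.rpow_add hA0, ← Real.rpow_add hA0]
          congr 1; ring
  have hScard : (S.card : ℝ) ≤ (A : ℝ) ^ (2 * δ * (n : ℝ) ^ d) := by
    have hn1 : (p : ℝ) ^ d ≤ δ * (n : ℝ) ^ d := by
      have h1 : (p : ℝ) ^ d / δ ≤ n := hk₁.trans (by exact_mod_cast (le_max_right _ _).trans hn)
      have h2 : (n : ℝ) ≤ (n : ℝ) ^ d := by exact_mod_cast Nat.le_self_pow (by omega) n
      rw [div_le_iff₀ hδ] at h1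
      nlinarith
    have hTn : ∀ v, ((T v).card : ℝ) ≤ δ * (n : ℝ) ^ d := fun v => by
      have e1 := hTcard v
      have e2 : (0 : ℝ) ≤ (T v).card := Nat.cast_nonneg _
      nlinarith
    have h1 : ∀ v, (((T v).powerset.filter fun Y =>
        (Y.card : ℝ) * (p : ℝ) ^ d ≤ δ * (n : ℝ) ^ d).card : ℝ) ≤ (A : ℝ) ^ (δ * (n : ℝ) ^ d) := by
      intro v
      calc _ ≤ (((T v).powerset.card : ℕ) : ℝ) := by
            exact_mod_cast Finset.card_le_card (Finset.filter_subset _ _)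
        _ = (2 : ℝ) ^ ((T v).card : ℝ) := by
            rw [Finset.card_powerset, Real.rpow_natCast]; push_cast; rfl
        _ ≤ (A : ℝ) ^ ((T v).card : ℝ) := by
            gcongr; exact_mod_cast hA
        _ ≤ _ := Real.rpow_le_rpow_of_exponent_le hA1.le (hTn v)
    calc (S.card : ℝ) ≤ ∑ v ∈ cube (0 : Site d) p, (A : ℝ) ^ (δ * (n : ℝ) ^ d) := by
          rw [hS, Finset.card_sigma]
          push_cast
          exact Finset.sum_le_sum fun v _ => h1 v
      _ = (p : ℝ) ^ d * (A : ℝ) ^ (δ * (n : ℝ) ^ d) := by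
          rw [Finset.sum_const, card_cube, nsmul_eq_mul]; push_cast; rfl
      _ ≤ (A : ℝ) ^ (δ * (n : ℝ) ^ d) * (A : ℝ) ^ (δ * (n : ℝ) ^ d) := by
          gcongr
          calc (p : ℝ) ^ d ≤ (A : ℝ) ^ ((p ^ d : ℕ) : ℝ) := by
                rw [Real.rpow_natCast]
                exact_mod_cast (Nat.lt_pow_self (by omega : 1 < A)).le
            _ ≤ _ := Real.rpow_le_rpow_of_exponent_le hA1.le (by push_cast; exact hn1)
      _ = _ := by rw [← Real.rpow_add hA0]; congr 1; ring
  have hfin := pat_biUnion_le S hcov R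
  calc (pat (good G δ n) R : ℝ) ≤ ∑ s ∈ S, (pat (V s) R : ℝ) := by exact_mod_cast hfin
    _ ≤ ∑ s ∈ S, (A : ℝ) ^ (h * R.card + 3 * δ * (n : ℝ) ^ d) := Finset.sum_le_sum hVbound
    _ ≤ (A : ℝ) ^ (2 * δ * (n : ℝ) ^ d) * (A : ℝ) ^ (h * R.card + 3 * δ * (n : ℝ) ^ d) := by
        rw [Finset.sum_const, nsmul_eq_mul]
        gcongr
    _ = _ := by rw [← Real.rpow_add hA0, hRcard]; congr 1; ring

theorem shift_shift (r s : Site d) (x : Config A d) : shift r (shift s x) = shift (r + s) x :=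
  funext fun i => congrArg x (add_assoc i r s)

theorem shift_zero (x : Config A d) : shift 0 x = x := funext fun i => congrArg x (add_zero i)

theorem wordAt_shift (r c : Site d) (k : ℕ) (x : Config A d) :
    wordAt (shift r x) k c = wordAt x k (c + r) :=
  funext fun i => congrArg x (funext fun j => by simp only [Pi.add_apply]; omega)

theorem measurable_shift (r : Site d) : Measurable (shift r : Config A d → Config A d) :=
  measurable_pi_lambda _ fun i => measurable_pi_apply (i + r)

theorem measurable_wordAt (k : ℕ) (c : Site d) :
    Measurable fun x : Config A d => wordAt x k c :=
  measurable_pi_lambda _ fun _ => measurable_pi_apply _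

theorem measurableSet_wordAt_mem {k : ℕ} (c : Site d) (S : Set (Word A d k)) :
    MeasurableSet {x : Config A d | wordAt x k c ∈ S} :=
  measurable_wordAt k c (Set.toFinite S).measurableSet

theorem Stationary.measurePreserving {μ : Measure (Config A d)} (h : Stationary μ) (r : Site d) :
    MeasurePreserving (shift r) μ μ := ⟨measurable_shift r, h r⟩

/-- An almost surely invariant event is trivial. -/
theorem ErgodicShift.zero_one {μ : Measure (Config A d)} (h : ErgodicShift μ)
    {E : Set (Config A d)} (hE : MeasurableSet E)
    (hinv : ∀ r, shift r ⁻¹' E =ᵐ[μ] E) : μ E = 0 ∨ μ E = 1 := by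
  set E' : Set (Config A d) := {x | ∃ r₀ : Site d, ∀ r ≥ r₀, shift r x ∈ E} with hE'
  have hm : MeasurableSet E' := by
    have : E' = ⋃ r₀ : Site d, ⋂ r : Site d, ⋂ _ : r ≥ r₀, shift r ⁻¹' E := by
      ext x; simp [hE']
    rw [this]
    exact MeasurableSet.iUnion fun r₀ => MeasurableSet.iInter fun r =>
      MeasurableSet.iInter fun _ => measurable_shift r hE
  have hinv' : ∀ r, shift r ⁻¹' E' = E' := fun s => by
    ext x
    simp only [hE', Set.mem_preimage, Set.mem_ofPred_eq, shift_shift]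
    constructor
    · rintro ⟨r₀, hr₀⟩
      refine ⟨r₀ + s, fun r hr => ?_⟩
      have := hr₀ (r - s) (le_tsub_of_add_le_right hr)
      rwa [tsub_add_cancel_of_le (le_trans le_add_self hr)] at this
    · rintro ⟨r₀, hr₀⟩
      exact ⟨r₀, fun r hr => hr₀ _ (le_trans hr le_self_add)⟩
  have hae : E' =ᵐ[μ] E := by
    have := ae_all_iff.2 fun r : Site d => hinv r
    filter_upwards [this] with x hx
    refine propext ⟨?_, fun hxE => ⟨0, fun r _ => ?_⟩⟩
    · rintro ⟨r₀, hr₀⟩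
      exact (hx r₀).mp (hr₀ r₀ le_rfl)
    · exact (hx r).mpr hxE
  rw [← measure_congr hae]
  exact h.2 E' hm hinv'

theorem ErgodicShift.zero_one_of_subset {μ : Measure (Config A d)} [IsProbabilityMeasure μ]
    (h : ErgodicShift μ) {E : Set (Config A d)} (hE : MeasurableSet E)
    (hinv : ∀ r, shift r ⁻¹' E ⊆ E) : μ E = 0 ∨ μ E = 1 :=
  h.zero_one hE fun r => ae_eq_of_subset_of_measure_ge (hinv r)
    ((h.1.measurePreserving r).measure_preimage hE.nullMeasurableSet).ge
    (measurable_shift r hE).nullMeasurableSet (measure_ne_top _ _)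

theorem norm_sum_sub_le_of_subset {H ι : Type*} [NormedAddCommGroup H] [DecidableEq ι]
    {s t : Finset ι} (h : t ⊆ s)
    (f : ι → H) {C : ℝ} (hC : ∀ i, ‖f i‖ ≤ C) :
    ‖∑ i ∈ s, f i - ∑ i ∈ t, f i‖ ≤ ((s.card : ℝ) - t.card) * C := by
  rw [← Finset.sum_sdiff h, add_sub_cancel_right]
  refine (norm_sum_le _ _).trans ((Finset.sum_le_sum fun i _ => hC i).trans ?_)
  rw [Finset.sum_const, nsmul_eq_mul, Finset.card_sdiff_of_subset h,
    Nat.cast_sub (Finset.card_le_card h)]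

section MeanErgodic

variable {H : Type*} [NormedAddCommGroup H] [InnerProductSpace ℝ H]

/-- The deviation of the ergodic average over `Λ_n` from the component along `e`. -/
noncomputable def ergDev (U : Site d → H →ₗᵢ[ℝ] H) (e : H) (n : ℕ) (f : H) : H :=
  ((n : ℝ) ^ d)⁻¹ • ∑ i ∈ cube (0 : Site d) n, U i f - inner ℝ e f • e

theorem ergDev_add (U : Site d → H →ₗᵢ[ℝ] H) (e : H) (n : ℕ) (f g : H) :
    ergDev U e n (f + g) = ergDev U e n f + ergDev U e n g := by
  simp only [ergDev, map_add, Finset.sum_add_distrib, smul_add, inner_add_right, add_smul]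
  abel

theorem ergDev_smul (U : Site d → H →ₗᵢ[ℝ] H) (e : H) (n : ℕ) (c : ℝ) (f : H) :
    ergDev U e n (c • f) = c • ergDev U e n f := by
  simp only [ergDev, map_smul, ← Finset.smul_sum, smul_sub, inner_smul_right, smul_smul,
    mul_comm]

theorem norm_ergDev_le (U : Site d → H →ₗᵢ[ℝ] H) {e : H} (he : ‖e‖ = 1) (n : ℕ) (f : H) :
    ‖ergDev U e n f‖ ≤ 2 * ‖f‖ := by
  have h1 : ‖((n : ℝ) ^ d)⁻¹ • ∑ i ∈ cube (0 : Site d) n, U i f‖ ≤ ‖f‖ := by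
    rw [norm_smul, norm_inv, norm_pow, Real.norm_natCast]
    have h : ‖∑ i ∈ cube (0 : Site d) n, U i f‖ ≤ (n : ℝ) ^ d * ‖f‖ := by
      refine (norm_sum_le _ _).trans ?_
      simp [card_cube]
    refine (mul_le_mul_of_nonneg_left h (by positivity)).trans ?_
    rw [← mul_assoc]
    exact mul_le_of_le_one_left (norm_nonneg _) inv_mul_le_one
  have h2 : ‖inner ℝ e f • e‖ ≤ ‖f‖ := by
    rw [norm_smul, he, mul_one]
    exact (norm_inner_le_norm e f).trans (by rw [he, one_mul])
  rw [ergDev]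
  linarith [norm_sub_le (((n : ℝ) ^ d)⁻¹ • ∑ i ∈ cube (0 : Site d) n, U i f) (inner ℝ e f • e)]

theorem tendsto_ergDev_coboundary (U : Site d → H →ₗᵢ[ℝ] H)
    (hU : ∀ r s f, U r (U s f) = U (r + s) f) {e : H} (hUe : ∀ r, U r e = e) (r : Site d)
    (g : H) : Tendsto (fun n => ergDev U e n (U r g - g)) atTop (𝓝 0) := by
  rw [Metric.tendsto_atTop]
  intro ε hε
  set R := ∑ j, r j with hR
  obtain ⟨k₀, hk₀, hk⟩ := exists_pow_sub_sub_le d R (ε := ε / (4 * (‖g‖ + 1))) (by positivity)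
  refine ⟨k₀, fun n hn => ?_⟩
  have hr : ∀ j, r j ≤ R := fun j => Finset.single_le_sum (f := r) (fun _ _ => Nat.zero_le _)
    (Finset.mem_univ j)
  have hn0 : (0 : ℝ) < (n : ℝ) ^ d := by
    have : 0 < n := by omega
    positivity
  have hinner : inner ℝ e (U r g - g) = 0 := by
    rw [inner_sub_right]
    nth_rewrite 1 [← hUe r]
    rw [LinearIsometry.inner_map_map, sub_self]
  have hsum : ∑ i ∈ cube (0 : Site d) n, U i (U r g - g) =
      (∑ i ∈ cube r n, U i g - ∑ i ∈ cube (fun _ => R) (n - 2 * R), U i g) -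
      (∑ i ∈ cube 0 n, U i g - ∑ i ∈ cube (fun _ => R) (n - 2 * R), U i g) := by
    have : ∑ i ∈ cube r n, U i g = ∑ i ∈ cube (0 : Site d) n, U (i + r) g := by
      refine (Finset.sum_bij (fun i _ => i + r) (fun i hi => mem_cube_add.2 hi)
        (fun i _ j _ hij => add_right_cancel hij) (fun i hi => ?_) fun i _ => rfl).symm
      have hri : r ≤ i := fun j => (mem_cube.1 hi j).1
      exact ⟨i - r, mem_cube_add.1 (by rwa [tsub_add_cancel_of_le hri]), tsub_add_cancel_of_le hri⟩
    rw [this]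
    simp only [map_sub, hU, Finset.sum_sub_distrib]
    abel
  have hs1 : cube (fun _ => R) (n - 2 * R) ⊆ cube r n := fun i hi => mem_cube.2 fun j => by
    have := mem_cube.1 hi j
    have := hr j
    constructor <;> omega
  have hs2 : cube (fun _ => R) (n - 2 * R) ⊆ cube (0 : Site d) n := fun i hi =>
    mem_cube_zero.2 fun j => by
      have := mem_cube.1 hi j
      omega
  have h1 := norm_sum_sub_le_of_subset hs1 (fun i => U i g) (C := ‖g‖)
    fun i => ((U i).norm_map g).le
  have h2 := norm_sum_sub_le_of_subset hs2 (fun i => U i g) (C := ‖g‖)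
    fun i => ((U i).norm_map g).le
  rw [card_cube, card_cube] at h1 h2
  push_cast at h1 h2
  have h3 := hk n hn
  have h4 : ‖∑ i ∈ cube (0 : Site d) n, U i (U r g - g)‖ ≤ ε / 2 * (n : ℝ) ^ d := by
    rw [hsum]
    refine (norm_sub_le _ _).trans ?_
    have h5 : ((n : ℝ) ^ d - ((n - 2 * R : ℕ) : ℝ) ^ d) * ‖g‖ ≤
        ε / (4 * (‖g‖ + 1)) * (n : ℝ) ^ d * ‖g‖ := by gcongr
    have h6 : ε / (4 * (‖g‖ + 1)) * (n : ℝ) ^ d * ‖g‖ ≤ ε / 4 * (n : ℝ) ^ d := by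
      have : ε / (4 * (‖g‖ + 1)) * ‖g‖ ≤ ε / 4 := by
        rw [div_mul_eq_mul_div, div_le_div_iff₀ (by positivity) (by norm_num)]
        nlinarith [norm_nonneg g]
      nlinarith
    linarith
  rw [dist_zero_right, ergDev, hinner, zero_smul, sub_zero, norm_smul, norm_inv,
    Real.norm_of_nonneg hn0.le, inv_mul_lt_iff₀ hn0]
  nlinarith

theorem tendsto_ergDev [CompleteSpace H] (U : Site d → H →ₗᵢ[ℝ] H)
    (hU : ∀ r s f, U r (U s f) = U (r + s) f) {e : H} (he : ‖e‖ = 1) (hUe : ∀ r, U r e = e)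
    (herg : ∀ f, (∀ r, U r f = f) → ∃ c : ℝ, f = c • e) (f : H) :
    Tendsto (fun n => ergDev U e n f) atTop (𝓝 0) := by
  have hee : inner ℝ e e = 1 := by rw [real_inner_self_eq_norm_sq, he, one_pow]
  let S : Submodule ℝ H :=
    { carrier := {f | Tendsto (fun n => ergDev U e n f) atTop (𝓝 0)}
      add_mem' := fun {f g} hf hg => by
        simpa only [Set.mem_ofPred_eq, ergDev_add, add_zero] using Tendsto.add hf hg
      zero_mem' := by simp [ergDev]
      smul_mem' := fun c f hf => by
        simpa only [Set.mem_ofPred_eq, ergDev_smul, smul_zero] using Tendsto.const_smul hf c }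
  have heS : e ∈ S := by
    refine tendsto_const_nhds.congr' ?_
    filter_upwards [eventually_ge_atTop 1] with n hn
    have hn0 : (n : ℝ) ^ d ≠ 0 := by positivity
    simp only [ergDev, hUe, hee, one_smul, Finset.sum_const, card_cube,
      ← Nat.cast_smul_eq_nsmul ℝ, smul_smul, Nat.cast_pow, inv_mul_cancel₀ hn0, sub_self]
  have htop : S.topologicalClosure = ⊤ := by
    rw [Submodule.topologicalClosure_eq_top_iff, Submodule.eq_bot_iff]
    intro g hg
    have h1 : ∀ r, U r g = g := fun r => by
      have h2 : inner ℝ (U r g - g) g = 0 :=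
        hg (U r g - g) (tendsto_ergDev_coboundary U hU hUe r g)
      rw [← sub_eq_zero, ← norm_eq_zero, ← sq_eq_zero_iff]
      rw [inner_sub_left, real_inner_self_eq_norm_sq] at h2
      rw [norm_sub_sq_real, (U r).norm_map]
      linarith
    obtain ⟨c, rfl⟩ := herg g h1
    have h3 : inner ℝ e (c • e) = 0 := hg e heS
    rw [inner_smul_right, hee, mul_one] at h3
    rw [h3, zero_smul]
  rw [Metric.tendsto_atTop]
  intro ε hε
  have hf : f ∈ S.topologicalClosure := htop ▸ Submodule.mem_top
  obtain ⟨g, hg, hfg⟩ := Metric.mem_closure_iff.1 hf (ε / 4) (by positivity)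
  obtain ⟨N, hN⟩ := Metric.tendsto_atTop.1 (show Tendsto (fun n => ergDev U e n g) _ _ from hg)
    (ε / 2) (by positivity)
  refine ⟨N, fun n hn => ?_⟩
  have h1 := hN n hn
  rw [dist_zero_right] at h1 ⊢
  have h2 := norm_ergDev_le U he n (f - g)
  have h3 : ergDev U e n f = ergDev U e n (f - g) + ergDev U e n g := by
    rw [← ergDev_add, sub_add_cancel]
  rw [h3]
  rw [dist_eq_norm] at hfg
  linarith [norm_add_le (ergDev U e n (f - g)) (ergDev U e n g)]

end MeanErgodic

theorem ErgodicShift.exists_ae_eq_const {μ : Measure (Config A d)} [IsProbabilityMeasure μ]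
    (h : ErgodicShift μ) {g : Config A d → ℝ} (hg : AEStronglyMeasurable g μ)
    (hinv : ∀ r, g ∘ shift r =ᵐ[μ] g) : ∃ c, g =ᵐ[μ] Function.const _ c := by
  obtain ⟨g', hg'm, hg'⟩ := hg
  have hinv' : ∀ r, g' ∘ shift r =ᵐ[μ] g' := fun r => by
    filter_upwards [hinv r, hg', (h.1.measurePreserving r).quasiMeasurePreserving.ae hg']
      with x h3 h4 h5
    rw [Function.comp_apply, ← h5, ← h4, ← h3, Function.comp_apply]
  obtain ⟨c, hc⟩ := exists_eventuallyEq_const_of_forall_separating (f := g') (l := ae μ)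
    MeasurableSet fun V hV => by
      have hE : MeasurableSet (g' ⁻¹' V) := hg'm.measurable hV
      rcases h.zero_one hE fun r => by
        filter_upwards [hinv' r] with x hx
        refine propext ?_
        change g' (shift r x) ∈ V ↔ g' x ∈ V
        rw [← hx, Function.comp_apply] with h0 | h0
      · exact Or.inr (measure_eq_zero_iff_ae_notMem.1 h0)
      · exact Or.inl ((prob_compl_eq_zero_iff hE).2 h0)
  exact ⟨c, hg'.trans hc⟩

/-- The mean ergodic theorem, in measure. -/
theorem ErgodicShift.tendsto_average {μ : Measure (Config A d)} [IsProbabilityMeasure μ]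
    (h : ErgodicShift μ) {f : Config A d → ℝ} (hf : MemLp f 2 μ) {ε : ℝ} (hε : 0 < ε) :
    Tendsto (fun n : ℕ => μ {x | ε ≤ |((n : ℝ) ^ d)⁻¹ * ∑ i ∈ cube (0 : Site d) n, f (shift i x)
      - ∫ y, f y ∂μ|}) atTop (𝓝 0) := by
  obtain ⟨U, hUcoe⟩ : ∃ U : Site d → Lp ℝ 2 μ →ₗᵢ[ℝ] Lp ℝ 2 μ,
      ∀ r (g : Lp ℝ 2 μ), U r g =ᵐ[μ] g ∘ shift r :=
    ⟨fun r => Lp.compMeasurePreservingₗᵢ ℝ (shift r) (h.1.measurePreserving r), fun r g =>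
      Lp.coeFn_compMeasurePreserving g (h.1.measurePreserving r)⟩
  set e : Lp ℝ 2 μ := Lp.const 2 μ (1 : ℝ) with he
  have hecoe : e =ᵐ[μ] Function.const _ (1 : ℝ) := Lp.coeFn_const 2 μ (1 : ℝ)
  have hUU : ∀ r s g, U r (U s g) = U (r + s) g := fun r s g => by
    refine Lp.ext ?_
    filter_upwards [hUcoe r (U s g), hUcoe (r + s) g,
      (h.1.measurePreserving r).quasiMeasurePreserving.ae (hUcoe s g)] with x h1 h2 h3
    rw [h1, h2, Function.comp_apply, h3, Function.comp_apply, Function.comp_apply, shift_shift,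
      add_comm]
  have hUe : ∀ r, U r e = e := fun r => by
    refine Lp.ext ?_
    filter_upwards [hUcoe r e, hecoe, (h.1.measurePreserving r).quasiMeasurePreserving.ae hecoe]
      with x h1 h2 h3
    rw [h1, h2, Function.comp_apply, h3]
    rfl
  have henorm : ‖e‖ = 1 := by
    rw [he, Lp.norm_const' _ _ _ (by norm_num) (by norm_num)]
    simp
  have herg : ∀ g, (∀ r, U r g = g) → ∃ c : ℝ, g = c • e := fun g hg => by
    obtain ⟨c, hc⟩ := h.exists_ae_eq_const (Lp.aestronglyMeasurable g) fun r => by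
      have h2 := hUcoe r g
      rw [hg r] at h2
      exact h2.symm
    refine ⟨c, Lp.ext ?_⟩
    filter_upwards [hc, Lp.coeFn_smul c e, hecoe] with x h2 h3 h4
    rw [h2, h3, Pi.smul_apply, h4]
    simp
  set g := hf.toLp f with hg
  have hgcoe : g =ᵐ[μ] f := hf.coeFn_toLp
  have hinner : inner ℝ e g = ∫ y, f y ∂μ := by
    rw [L2.inner_def]
    refine integral_congr_ae ?_
    filter_upwards [hecoe, hgcoe] with x h1 h2
    rw [h1, h2]
    simp
  have hdev : ∀ n, ⇑(ergDev U e n g) =ᵐ[μ] fun x =>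
      ((n : ℝ) ^ d)⁻¹ * ∑ i ∈ cube (0 : Site d) n, f (shift i x) - ∫ y, f y ∂μ := fun n => by
    have h1 : ∀ᵐ x ∂μ, ∀ r : Site d, U r g x = f (shift r x) := ae_all_iff.2 fun r => by
      filter_upwards [hUcoe r g, (h.1.measurePreserving r).quasiMeasurePreserving.ae hgcoe]
        with x h2 h3
      rw [h2, Function.comp_apply, h3]
    filter_upwards [h1, hecoe, Lp.coeFn_sub (((n : ℝ) ^ d)⁻¹ • ∑ i ∈ cube (0 : Site d) n, U i g)
      (inner ℝ e g • e), Lp.coeFn_smul (((n : ℝ) ^ d)⁻¹) (∑ i ∈ cube (0 : Site d) n, U i g),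
      Lp.coeFn_smul (inner ℝ e g) e, Lp.coeFn_fun_finsetSum (cube (0 : Site d) n) fun i => U i g]
      with x h2 h3 h4 h5 h6 h7
    rw [ergDev, h4, Pi.sub_apply, h5, h6, Pi.smul_apply, Pi.smul_apply, h7, h3, hinner]
    simp [h2]
  have ht : Tendsto (fun n => ergDev U e n g) atTop (𝓝 0) :=
    tendsto_ergDev U hUU henorm hUe herg g
  have h2 := tendstoInMeasure_of_tendsto_Lp ht
  have h5 := tendstoInMeasure_iff_norm.1 h2 ε hε
  refine h5.congr fun n => measure_congr (eventuallyEq_set.2 ?_)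
  filter_upwards [hdev n, Lp.coeFn_zero ℝ 2 μ] with x h3 h4
  rw [h3, h4, Pi.zero_apply, sub_zero, Real.norm_eq_abs]

/-- The number of sites `i ∈ F` with `σ_i x ∈ B`. -/
noncomputable def visits (B : Set (Config A d)) (F : Finset (Site d)) (x : Config A d) : ℝ :=
  ∑ i ∈ F, B.indicator (fun _ => (1 : ℝ)) (shift i x)

theorem visits_eq_card (B : Set (Config A d)) (F : Finset (Site d)) (x : Config A d)
    [DecidablePred fun i => shift i x ∈ B] :
    visits B F x = (F.filter fun i => shift i x ∈ B).card := by
  classical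
  simp [visits, Set.indicator_apply]

theorem visits_mono (B : Set (Config A d)) {F F' : Finset (Site d)} (h : F ⊆ F')
    (x : Config A d) : visits B F x ≤ visits B F' x :=
  Finset.sum_le_sum_of_subset_of_nonneg h fun _ _ _ =>
    Set.indicator_nonneg (fun _ _ => zero_le_one) _

theorem visits_shift (B : Set (Config A d)) (r : Site d) (n : ℕ) (x : Config A d) :
    visits B (cube 0 n) (shift r x) = visits B (cube r n) x := by
  refine Finset.sum_bij (fun i _ => i + r) (fun i hi => mem_cube_add.2 hi)
    (fun i _ j _ hij => add_right_cancel hij) (fun i hi => ?_)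
    fun i _ => by rw [shift_shift]
  have hri : r ≤ i := fun j => (mem_cube.1 hi j).1
  exact ⟨i - r, mem_cube_add.1 (by rwa [tsub_add_cancel_of_le hri]), tsub_add_cancel_of_le hri⟩

theorem measurable_visits {B : Set (Config A d)} (hB : MeasurableSet B) (F : Finset (Site d)) :
    Measurable (visits B F) :=
  Finset.measurable_fun_sum _ fun i _ => (measurable_const.indicator hB).comp (measurable_shift i)

theorem integrable_indicator_shift {μ : Measure (Config A d)} [IsProbabilityMeasure μ]
    (h : Stationary μ) {B : Set (Config A d)} (hB : MeasurableSet B) (i : Site d) :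
    Integrable (fun x => B.indicator (fun _ => (1 : ℝ)) (shift i x)) μ :=
  (h.measurePreserving i).integrable_comp_of_integrable ((integrable_const 1).indicator hB)

theorem integrable_visits {μ : Measure (Config A d)} [IsProbabilityMeasure μ]
    (h : Stationary μ) {B : Set (Config A d)} (hB : MeasurableSet B) (F : Finset (Site d)) :
    Integrable (visits B F) μ :=
  integrable_finsetSum _ fun i _ => integrable_indicator_shift h hB i

theorem integral_visits {μ : Measure (Config A d)} [IsProbabilityMeasure μ]
    (h : Stationary μ) {B : Set (Config A d)} (hB : MeasurableSet B) (F : Finset (Site d)) :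
    ∫ x, visits B F x ∂μ = F.card * μ.real B := by
  simp only [visits]
  rw [integral_finsetSum _ fun i _ => integrable_indicator_shift h hB i]
  have : ∀ i : Site d, ∫ x, B.indicator (fun _ => (1 : ℝ)) (shift i x) ∂μ = μ.real B := fun i => by
    rw [← integral_map (measurable_shift i).aemeasurable
      (f := B.indicator fun _ => (1 : ℝ)) (measurable_const.indicator hB).aestronglyMeasurable,
      h i, integral_indicator_const _ hB, smul_eq_mul, mul_one]
  simp [this]

/-- Configurations with a frequency of visits to `B` above `c` in some `Λ_n`, `1 ≤ n ≤ K`. -/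
def overVisit (B : Set (Config A d)) (c : ℝ) (K : ℕ) : Set (Config A d) :=
  {x | ∃ n : ℕ, 1 ≤ n ∧ n ≤ K ∧ c * (n : ℝ) ^ d < visits B (cube 0 n) x}

theorem measurableSet_lt_visits {B : Set (Config A d)} (hB : MeasurableSet B) (c : ℝ)
    (F : Finset (Site d)) : MeasurableSet {x | c < visits B F x} :=
  measurableSet_lt measurable_const (measurable_visits hB F)

theorem measurableSet_overVisit {B : Set (Config A d)} (hB : MeasurableSet B) (c : ℝ) (K : ℕ) :
    MeasurableSet (overVisit B c K) := by
  have : overVisit B c K = ⋃ n : ℕ, ⋃ _ : 1 ≤ n, ⋃ _ : n ≤ K,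
      {x | c * (n : ℝ) ^ d < visits B (cube 0 n) x} := by
    ext x; simp [overVisit, and_left_comm]
  rw [this]
  exact MeasurableSet.iUnion fun n => MeasurableSet.iUnion fun _ => MeasurableSet.iUnion fun _ =>
    measurableSet_lt_visits hB _ _

/-- Counting form of the maximal inequality. -/
theorem visits_overVisit_le (B : Set (Config A d)) {c : ℝ} (hc : 0 < c) (K N : ℕ)
    (x : Config A d) :
    c * visits (overVisit B c K) (cube 0 N) x ≤ 3 ^ d * visits B (cube 0 (N + K)) x := by
  classical
  rw [visits_eq_card]
  set R := (cube (0 : Site d) N).filter fun i => shift i x ∈ overVisit B c K with hR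
  have hex : ∀ r ∈ R, ∃ n : ℕ, 1 ≤ n ∧ n ≤ K ∧ c * (n : ℝ) ^ d < visits B (cube r n) x :=
    fun r hr => by
    simpa only [overVisit, Set.mem_ofPred_eq, visits_shift] using (Finset.mem_filter.1 hr).2
  choose! n hn1 hnK hn using hex
  obtain ⟨u, huR, hdisj, hcard⟩ := exists_disjoint_cubes R n hn1
  have h1 : (R.card : ℝ) ≤ 3 ^ d * ∑ r ∈ u, (n r : ℝ) ^ d := by exact_mod_cast hcard
  have h2 : c * ∑ r ∈ u, (n r : ℝ) ^ d ≤ ∑ r ∈ u, visits B (cube r (n r)) x := by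
    rw [Finset.mul_sum]
    exact Finset.sum_le_sum fun r hr => (hn r (huR hr)).le
  have h3 : ∑ r ∈ u, visits B (cube r (n r)) x ≤ visits B (cube 0 (N + K)) x := by
    have : ∑ r ∈ u, visits B (cube r (n r)) x = visits B (u.biUnion fun r => cube r (n r)) x := by
      simp only [visits]
      rw [Finset.sum_biUnion hdisj]
    rw [this]
    refine visits_mono _ (Finset.biUnion_subset.2 fun r hr i hi => mem_cube_zero.2 fun j => ?_) x
    have e1 := mem_cube.1 hi j
    have e2 := mem_cube_zero.1 (Finset.mem_filter.1 (huR hr)).1 j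
    have e3 := hnK r (huR hr)
    omega
  have h4 : (0 : ℝ) < 3 ^ d := by positivity
  nlinarith

/-- The maximal inequality. -/
theorem Stationary.measure_overVisit_le {μ : Measure (Config A d)} [IsProbabilityMeasure μ]
    (h : Stationary μ) {B : Set (Config A d)} (hB : MeasurableSet B) {c : ℝ} (hc : 0 < c) (K : ℕ) :
    c * μ.real (overVisit B c K) ≤ 3 ^ d * μ.real B := by
  have hE := measurableSet_overVisit hB c K
  have h1 : ∀ N : ℕ, c * ((N : ℝ) ^ d * μ.real (overVisit B c K)) ≤
      3 ^ d * (((N : ℝ) + K) ^ d * μ.real B) := fun N => by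
    have := integral_mono ((integrable_visits h hE (cube 0 N)).const_mul c)
      ((integrable_visits h hB (cube 0 (N + K))).const_mul (3 ^ d))
      (visits_overVisit_le B hc K N)
    rw [integral_const_mul, integral_const_mul, integral_visits h hE, integral_visits h hB,
      card_cube, card_cube] at this
    exact_mod_cast this
  have h2 : Tendsto (fun N : ℕ => (1 + (K : ℝ) / N) ^ d * (3 ^ d * μ.real B)) atTop
      (𝓝 ((1 + 0) ^ d * (3 ^ d * μ.real B))) :=
    ((tendsto_const_nhds.add (tendsto_const_div_atTop_nhds_zero_nat _)).pow d).mul_const _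
  rw [add_zero, one_pow, one_mul] at h2
  refine ge_of_tendsto h2 ?_
  filter_upwards [eventually_ge_atTop 1] with N hN
  have hN0 : (0 : ℝ) < N := by exact_mod_cast hN
  have e : ((N : ℝ) + K) ^ d = (N : ℝ) ^ d * (1 + (K : ℝ) / N) ^ d := by
    rw [← mul_pow]; congr 1; field_simp
  have h3 := h1 N
  rw [e] at h3
  have h4 : (0 : ℝ) < (N : ℝ) ^ d := by positivity
  refine le_of_mul_le_mul_left ?_ h4
  linarith

/-- If `B` has small probability then almost surely the frequency of visits to `B` in `Λ_n` is
eventually small. -/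
theorem ErgodicShift.ae_eventually_visits_le {μ : Measure (Config A d)} [IsProbabilityMeasure μ]
    (h : ErgodicShift μ) {B : Set (Config A d)} (hB : MeasurableSet B) {c : ℝ}
    (hc : 3 ^ d * μ.real B < c) :
    ∀ᵐ x ∂μ, ∀ᶠ n : ℕ in atTop, visits B (cube 0 n) x ≤ c * (n : ℝ) ^ d := by
  obtain ⟨c₀, hc₀, hc₀c⟩ := exists_between hc
  have hc₀pos : 0 < c₀ := lt_of_le_of_lt (by positivity) hc₀
  set E : Set (Config A d) :=
    {x | ∃ q : ℚ, c₀ < q ∧ ∀ N : ℕ, ∃ n ≥ N, (q : ℝ) * (n : ℝ) ^ d < visits B (cube 0 n) x} with hE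
  have hEm : MeasurableSet E := by
    have : E = ⋃ q : ℚ, ⋃ _ : c₀ < q, ⋂ N : ℕ, ⋃ n : ℕ, ⋃ _ : n ≥ N,
        {x | (q : ℝ) * (n : ℝ) ^ d < visits B (cube 0 n) x} := by
      ext x; simp [hE]
    rw [this]
    exact MeasurableSet.iUnion fun q => MeasurableSet.iUnion fun _ => MeasurableSet.iInter fun N =>
      MeasurableSet.iUnion fun n => MeasurableSet.iUnion fun _ => measurableSet_lt_visits hB _ _
  have hinv : ∀ r, shift r ⁻¹' E ⊆ E := by
    rintro r x ⟨q, hq, hx⟩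
    obtain ⟨q', hq', hq'q⟩ := exists_rat_btwn hq
    have hq'0 : (0 : ℝ) < q' := hc₀pos.trans hq'
    set R := ∑ j, r j
    obtain ⟨k₀, -, hk⟩ := exists_pow_add_sub_le d R (ε := ((q : ℝ) - q') / q')
      (div_pos (sub_pos.2 hq'q) hq'0)
    refine ⟨q', hq', fun N => ?_⟩
    obtain ⟨n, hn, hnx⟩ := hx (max N k₀)
    refine ⟨n + 2 * R, by omega, ?_⟩
    have h1 := hk n (by omega)
    rw [visits_shift] at hnx
    have h2 : visits B (cube r n) x ≤ visits B (cube 0 (n + 2 * R)) x := by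
      refine visits_mono _ (fun i hi => mem_cube_zero.2 fun j => ?_) x
      have e1 := mem_cube.1 hi j
      have e2 : r j ≤ R := Finset.single_le_sum (f := r) (fun _ _ => Nat.zero_le _)
        (Finset.mem_univ j)
      omega
    refine lt_of_le_of_lt ?_ (hnx.trans_le h2)
    push_cast
    have h3 : (q' : ℝ) * (((q : ℝ) - q') / q' * (n : ℝ) ^ d) = ((q : ℝ) - q') * (n : ℝ) ^ d := by
      field_simp
    nlinarith
  have hsub : E ⊆ ⋃ K, overVisit B c₀ K := by
    rintro x ⟨q, hq, hx⟩
    obtain ⟨n, hn, hnx⟩ := hx 1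
    refine Set.mem_iUnion.2 ⟨n, n, hn, le_rfl, lt_of_le_of_lt ?_ hnx⟩
    exact mul_le_mul_of_nonneg_right hq.le (by positivity)
  have hmono : Monotone (overVisit B c₀) := fun K K' hK x ⟨n, h1, h2, h3⟩ =>
    ⟨n, h1, h2.trans hK, h3⟩
  have hbound : μ E ≤ ENNReal.ofReal (3 ^ d * μ.real B / c₀) := by
    refine (measure_mono hsub).trans ?_
    rw [hmono.measure_iUnion]
    refine iSup_le fun K => ?_
    rw [← ofReal_measureReal]
    refine ENNReal.ofReal_le_ofReal ?_
    rw [le_div_iff₀ hc₀pos, mul_comm]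
    exact h.1.measure_overVisit_le hB hc₀pos K
  have hE0 : μ E = 0 := by
    rcases h.zero_one_of_subset hEm hinv with h0 | h0
    · exact h0
    · rw [h0] at hbound
      have : (3 : ℝ) ^ d * μ.real B / c₀ < 1 := (div_lt_one hc₀pos).2 hc₀
      rw [← ENNReal.ofReal_lt_one] at this
      exact absurd hbound (not_le.2 this)
  filter_upwards [measure_eq_zero_iff_ae_notMem.1 hE0] with x hx
  obtain ⟨q, hq, hqc⟩ := exists_rat_btwn hc₀c
  have : ¬ ∀ N : ℕ, ∃ n ≥ N, (q : ℝ) * (n : ℝ) ^ d < visits B (cube 0 n) x :=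
      fun hcon => hx ⟨q, hq, hcon⟩
  push Not at this
  obtain ⟨N, hN⟩ := this
  filter_upwards [eventually_ge_atTop N] with n hn
  refine (hN n hn).trans ?_
  gcongr

theorem wordDist_nonneg (μ : Measure (Config A d)) (k : ℕ) (w : Word A d k) :
    0 ≤ wordDist μ k w := ENNReal.toReal_nonneg

theorem integral_wordAt {μ : Measure (Config A d)} [IsProbabilityMeasure μ] (k : ℕ)
    (g : Word A d k → ℝ) : ∫ x, g (wordAt x k 0) ∂μ = ∑ w, wordDist μ k w * g w := by
  have hm := measurable_wordAt (A := A) (d := d) k 0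
  have : IsProbabilityMeasure (μ.map fun x => wordAt x k 0) :=
    Measure.isProbabilityMeasure_map hm.aemeasurable
  rw [← integral_map (φ := fun x => wordAt x k 0) hm.aemeasurable
    (measurable_of_finite g).aestronglyMeasurable, integral_fintype Integrable.of_finite]
  refine Finset.sum_congr rfl fun w _ => ?_
  rw [smul_eq_mul, measureReal_def, Measure.map_apply hm (measurableSet_singleton w)]
  rfl

theorem sum_wordDist (μ : Measure (Config A d)) [IsProbabilityMeasure μ] (k : ℕ) :
    ∑ w, wordDist μ k w = 1 := by
  simpa using (integral_wordAt (μ := μ) k fun _ => 1).symm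

theorem wordDist_le_one (μ : Measure (Config A d)) [IsProbabilityMeasure μ] (k : ℕ)
    (w : Word A d k) : wordDist μ k w ≤ 1 :=
  (sum_wordDist μ k) ▸ Finset.single_le_sum (f := wordDist μ k)
    (fun w _ => wordDist_nonneg μ k w) (Finset.mem_univ w)

/-- The information content of the `k`-word of `x` at the origin. -/
noncomputable def info (μ : Measure (Config A d)) (k : ℕ) (x : Config A d) : ℝ :=
  -Real.logb A (wordDist μ k (wordAt x k 0))

theorem info_nonneg (hA : 2 ≤ A) (μ : Measure (Config A d)) [IsProbabilityMeasure μ] (k : ℕ)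
    (x : Config A d) : 0 ≤ info μ k x :=
  neg_nonneg.2 (Real.logb_nonpos (by exact_mod_cast hA) (wordDist_nonneg μ k _)
    (wordDist_le_one μ k _))

theorem integral_info (μ : Measure (Config A d)) [IsProbabilityMeasure μ] (k : ℕ) :
    ∫ x, info μ k x ∂μ = entH A (wordDist μ k) := by
  simp only [info, entH]
  rw [integral_wordAt (μ := μ) k fun w => -Real.logb A (wordDist μ k w), ← Finset.sum_neg_distrib]
  simp

theorem memLp_info (μ : Measure (Config A d)) [IsProbabilityMeasure μ] (k : ℕ) :
    MemLp (info μ k) 2 μ := by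
  obtain ⟨C, hC⟩ := (Set.toFinite (Set.range fun w => ‖-Real.logb A (wordDist μ k w)‖)).bddAbove
  exact MemLp.of_bound ((measurable_of_finite fun w => -Real.logb A (wordDist μ k w)).comp
    (measurable_wordAt k 0)).aestronglyMeasurable C
    (Eventually.of_forall fun x => hC ⟨wordAt x k 0, rfl⟩)

theorem HasEntropyRate.nonneg {μ : Measure (Config A d)} [IsProbabilityMeasure μ] (hA : 2 ≤ A)
    {h : ℝ} (hh : HasEntropyRate μ h) : 0 ≤ h :=
  ge_of_tendsto hh (Eventually.of_forall fun n => div_nonneg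
    (integral_info μ n ▸ integral_nonneg (info_nonneg hA μ n)) (by positivity))

theorem ae_wordDist_pos {μ : Measure (Config A d)} [IsProbabilityMeasure μ] (h : Stationary μ)
    (k : ℕ) : ∀ᵐ x ∂μ, ∀ c : Site d, 0 < wordDist μ k (wordAt x k c) := by
  have h0 : ∀ᵐ x ∂μ, 0 < wordDist μ k (wordAt x k 0) := by
    have : ∀ᵐ x ∂μ, ∀ w : Word A d k, wordDist μ k w = 0 → wordAt x k 0 ≠ w :=
      ae_all_iff.2 fun w => by
        by_cases hw : wordDist μ k w = 0
        · have : μ {x | wordAt x k 0 = w} = 0 :=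
            ((ENNReal.toReal_eq_zero_iff _).1 hw).resolve_right (measure_ne_top _ _)
          filter_upwards [measure_eq_zero_iff_ae_notMem.1 this] with x hx _ using hx
        · exact Eventually.of_forall fun x h => absurd h hw
    filter_upwards [this] with x hx
    exact lt_of_le_of_ne (wordDist_nonneg μ k _) fun h => hx _ h.symm rfl
  refine ae_all_iff.2 fun c => ?_
  filter_upwards [(h.measurePreserving c).quasiMeasurePreserving.ae h0] with x hx
  rwa [wordAt_shift, zero_add] at hx

/-- Kraft-type bound for patterns on disjoint cubes with small total information. -/
theorem pat_biUnion_le_of_info (hA : 2 ≤ A) (μ : Measure (Config A d)) [IsProbabilityMeasure μ]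
    (b : ℕ) (T : Finset (Site d)) (C : ℝ) [DecidableEq (Site d)] :
    (pat {x : Config A d | (∀ c, 0 < wordDist μ b (wordAt x b c)) ∧
      ∑ c ∈ T, info μ b (shift c x) ≤ C} (T.biUnion fun c => cube c b) : ℝ) ≤ (A : ℝ) ^ C := by
  classical
  have hA0 : (0 : ℝ) < A := by exact_mod_cast (by omega : 0 < A)
  have hA1 : (1 : ℝ) < A := by exact_mod_cast hA
  set V := {x : Config A d | (∀ c, 0 < wordDist μ b (wordAt x b c)) ∧
      ∑ c ∈ T, info μ b (shift c x) ≤ C} with hV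
  set S : Finset (T → Word A d b) :=
    Finset.univ.filter fun u => (A : ℝ) ^ (-C) ≤ ∏ c, wordDist μ b (u c) with hS
  have h1 : pat V (T.biUnion fun c => cube c b) ≤
      ((fun x => fun c : T => wordAt x b c.1) '' V).ncard := by
    refine ncard_image_le_of_determined (Set.toFinite _) fun y _ z _ hyz => ?_
    refine restrict_eq_iff.2 fun i hi => ?_
    obtain ⟨c, hc, hi⟩ := Finset.mem_biUnion.1 hi
    rw [mem_cube] at hi
    have := congrFun (congrFun hyz ⟨c, hc⟩) fun j => ⟨i j - c j, by have := hi j; omega⟩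
    have e : (fun j => c j + (i j - c j)) = i := funext fun j => by have := hi j; omega
    simpa only [wordAt, e] using this
  have h2 : ((fun x => fun c : T => wordAt x b c.1) '' V).ncard ≤ S.card := by
    rw [← Set.ncard_coe_finset]
    refine Set.ncard_le_ncard ?_ (Set.toFinite _)
    rintro _ ⟨x, hx, rfl⟩
    refine Finset.mem_coe.2 (Finset.mem_filter.2 ⟨Finset.mem_univ _, ?_⟩)
    rw [Finset.prod_coe_sort T fun c => wordDist μ b (wordAt x b c)]
    have e : ∀ c ∈ T, wordDist μ b (wordAt x b c) = (A : ℝ) ^ (-info μ b (shift c x)) :=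
      fun c _ => by
        rw [info, neg_neg, wordAt_shift, zero_add, Real.rpow_logb hA0 hA1.ne' (hx.1 c)]
    rw [Finset.prod_congr rfl e, ← Real.rpow_sum_of_pos hA0, Finset.sum_neg_distrib]
    exact Real.rpow_le_rpow_of_exponent_le hA1.le (neg_le_neg hx.2)
  have h3 : (S.card : ℝ) * (A : ℝ) ^ (-C) ≤ 1 := by
    calc (S.card : ℝ) * (A : ℝ) ^ (-C) = ∑ u ∈ S, (A : ℝ) ^ (-C) := by
          rw [Finset.sum_const, nsmul_eq_mul]
      _ ≤ ∑ u ∈ S, ∏ c, wordDist μ b (u c) :=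
          Finset.sum_le_sum fun u hu => (Finset.mem_filter.1 hu).2
      _ ≤ ∑ u : T → Word A d b, ∏ c, wordDist μ b (u c) :=
          Finset.sum_le_sum_of_subset_of_nonneg (Finset.filter_subset _ _)
            fun u _ _ => Finset.prod_nonneg fun c _ => wordDist_nonneg μ b _
      _ = ∏ _c : T, ∑ w, wordDist μ b w := by
          rw [Finset.prod_univ_sum, Fintype.piFinset_univ]
      _ = 1 := by simp [sum_wordDist]
  rw [Real.rpow_neg hA0.le, ← div_eq_mul_inv, div_le_one (Real.rpow_pos_of_pos hA0 _)] at h3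
  exact (Nat.cast_le.2 (h1.trans h2)).trans h3

/-- For large `p`, most of the mass is carried by at most `A ^ (p ^ d (h + δ))` words. -/
theorem ErgodicShift.exists_typical_words (hA : 2 ≤ A) (hd : 1 ≤ d) {μ : Measure (Config A d)}
    [IsProbabilityMeasure μ] (hμ : ErgodicShift μ) {h : ℝ} (hh : HasEntropyRate μ h) {ε δ : ℝ}
    (hε : 0 < ε) (hδ : 0 < δ) (p₀ : ℕ) : ∃ p ≥ p₀, ∃ G : Finset (Word A d p),
      μ.real {x | wordAt x p 0 ∉ G} ≤ ε ∧ (G.card : ℝ) ≤ (A : ℝ) ^ ((p : ℝ) ^ d * (h + δ)) := by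
  classical
  have hA0 : (0 : ℝ) < A := by exact_mod_cast (by omega : 0 < A)
  have hA1 : (1 : ℝ) < A := by exact_mod_cast hA
  obtain ⟨b, hb1, hb⟩ : ∃ b : ℕ, 1 ≤ b ∧ entH A (wordDist μ b) ≤ (b : ℝ) ^ d * (h + δ / 4) := by
    have := (hh.eventually_le_const (show h < h + δ / 4 by linarith)).and (eventually_ge_atTop 1)
    obtain ⟨b, hb, hb1⟩ := this.exists
    have : (0 : ℝ) < (b : ℝ) ^ d := by positivity
    exact ⟨b, hb1, by rwa [div_le_iff₀' this] at hb⟩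
  have hb0 : (0 : ℝ) < (b : ℝ) ^ d := by positivity
  have hlim := hμ.tendsto_average (memLp_info μ b) (ε := (b : ℝ) ^ d * (δ / 4)) (by positivity)
  rw [integral_info] at hlim
  obtain ⟨k₀, -, hunc⟩ := exists_card_uncovered_le (d := d) hb1 (ε := δ / 4) (by positivity)
  obtain ⟨k₁, hk₁⟩ := exists_nat_ge ((b : ℝ) ^ d / (δ / 4))
  obtain ⟨n, hn, hnk⟩ := ((hlim.eventually_lt_const (ENNReal.ofReal_pos.2 hε)).and
    (eventually_ge_atTop (max p₀ (max k₀ (max k₁ 1))))).exists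
  have hn0 : (0 : ℝ) < (n : ℝ) ^ d := by
    have : 0 < n := by omega
    positivity
  set R := cube (0 : Site d) n with hR
  set F : Set (Config A d) := {x | (∀ c, 0 < wordDist μ b (wordAt x b c)) ∧
    ∑ i ∈ R, info μ b (shift i x) ≤ (n : ℝ) ^ d * ((b : ℝ) ^ d * (h + δ / 2))} with hF
  refine ⟨n, by omega, (Set.toFinite ((fun x => wordAt x n 0) '' F)).toFinset, ?_, ?_⟩
  · have hsub : {x : Config A d | wordAt x n 0 ∉
        (Set.toFinite ((fun x => wordAt x n 0) '' F)).toFinset} ≤ᵐ[μ]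
        {x | (b : ℝ) ^ d * (δ / 4) ≤ |((n : ℝ) ^ d)⁻¹ * ∑ i ∈ cube (0 : Site d) n,
          info μ b (shift i x) - entH A (wordDist μ b)|} := by
      filter_upwards [ae_wordDist_pos hμ.1 b] with x hx hxF
      by_contra hcon
      have hcon' := lt_of_not_ge hcon
      refine hxF ((Set.Finite.mem_toFinset _).2 ⟨x, ⟨hx, ?_⟩, rfl⟩)
      have h1 := (abs_lt.1 hcon').2
      have h2 : ((n : ℝ) ^ d)⁻¹ * ∑ i ∈ cube (0 : Site d) n, info μ b (shift i x) ≤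
          (b : ℝ) ^ d * (h + δ / 2) := by linarith
      rwa [inv_mul_le_iff₀ hn0] at h2
    exact ENNReal.toReal_le_of_le_ofReal hε.le ((measure_mono_ae hsub).trans hn.le)
  · rw [← Set.ncard_eq_toFinset_card _ (Set.toFinite _), ← pat_cube]
    set V : Site d → Set (Config A d) := fun v => {x : Config A d |
      (∀ c, 0 < wordDist μ b (wordAt x b c)) ∧
      ∑ c ∈ tiles v b R, info μ b (shift c x) ≤ (n : ℝ) ^ d * (h + δ / 2)} with hV
    have hcov : F ⊆ ⋃ v ∈ cube (0 : Site d) b, V v := by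
      intro x hx
      obtain ⟨v, hv, hvx⟩ := exists_offset hb1 R fun i => info_nonneg hA μ b (shift i x)
      refine Set.mem_iUnion₂.2 ⟨v, hv, hx.1, ?_⟩
      have := hvx.trans hx.2
      refine le_of_mul_le_mul_right ?_ hb0
      linarith
    have hVb : ∀ v ∈ cube (0 : Site d) b,
        (pat (V v) R : ℝ) ≤ (A : ℝ) ^ ((n : ℝ) ^ d * (h + 3 * δ / 4)) := fun v hv => by
      have h1 := pat_biUnion_le_of_info hA μ b (tiles v b R) ((n : ℝ) ^ d * (h + δ / 2))
      set U := R \ (tiles v b R).biUnion fun c => cube c b with hU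
      have hUc : (U.card : ℝ) ≤ δ / 4 * (n : ℝ) ^ d := by
        simpa [cover] using hunc n (by omega) ∅ ⟨by simp, by simp⟩ (by simp) v hv
      have h2 : pat (V v) R ≤ pat (V v) ((tiles v b R).biUnion fun c => cube c b) * A ^ U.card := by
        refine (pat_subset _ (F' := ((tiles v b R).biUnion fun c => cube c b) ∪ U) ?_).trans
          ((pat_union_le _ _ _).trans (Nat.mul_le_mul_left _ (pat_le _ _)))
        rw [hU, Finset.union_sdiff_self_eq_union]
        exact Finset.subset_union_right
      calc (pat (V v) R : ℝ) ≤
            pat (V v) ((tiles v b R).biUnion fun c => cube c b) * (A : ℝ) ^ (U.card : ℝ) := by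
            rw [Real.rpow_natCast]; exact_mod_cast h2
        _ ≤ (A : ℝ) ^ ((n : ℝ) ^ d * (h + δ / 2)) * (A : ℝ) ^ (δ / 4 * (n : ℝ) ^ d) := by
            gcongr
            exact hA1.le
        _ = _ := by rw [← Real.rpow_add hA0]; congr 1; ring
    have hbn : (b : ℝ) ^ d ≤ δ / 4 * (n : ℝ) ^ d := by
      have h1 : (b : ℝ) ^ d / (δ / 4) ≤ n := hk₁.trans (by exact_mod_cast (by omega))
      have h2 : (n : ℝ) ≤ (n : ℝ) ^ d := by exact_mod_cast Nat.le_self_pow (by omega) n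
      rw [div_le_iff₀ (by positivity)] at h1
      nlinarith
    calc (pat F R : ℝ) ≤ ∑ v ∈ cube (0 : Site d) b, (pat (V v) R : ℝ) := by
          exact_mod_cast pat_biUnion_le _ hcov R
      _ ≤ ∑ v ∈ cube (0 : Site d) b, (A : ℝ) ^ ((n : ℝ) ^ d * (h + 3 * δ / 4)) :=
          Finset.sum_le_sum hVb
      _ = (b : ℝ) ^ d * (A : ℝ) ^ ((n : ℝ) ^ d * (h + 3 * δ / 4)) := by
          rw [Finset.sum_const, card_cube, nsmul_eq_mul]; push_cast; rfl
      _ ≤ (A : ℝ) ^ (δ / 4 * (n : ℝ) ^ d) * (A : ℝ) ^ ((n : ℝ) ^ d * (h + 3 * δ / 4)) := by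
          gcongr
          calc (b : ℝ) ^ d ≤ (A : ℝ) ^ ((b ^ d : ℕ) : ℝ) := by
                rw [Real.rpow_natCast]
                exact_mod_cast (Nat.lt_pow_self (by omega : 1 < A)).le
            _ ≤ _ := Real.rpow_le_rpow_of_exponent_le hA1.le (by push_cast; exact hbn)
      _ = _ := by rw [← Real.rpow_add hA0]; congr 1; ring

theorem card_badSites_eq_visits {p : ℕ} (G : Finset (Word A d p)) (n : ℕ) (x : Config A d) :
    ((badSites G n x).card : ℝ) = visits {x | wordAt x p 0 ∉ G} (cube 0 n) x := by
  classical
  rw [visits_eq_card, badSites]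
  congr 2
  ext i
  simp [wordAt_shift, Set.mem_ofPred_eq]

/-- There are good sets of `n`-words such that (1) almost surely bad disjoint cubes fill a small
fraction of every large `Λ_n`, and (2) the outer part of a good word adds little more than the
entropy of its volume. -/
theorem ErgodicShift.exists_good_sets (hA : 2 ≤ A) (hd : 1 ≤ d) {μ : Measure (Config A d)}
    [IsProbabilityMeasure μ] (hμ : ErgodicShift μ) {h : ℝ} (hh : HasEntropyRate μ h) {η lam : ℝ}
    (hη : 0 < η) (hlam : 0 < lam) : ∃ (Good : ℕ → Set (Config A d)) (k₁ : ℕ), 1 ≤ k₁ ∧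
      (∀ᵐ x ∂μ, ∀ᶠ n : ℕ in atTop, ∀ Z : Finset (Site d × ℕ), CubeFam Z n →
        (∀ b ∈ Z, shift b.1 x ∉ Good b.2) → (vol Z : ℝ) ≤ lam * (n : ℝ) ^ d) ∧
      ∀ n ≥ k₁, ∀ Z : Finset (Site d × ℕ), CubeFam Z n → (∀ b ∈ Z, k₁ ≤ b.2) →
        ∀ W ⊆ Good n, ∀ K : ℝ, 0 ≤ K →
        (∀ x ∈ W, (pat {y ∈ W | ∀ i ∈ cube 0 n \ cover Z, y i = x i} (cube 0 n) : ℝ) ≤ K) →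
        (pat W (cube 0 n) : ℝ) ≤ K * (A : ℝ) ^ (h * ((n : ℝ) ^ d - vol Z) + η * (n : ℝ) ^ d) := by
  classical
  set δ := η / 5 with hδdef
  have hδ : 0 < δ := by positivity
  have h3 : (0 : ℝ) < 3 ^ d := by positivity
  obtain ⟨p₀, hp₀⟩ := exists_nat_ge (1 / δ)
  obtain ⟨p, hp, G, hGμ, hG⟩ := hμ.exists_typical_words hA hd hh
    (ε := lam * δ / 3 ^ d / 2) (by positivity) hδ (p₀ + 1)
  have hp1 : 1 ≤ p := by omega
  have hδp : 1 ≤ δ * (p : ℝ) ^ d := by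
    have h1 : (p₀ : ℝ) ≤ p := by exact_mod_cast (by omega : p₀ ≤ p)
    have h2 : (p : ℝ) ≤ (p : ℝ) ^ d := le_self_pow₀ (by exact_mod_cast hp1) (by omega)
    have h4 : δ * (1 / δ) ≤ δ * (p : ℝ) ^ d :=
      mul_le_mul_of_nonneg_left (hp₀.trans (h1.trans h2)) hδ.le
    rwa [mul_one_div_cancel hδ.ne'] at h4
  obtain ⟨k₁, hk₁, hpat⟩ := exists_pat_good_le hA hd hp1 (hh.nonneg hA) hδ hδp G hG
  refine ⟨good G δ, k₁, hk₁, ?_, fun n hn Z hZ hZk W hW K hK hWK => ?_⟩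
  · set B : Set (Config A d) := {x | wordAt x p 0 ∉ G} with hB
    have hBm : MeasurableSet B := measurableSet_wordAt_mem 0 {w | w ∉ G}
    have hc : 3 ^ d * μ.real B < lam * δ := by
      have h5 : 3 ^ d * μ.real B ≤ 3 ^ d * (lam * δ / 3 ^ d / 2) := by gcongr
      have h6 : 3 ^ d * (lam * δ / 3 ^ d / 2) = lam * δ / 2 := by field_simp
      have : 0 < lam * δ := by positivity
      linarith
    filter_upwards [hμ.ae_eventually_visits_le hBm hc] with x hx
    filter_upwards [hx] with n hn Z hZ hZb
    have key : δ * (vol Z : ℝ) ≤ visits B (cube 0 n) x := by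
      refine le_trans ?_ (visits_mono B hZ.cover_subset x)
      rw [visits, cover, Finset.sum_biUnion hZ.2, vol, Nat.cast_sum, Finset.mul_sum]
      refine Finset.sum_le_sum fun b hb => ?_
      have := hZb b hb
      rw [good, Set.mem_ofPred_eq, not_le, card_badSites_eq_visits, visits_shift] at this
      push_cast
      exact this.le
    have : δ * (vol Z : ℝ) ≤ δ * (lam * (n : ℝ) ^ d) := by linarith
    exact le_of_mul_le_mul_left this hδ
  · refine (pat_le_mul_pat hWK).trans (mul_le_mul_of_nonneg_left ?_ hK)
    have h7 : (pat W (cube 0 n \ cover Z) : ℝ) ≤ pat (good G δ n) (cube 0 n \ cover Z) := by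
      exact_mod_cast pat_mono hW _
    refine h7.trans ((hpat n hn Z hZ hZk).trans (le_of_eq ?_))
    rw [hδdef]; congr 1; ring

/-- If outside the cubes of `Z` the configurations of `V` agree, then the number of their
patterns is at most the product of the numbers of patterns on the cubes. -/
theorem pat_le_rpow_vol (hA : 2 ≤ A) {n : ℕ} {Z : Finset (Site d × ℕ)} {V : Set (Config A d)}
    {x : Config A d} {t : ℝ} (hV : ∀ y ∈ V, ∀ i ∈ cube 0 n \ cover Z, y i = x i)
    (hZ : ∀ b ∈ Z, (pat V (cube b.1 b.2) : ℝ) ≤ (A : ℝ) ^ ((b.2 : ℝ) ^ d * t)) :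
    (pat V (cube 0 n) : ℝ) ≤ (A : ℝ) ^ (t * vol Z) := by
  classical
  have hA0 : (0 : ℝ) < A := by exact_mod_cast (by omega : 0 < A)
  have h1 : pat V (cube 0 n) ≤ pat V (cover Z) :=
    pat_le_of_determined fun y hy z hz hyz i hi => by
      by_cases hi' : i ∈ cover Z
      · exact hyz i hi'
      · rw [hV y hy i (Finset.mem_sdiff.2 ⟨hi, hi'⟩), hV z hz i (Finset.mem_sdiff.2 ⟨hi, hi'⟩)]
  have h2 : pat V (cover Z) ≤ ∏ b ∈ Z, pat V (cube b.1 b.2) := by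
    convert pat_biUnion_le_prod V Z (fun b => cube b.1 b.2) using 2
    ext i; simp [cover]
  calc (pat V (cube 0 n) : ℝ) ≤ ∏ b ∈ Z, (pat V (cube b.1 b.2) : ℝ) := by
        exact_mod_cast h1.trans h2
    _ ≤ ∏ b ∈ Z, (A : ℝ) ^ ((b.2 : ℝ) ^ d * t) :=
        Finset.prod_le_prod (fun _ _ => Nat.cast_nonneg _) hZ
    _ = (A : ℝ) ^ (t * vol Z) := by
        rw [← Real.rpow_sum_of_pos hA0, ← Finset.sum_mul, vol]
        push_cast; rw [mul_comm]

theorem entH_wordDist_le (hA : 2 ≤ A) (μ : Measure (Config A d)) [IsProbabilityMeasure μ] (n : ℕ)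
    (S : Finset (Word A d n)) {L : ℝ} (hS : (S.card : ℝ) ≤ (A : ℝ) ^ L) :
    entH A (wordDist μ n) ≤ 1 + (μ.real {x | wordAt x n 0 ∈ S}) * L +
      (1 - μ.real {x | wordAt x n 0 ∈ S}) * (n : ℝ) ^ d := by
  classical
  have hA0 : (0 : ℝ) < A := by exact_mod_cast (by omega : 0 < A)
  have hA1 : (1 : ℝ) < A := by exact_mod_cast hA
  have hlog : 0 < Real.log A := Real.log_pos hA1
  set e : Word A d n → ℝ := fun w => if w ∈ S then L else (n : ℝ) ^ d with he
  set q : Word A d n → ℝ := fun w => (A : ℝ) ^ (-(1 + e w)) with hq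
  have hq0 : ∀ w, 0 < q w := fun w => Real.rpow_pos_of_pos hA0 _
  have hqs : ∑ w, q w ≤ 1 := by
    have h1 : ∀ w, q w ≤ 1 / 2 * ((if w ∈ S then (A : ℝ) ^ (-L) else 0)
        + (A : ℝ) ^ (-(n : ℝ) ^ d)) := fun w => by
      have h2 : q w = (A : ℝ)⁻¹ * (A : ℝ) ^ (-e w) := by
        rw [hq]; dsimp only
        rw [neg_add, Real.rpow_add hA0, Real.rpow_neg_one]
      have h3 : (A : ℝ)⁻¹ ≤ 1 / 2 := by
        rw [one_div]; exact inv_anti₀ (by norm_num) (by exact_mod_cast hA)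
      rw [h2]
      have h4 : 0 < (A : ℝ) ^ (-L) := Real.rpow_pos_of_pos hA0 _
      have h5 : 0 < (A : ℝ) ^ (-(n : ℝ) ^ d) := Real.rpow_pos_of_pos hA0 _
      refine mul_le_mul h3 ?_ (Real.rpow_pos_of_pos hA0 _).le (by norm_num)
      rw [he]; dsimp only
      split_ifs <;> linarith
    refine (Finset.sum_le_sum fun w _ => h1 w).trans ?_
    rw [← Finset.mul_sum, Finset.sum_add_distrib, ← Finset.sum_filter, Finset.sum_const,
      Finset.sum_const, Finset.filter_mem_eq_inter, Finset.univ_inter, nsmul_eq_mul, nsmul_eq_mul]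
    have h6 : (S.card : ℝ) * (A : ℝ) ^ (-L) ≤ 1 := by
      rw [Real.rpow_neg hA0.le, ← div_eq_mul_inv, div_le_one (Real.rpow_pos_of_pos hA0 _)]
      exact hS
    have h7 : ((Finset.univ : Finset (Word A d n)).card : ℝ) * (A : ℝ) ^ (-(n : ℝ) ^ d) = 1 := by
      rw [Finset.card_univ]
      simp only [Fintype.card_fun, Fintype.card_fin]
      rw [Real.rpow_neg hA0.le, ← Nat.cast_pow n d, Real.rpow_natCast, Nat.cast_pow]
      exact mul_inv_cancel₀ (by positivity)
    linarith
  have hPS : ∑ w, wordDist μ n w * (if w ∈ S then (1 : ℝ) else 0) =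
      μ.real {x | wordAt x n 0 ∈ S} := by
    have hm : MeasurableSet {x : Config A d | wordAt x n 0 ∈ S} :=
      measurableSet_wordAt_mem 0 (S : Set (Word A d n))
    rw [← integral_wordAt n (fun w => if w ∈ S then (1 : ℝ) else 0), ← integral_indicator_one hm]
    refine integral_congr_ae (Eventually.of_forall fun x => ?_)
    simp [Set.indicator_apply, Set.mem_ofPred_eq]
  have hterm : ∀ w, -(wordDist μ n w * Real.logb A (wordDist μ n w)) ≤
      wordDist μ n w * (1 + e w) + (q w - wordDist μ n w) / Real.log A := fun w => by
    rcases (wordDist_nonneg μ n w).eq_or_lt with h0 | h0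
    · rw [← h0]; simp only [zero_mul, neg_zero, sub_zero, zero_add]
      exact (div_pos (hq0 w) hlog).le
    · have h1 := Real.log_le_sub_one_of_pos (div_pos (hq0 w) h0)
      rw [Real.log_div (hq0 w).ne' h0.ne', hq] at h1
      dsimp only at h1
      rw [Real.log_rpow hA0] at h1
      have h2 : wordDist μ n w * (-(1 + e w) * Real.log A - Real.log (wordDist μ n w)) ≤
          q w - wordDist μ n w := by
        refine (mul_le_mul_of_nonneg_left h1 h0.le).trans (le_of_eq ?_)
        field_simp
        rfl
      rw [Real.logb, ← sub_nonneg]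
      have h3 : wordDist μ n w * (1 + e w) + (q w - wordDist μ n w) / Real.log A -
          -(wordDist μ n w * (Real.log (wordDist μ n w) / Real.log A)) =
          (q w - wordDist μ n w -
            wordDist μ n w * (-(1 + e w) * Real.log A - Real.log (wordDist μ n w)))
              / Real.log A := by
        field_simp; ring
      rw [h3]
      exact div_nonneg (by linarith) hlog.le
  rw [entH, ← Finset.sum_neg_distrib]
  refine (Finset.sum_le_sum fun w _ => hterm w).trans ?_
  rw [Finset.sum_add_distrib, ← Finset.sum_div, Finset.sum_sub_distrib, sum_wordDist]
  have h8 : (∑ w, q w - 1) / Real.log A ≤ 0 := div_nonpos_of_nonpos_of_nonneg (by linarith) hlog.le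
  have h9 : ∑ w, wordDist μ n w * (1 + e w) = 1 + (μ.real {x | wordAt x n 0 ∈ S}) * L +
      (1 - μ.real {x | wordAt x n 0 ∈ S}) * (n : ℝ) ^ d := by
    have : ∀ w, wordDist μ n w * (1 + e w) = wordDist μ n w * (1 + (n : ℝ) ^ d) +
        wordDist μ n w * (if w ∈ S then (1 : ℝ) else 0) * (L - (n : ℝ) ^ d) := fun w => by
      rw [he]; dsimp only; split_ifs <;> ring
    rw [Finset.sum_congr rfl fun w _ => this w, Finset.sum_add_distrib, ← Finset.sum_mul,
      ← Finset.sum_mul, hPS, sum_wordDist]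
    ring
  linarith

theorem HasEntropyRate.not_tendsto_of_card_le (hA : 2 ≤ A) (hd : 1 ≤ d)
    {μ : Measure (Config A d)} [IsProbabilityMeasure μ] {h κ : ℝ} (hh : HasEntropyRate μ h)
    (hκ : 0 < κ) {S : (N : ℕ) → Finset (Word A d N)}
    (hS : ∀ᶠ N : ℕ in atTop, ((S N).card : ℝ) ≤ (A : ℝ) ^ ((N : ℝ) ^ d * (h - κ))) :
    ¬ Tendsto (fun N : ℕ => μ {x | wordAt x N 0 ∉ S N}) atTop (𝓝 0) := by
  intro hlim
  have hlim' : Tendsto (fun N : ℕ => μ.real {x | wordAt x N 0 ∉ S N}) atTop (𝓝 0) := by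
    simpa [measureReal_def, Function.comp_def] using
      (ENNReal.tendsto_toReal ENNReal.zero_ne_top).comp hlim
  have hP : Tendsto (fun N : ℕ => μ.real {x | wordAt x N 0 ∈ S N}) atTop (𝓝 1) := by
    have : ∀ N : ℕ, μ.real {x | wordAt x N 0 ∈ S N} = 1 - μ.real {x | wordAt x N 0 ∉ S N} :=
      fun N => by
        have hm : MeasurableSet {x : Config A d | wordAt x N 0 ∈ S N} :=
          measurableSet_wordAt_mem 0 (S N : Set (Word A d N))
        have := probReal_compl_eq_one_sub (μ := μ) hm
        rw [show {x : Config A d | wordAt x N 0 ∉ S N} = {x | wordAt x N 0 ∈ S N}ᶜ from rfl, this]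
        ring
    simp_rw [this]
    simpa using tendsto_const_nhds.sub hlim'
  have hN : Tendsto (fun N : ℕ => 1 / (N : ℝ) ^ d) atTop (𝓝 0) := by
    simp only [one_div]
    exact ((tendsto_pow_atTop (by omega)).comp tendsto_natCast_atTop_atTop).inv_tendsto_atTop
  have hup := (hN.add (hP.mul_const (h - κ))).add ((tendsto_const_nhds (x := (1 : ℝ))).sub hP)
  have := le_of_tendsto_of_tendsto hh hup (by
    filter_upwards [hS, eventually_ge_atTop 1] with N hN1 hN2
    have h0 : (0 : ℝ) < (N : ℝ) ^ d := by positivity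
    rw [div_le_iff₀ h0]
    refine (entH_wordDist_le hA μ N (S N) hN1).trans (le_of_eq ?_)
    field_simp)
  linarith

theorem pat_cube_le_of_shift {V C : Set (Config A d)} {c : Site d} {k : ℕ}
    (h : ∀ y ∈ V, shift c y ∈ C) : pat V (cube c k) ≤ pat C (cube 0 k) := by
  rw [pat_cube, pat_cube]
  refine Set.ncard_le_ncard ?_ (Set.toFinite _)
  rintro _ ⟨y, hy, rfl⟩
  exact ⟨shift c y, h y hy, by simp only [wordAt_shift, zero_add]⟩

/-- If the sites of `R` are corners of cubes with some property and of bounded side, then disjoint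
such cubes fill a positive fraction. -/
theorem exists_cubeFam (R : Finset (Site d)) {n₁ n₂ M : ℕ} (hn₁ : 1 ≤ n₁)
    (hR : R ⊆ cube 0 M) {P : Site d → ℕ → Prop} (hP : ∀ r ∈ R, ∃ k, n₁ ≤ k ∧ k ≤ n₂ ∧ P r k) :
    ∃ Z : Finset (Site d × ℕ), CubeFam Z (M + n₂) ∧ (∀ b ∈ Z, n₁ ≤ b.2 ∧ P b.1 b.2) ∧
      R.card ≤ 3 ^ d * vol Z := by
  classical
  choose! n hn using hP
  obtain ⟨u, huR, hdis, hcard⟩ := exists_disjoint_cubes R n fun r hr => hn₁.trans (hn r hr).1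
  have hinj : Set.InjOn (fun r : Site d => (r, n r)) u := fun _ _ _ _ h => (Prod.mk.inj h).1
  refine ⟨u.image fun r => (r, n r), ⟨?_, ?_⟩, ?_, ?_⟩
  · intro b hb
    obtain ⟨r, hr, rfl⟩ := Finset.mem_image.1 hb
    refine cube_subset_cube_zero fun j => ?_
    have h1 := mem_cube_zero.1 (hR (huR hr)) j
    have h2 := (hn r (huR hr)).2.1
    dsimp only; omega
  · intro b hb b' hb' hbb
    obtain ⟨r, hr, rfl⟩ := Finset.mem_image.1 (Finset.mem_coe.1 hb)
    obtain ⟨r', hr', rfl⟩ := Finset.mem_image.1 (Finset.mem_coe.1 hb')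
    exact hdis hr hr' fun e => hbb (by rw [e])
  · intro b hb
    obtain ⟨r, hr, rfl⟩ := Finset.mem_image.1 hb
    exact ⟨(hn r (huR hr)).1, (hn r (huR hr)).2.2⟩
  · rwa [vol, Finset.sum_image hinj]

/-- A measurable set of positive measure is visited with positive frequency, with probability
tending to `1`. -/
theorem ErgodicShift.tendsto_measure_visits_lt {μ : Measure (Config A d)} [IsProbabilityMeasure μ]
    (hμ : ErgodicShift μ) {E : Set (Config A d)} (hE : MeasurableSet E) {c : ℝ} (hc : 0 < c)
    (hcE : 2 * c ≤ μ.real E) :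
    Tendsto (fun M : ℕ => μ {x | visits E (cube 0 M) x < c * (M : ℝ) ^ d}) atTop (𝓝 0) := by
  have hlim := hμ.tendsto_average (f := E.indicator fun _ => (1 : ℝ))
    (memLp_indicator_const 2 hE 1 (Or.inr (measure_ne_top μ E))) hc
  refine tendsto_of_tendsto_of_tendsto_of_le_of_le tendsto_const_nhds hlim (fun _ => zero_le)
    fun M => measure_mono fun x hx => ?_
  rw [Set.mem_ofPred_eq] at hx ⊢
  have hi : ∫ y, E.indicator (fun _ => (1 : ℝ)) y ∂μ = μ.real E := by
    rw [integral_indicator_const _ hE, smul_eq_mul, mul_one]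
  have hv0 : 0 ≤ visits E (cube 0 M) x :=
    Finset.sum_nonneg fun _ _ => Set.indicator_nonneg (fun _ _ => zero_le_one) _
  have hM : 0 < (M : ℝ) ^ d := by
    by_contra! h0
    nlinarith
  have h1 : ((M : ℝ) ^ d)⁻¹ * visits E (cube 0 M) x < c := by
    rw [inv_mul_lt_iff₀ hM]; linarith
  rw [hi, abs_sub_comm]
  refine le_trans ?_ (le_abs_self _)
  rw [visits] at h1
  linarith

theorem ErgodicShift.ae_eventually_not_mem_of_measurable (hA : 2 ≤ A) (hd : 1 ≤ d)
    {μ : Measure (Config A d)} [IsProbabilityMeasure μ] (hμ : ErgodicShift μ) {h δ : ℝ}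
    (hh : HasEntropyRate μ h) (hδ : 0 < δ) {C : ℕ → Set (Config A d)}
    (hCm : ∀ n, MeasurableSet (C n))
    (hC : ∀ᶠ n : ℕ in atTop, (pat (C n) (cube 0 n) : ℝ) ≤ (A : ℝ) ^ ((n : ℝ) ^ d * (h - δ))) :
    ∀ᵐ x ∂μ, ∀ᶠ n : ℕ in atTop, x ∉ C n := by
  classical
  have hA0 : (0 : ℝ) < A := by exact_mod_cast (by omega : 0 < A)
  have hA1 : (1 : ℝ) ≤ A := by exact_mod_cast (by omega : 1 ≤ A)
  by_contra hcon
  set D : Set (Config A d) := {x | ¬ ∀ᶠ n : ℕ in atTop, x ∉ C n} with hD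
  have hDpos : μ D ≠ 0 := fun h0 => hcon (ae_iff.2 h0)
  set c := μ.real D / 4 with hc
  have hc0 : 0 < c := by
    have : 0 < μ.real D := ENNReal.toReal_pos hDpos (measure_ne_top _ _)
    positivity
  set a := c / (2 * 3 ^ d) with ha
  have ha0 : 0 < a := by positivity
  set η := δ * a / 4 with hη
  have hη0 : 0 < η := by positivity
  obtain ⟨k₀, hk₀⟩ := eventually_atTop.1 hC
  obtain ⟨Good, k₁, hk₁, hgood, hpat⟩ :=
    hμ.exists_good_sets hA hd hh hη0 (lam := 1 / 2) (by norm_num)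
  obtain ⟨k₂, hk₂, hfams⟩ := exists_card_fams_le hA hd hη0
  set n₁ := max k₀ (max k₁ k₂) with hn₁
  have hn₁1 : 1 ≤ n₁ := by omega
  -- a finite range of scales carries most of the limit superior
  obtain ⟨n₂, hn₂⟩ : ∃ n₂ : ℕ, 2 * c ≤ μ.real (⋃ k ∈ Finset.Icc n₁ n₂, C k) := by
    have hmono : Monotone fun m : ℕ => ⋃ k ∈ Finset.Icc n₁ m, C k := fun m m' hm =>
      Set.biUnion_subset_biUnion_left fun k hk => by
        rw [Finset.mem_coe, Finset.mem_Icc] at hk ⊢; omega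
    have hlim := tendsto_measure_iUnion_atTop (μ := μ) hmono
    have hsub : D ⊆ ⋃ m : ℕ, ⋃ k ∈ Finset.Icc n₁ m, C k := fun x hx => by
      rw [hD, Set.mem_ofPred_eq] at hx
      obtain ⟨k, hk, hxk⟩ := (frequently_atTop.1 (show ∃ᶠ n : ℕ in atTop, x ∈ C n by
        simpa [Filter.Frequently] using hx)) n₁
      simp only [Set.mem_iUnion]
      exact ⟨k, k, Finset.mem_Icc.2 ⟨hk, le_rfl⟩, hxk⟩
    have hlt : ENNReal.ofReal (2 * c) < μ (⋃ m : ℕ, ⋃ k ∈ Finset.Icc n₁ m, C k) := by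
      refine lt_of_lt_of_le ?_ (measure_mono hsub)
      rw [ENNReal.ofReal_lt_iff_lt_toReal (by positivity) (measure_ne_top _ _)]
      rw [← measureReal_def]; linarith
    obtain ⟨n₂, hn₂⟩ := (hlim.eventually (lt_mem_nhds hlt)).exists
    exact ⟨n₂, (ENNReal.ofReal_le_iff_le_toReal (measure_ne_top _ _)).1 hn₂.le⟩
  set E : Set (Config A d) := ⋃ k ∈ Finset.Icc n₁ n₂, C k with hE
  have hEm : MeasurableSet E := Finset.measurableSet_biUnion _ fun k _ => hCm k
  -- configurations with many disjoint cubes on which they lie in `C`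
  set W : ℕ → Finset (Site d × ℕ) → Set (Config A d) := fun N Z =>
    {x | x ∈ Good N ∧ ∀ b ∈ Z, shift b.1 x ∈ C b.2} with hW
  set F : ℕ → Finset (Finset (Site d × ℕ)) := fun N =>
    (fams d n₁ N).filter fun Z => a * (N : ℝ) ^ d ≤ vol Z with hF
  set Q : ℕ → Set (Config A d) := fun N => ⋃ Z ∈ F N, W N Z with hQ
  have hWpat : ∀ N ≥ n₁, ∀ Z ∈ F N, (pat (W N Z) (cube 0 N) : ℝ) ≤
      (A : ℝ) ^ ((N : ℝ) ^ d * (h - 3 * η)) := by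
    intro N hN Z hZ
    obtain ⟨hZf, hZv⟩ := Finset.mem_filter.1 hZ
    have hZfam : CubeFam Z N := (Finset.mem_filter.1 hZf).2
    have hZk : ∀ b ∈ Z, n₁ ≤ b.2 := fun b hb => by
      have := Finset.mem_powerset.1 (Finset.mem_filter.1 hZf).1 hb
      exact (Finset.mem_Icc.1 (Finset.mem_product.1 this).2).1
    refine (hpat N (by omega) Z hZfam (fun b hb => by have := hZk b hb; omega) (W N Z)
      (fun x hx => hx.1) ((A : ℝ) ^ ((h - δ) * vol Z)) (Real.rpow_nonneg hA0.le _)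
      fun x _ => pat_le_rpow_vol hA (fun y hy => hy.2) fun b hb => ?_).trans ?_
    · refine le_trans ?_ (hk₀ b.2 (by have := hZk b hb; omega))
      exact Nat.cast_le.2 (pat_cube_le_of_shift fun y hy => hy.1.2 b hb)
    · rw [← Real.rpow_add hA0]
      refine Real.rpow_le_rpow_of_exponent_le hA1 ?_
      have : 4 * η * (N : ℝ) ^ d ≤ δ * vol Z := by
        rw [hη, show 4 * (δ * a / 4) * (N : ℝ) ^ d = δ * (a * (N : ℝ) ^ d) by ring]
        exact mul_le_mul_of_nonneg_left hZv hδ.le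
      linarith
  have hQpat : ∀ N ≥ n₁, (pat (Q N) (cube 0 N) : ℝ) ≤ (A : ℝ) ^ ((N : ℝ) ^ d * (h - 2 * η)) := by
    intro N hN
    calc (pat (Q N) (cube 0 N) : ℝ) ≤ ∑ Z ∈ F N, (pat (W N Z) (cube 0 N) : ℝ) := by
          exact_mod_cast pat_biUnion_le (F N) subset_rfl (cube 0 N)
      _ ≤ ∑ Z ∈ F N, (A : ℝ) ^ ((N : ℝ) ^ d * (h - 3 * η)) :=
          Finset.sum_le_sum fun Z hZ => hWpat N hN Z hZ
      _ ≤ (A : ℝ) ^ (η * (N : ℝ) ^ d) * (A : ℝ) ^ ((N : ℝ) ^ d * (h - 3 * η)) := by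
          rw [Finset.sum_const, nsmul_eq_mul]
          refine mul_le_mul_of_nonneg_right ?_ (Real.rpow_nonneg hA0.le _)
          refine le_trans ?_ (hfams n₁ (by omega) N)
          exact_mod_cast Finset.card_le_card (Finset.filter_subset _ _)
      _ = (A : ℝ) ^ ((N : ℝ) ^ d * (h - 2 * η)) := by
          rw [← Real.rpow_add hA0]; congr 1; ring
  set S : (N : ℕ) → Finset (Word A d N) := fun N =>
    (Set.toFinite ((fun x : Config A d => wordAt x N 0) '' Q N)).toFinset with hS
  refine hh.not_tendsto_of_card_le hA hd (κ := 2 * η) (by positivity) (S := S) ?_ ?_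
  · filter_upwards [eventually_ge_atTop n₁] with N hN
    refine le_trans (le_of_eq ?_) (hQpat N hN)
    rw [pat_cube, hS, Set.ncard_eq_toFinset_card _ (Set.toFinite _)]
  have hSm : ∀ N, MeasurableSet {x : Config A d | wordAt x N 0 ∉ S N} := fun N =>
    measurableSet_wordAt_mem 0 {w | w ∉ S N}
  set V : ℕ → Set (Config A d) := fun N =>
    {x | visits E (cube 0 (N - n₂)) x < c * ((N - n₂ : ℕ) : ℝ) ^ d} with hV
  have hVm : ∀ N, MeasurableSet (V N) := fun N =>
    measurableSet_lt (measurable_visits hEm _) measurable_const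
  have hVlim : Tendsto (fun N => μ (V N)) atTop (𝓝 0) :=
    (hμ.tendsto_measure_visits_lt hEm hc0 hn₂).comp (tendsto_sub_atTop_nat n₂)
  have hRest : Tendsto (fun N => μ ({x | wordAt x N 0 ∉ S N} \ V N)) atTop (𝓝 0) := by
    have := tendsto_measure_of_ae_tendsto_indicator_of_isFiniteMeasure (μ := μ) atTop
      (A := ∅) (As := fun N => {x | wordAt x N 0 ∉ S N} \ V N) MeasurableSet.empty
      (fun N => (hSm N).diff (hVm N)) ?_
    · simpa using this
    obtain ⟨k₃, hk₃, hsub⟩ := exists_pow_sub_sub_le d n₂ (show (0 : ℝ) < 1 / 2 by norm_num)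
    filter_upwards [hgood] with x hx
    filter_upwards [hx, eventually_ge_atTop (max 1 (max n₂ k₃))] with N hN hNk
    have hN1 : 1 ≤ N := by omega
    have hN0 : (0 : ℝ) < (N : ℝ) ^ d := by positivity
    simp only [Set.mem_empty_iff_false, iff_false]
    rintro ⟨hxS, hxV⟩
    rw [Set.mem_ofPred_eq] at hxS
    rw [hV, Set.mem_ofPred_eq, not_lt] at hxV
    refine hxS ?_
    rw [hS, Set.Finite.mem_toFinset]
    refine Set.mem_image_of_mem _ ?_
    have hxG : x ∈ Good N := by
      by_contra hxG
      have := hN {(0, N)} ⟨by simp, by simp⟩ (by simpa [shift_zero] using hxG)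
      simp only [vol, Finset.sum_singleton] at this
      push_cast at this
      linarith
    obtain ⟨Z, hZ, hZC, hZv⟩ := exists_cubeFam (n₁ := n₁) (n₂ := n₂) (M := N - n₂)
      ((cube (0 : Site d) (N - n₂)).filter fun i => shift i x ∈ E) hn₁1 (Finset.filter_subset _ _)
      (P := fun r k => shift r x ∈ C k) (fun r hr => by
        have := (Finset.mem_filter.1 hr).2
        simp only [hE, Set.mem_iUnion, Finset.mem_Icc] at this
        obtain ⟨k, ⟨h1, h2⟩, h3⟩ := this
        exact ⟨k, h1, h2, h3⟩)
    rw [Nat.sub_add_cancel (by omega)] at hZ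
    rw [hQ]
    refine Set.mem_biUnion (x := Z) (Finset.mem_filter.2 ⟨mem_fams hd hn₁1 hZ fun b hb =>
      (hZC b hb).1, ?_⟩) ⟨hxG, fun b hb => (hZC b hb).2⟩
    rw [visits_eq_card] at hxV
    have h1 : (((cube (0 : Site d) (N - n₂)).filter fun i => shift i x ∈ E).card : ℝ) ≤
        3 ^ d * vol Z := by exact_mod_cast hZv
    have h2 := hsub N (by omega)
    have h3 : ((N - 2 * n₂ : ℕ) : ℝ) ^ d ≤ ((N - n₂ : ℕ) : ℝ) ^ d := by
      gcongr; omega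
    have h4 : c * ((N : ℝ) ^ d / 2) ≤ 3 ^ d * vol Z := by
      refine le_trans ?_ (hxV.trans h1)
      refine mul_le_mul_of_nonneg_left ?_ hc0.le
      linarith
    rw [ha, div_mul_eq_mul_div, div_le_iff₀ (by positivity)]
    linarith
  refine tendsto_of_tendsto_of_tendsto_of_le_of_le tendsto_const_nhds
    (by simpa using hVlim.add hRest) (fun _ => zero_le) fun N => ?_
  refine le_trans (measure_mono ?_) (measure_union_le _ _)
  intro x hx
  by_cases hxV : x ∈ V N
  · exact Or.inl hxV
  · exact Or.inr ⟨hx, hxV⟩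

/-- A sequence of sets of words with exponential growth rate below the entropy rate is almost
surely eventually avoided. -/
theorem ErgodicShift.ae_eventually_not_mem (hA : 2 ≤ A) (hd : 1 ≤ d)
    {μ : Measure (Config A d)} [IsProbabilityMeasure μ] (hμ : ErgodicShift μ) {h δ : ℝ}
    (hh : HasEntropyRate μ h) (hδ : 0 < δ) {C : ℕ → Set (Config A d)}
    (hC : ∀ᶠ n : ℕ in atTop, (pat (C n) (cube 0 n) : ℝ) ≤ (A : ℝ) ^ ((n : ℝ) ^ d * (h - δ))) :
    ∀ᵐ x ∂μ, ∀ᶠ n : ℕ in atTop, x ∉ C n := by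
  set C' : ℕ → Set (Config A d) := fun n =>
    {x | wordAt x n 0 ∈ (fun y : Config A d => wordAt y n 0) '' C n} with hC'
  have := hμ.ae_eventually_not_mem_of_measurable hA hd hh hδ (C := C')
    (fun n => measurableSet_wordAt_mem 0 _) (by
      filter_upwards [hC] with n hn
      refine le_trans ?_ hn
      rw [pat_cube, pat_cube]
      refine Nat.cast_le.2 (Set.ncard_le_ncard ?_ (Set.toFinite _))
      rintro _ ⟨y, hy, rfl⟩
      exact hy)
  filter_upwards [this] with x hx
  filter_upwards [hx] with n hn hxn
  exact hn ⟨x, hxn, rfl⟩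

/-- Almost surely the cubes of a large `Λ_n` whose words are copies of words from few other
cubes cannot fill a positive fraction of `Λ_n`. -/
theorem ErgodicShift.exists_ae_vol_copies_lt (hA : 2 ≤ A) (hd : 1 ≤ d)
    {μ : Measure (Config A d)} [IsProbabilityMeasure μ] (hμ : ErgodicShift μ) {h α₀ c : ℝ}
    (hh : HasEntropyRate μ h) (hα₀ : 0 < α₀) (hc : 0 < c) : ∃ k₁ : ℕ, 1 ≤ k₁ ∧
      ∀ᵐ x ∂μ, ∀ᶠ n : ℕ in atTop, ∀ Z Z' : Finset (Site d × ℕ), CubeFam Z n → CubeFam Z' n →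
        Disjoint (cover Z) (cover Z') → (∀ b ∈ Z, k₁ ≤ b.2) → (∀ b ∈ Z', k₁ ≤ b.2) →
        (∀ k : ℕ, ((Z'.filter fun b => b.2 = k).card : ℝ) ≤ (A : ℝ) ^ ((k : ℝ) ^ d * (h - α₀))) →
        (∀ b ∈ Z, ∃ b' ∈ Z', b'.2 = b.2 ∧ wordAt x b.2 b'.1 = wordAt x b.2 b.1) →
        (vol Z : ℝ) < c * (n : ℝ) ^ d := by
  classical
  have hA0 : (0 : ℝ) < A := by exact_mod_cast (by omega : 0 < A)
  have hA1 : (1 : ℝ) ≤ A := by exact_mod_cast (by omega : 1 ≤ A)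
  set η := α₀ * c / 4 with hη
  have hη0 : 0 < η := by positivity
  obtain ⟨Good, k₁, hk₁, hgood, hpat⟩ :=
    hμ.exists_good_sets hA hd hh hη0 (lam := 1 / 2) (by norm_num)
  obtain ⟨k₂, hk₂, hfams⟩ := exists_card_fams_le hA hd hη0
  set n₁ := max k₁ k₂ with hn₁
  have hn₁1 : 1 ≤ n₁ := by omega
  refine ⟨n₁, hn₁1, ?_⟩
  set W : ℕ → Finset (Site d × ℕ) × Finset (Site d × ℕ) → Set (Config A d) := fun n Y =>
    {x | x ∈ Good n ∧
      ∀ b ∈ Y.1, ∃ b' ∈ Y.2, b'.2 = b.2 ∧ wordAt x b.2 b'.1 = wordAt x b.2 b.1} with hW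
  set F : ℕ → Finset (Finset (Site d × ℕ) × Finset (Site d × ℕ)) := fun n =>
    (fams d n₁ n ×ˢ fams d n₁ n).filter fun Y => c * (n : ℝ) ^ d ≤ vol Y.1 ∧
      Disjoint (cover Y.1) (cover Y.2) ∧ ∀ k : ℕ, ((Y.2.filter fun b => b.2 = k).card : ℝ) ≤
        (A : ℝ) ^ ((k : ℝ) ^ d * (h - α₀)) with hF
  set C : ℕ → Set (Config A d) := fun n => ⋃ Y ∈ F n, W n Y with hC
  have hWpat : ∀ n ≥ n₁, ∀ Y ∈ F n, (pat (W n Y) (cube 0 n) : ℝ) ≤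
      (A : ℝ) ^ ((n : ℝ) ^ d * (h - 3 * η)) := by
    intro n hn Y hY
    obtain ⟨hYf, hYv, hdis, hYc⟩ := Finset.mem_filter.1 hY
    obtain ⟨hY1, hY2⟩ := Finset.mem_product.1 hYf
    have hZ : CubeFam Y.1 n := (Finset.mem_filter.1 hY1).2
    have hZ' : CubeFam Y.2 n := (Finset.mem_filter.1 hY2).2
    have hZk : ∀ b ∈ Y.1, n₁ ≤ b.2 := fun b hb => by
      have := Finset.mem_powerset.1 (Finset.mem_filter.1 hY1).1 hb
      exact (Finset.mem_Icc.1 (Finset.mem_product.1 this).2).1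
    refine (hpat n (by omega) Y.1 hZ (fun b hb => by have := hZk b hb; omega) (W n Y)
      (fun x hx => hx.1) ((A : ℝ) ^ ((h - α₀) * vol Y.1)) (Real.rpow_nonneg hA0.le _)
      fun x _ => pat_le_rpow_vol hA (fun y hy => hy.2) fun b hb => ?_).trans ?_
    · refine le_trans ?_ (hYc b.2)
      rw [pat_cube]
      refine Nat.cast_le.2 (le_trans (Set.ncard_le_ncard
        (t := (((Y.2.filter fun b' => b'.2 = b.2).image fun b' => wordAt x b.2 b'.1 :
          Finset (Word A d b.2)) : Set (Word A d b.2))) ?_ (Finset.finite_toSet _))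
        ((Set.ncard_coe_finset _).le.trans Finset.card_image_le))
      rintro _ ⟨y, ⟨⟨-, hy⟩, hyx⟩, rfl⟩
      obtain ⟨b', hb', hbk, hw⟩ := hy b hb
      rw [Finset.mem_coe, Finset.mem_image]
      refine ⟨b', Finset.mem_filter.2 ⟨hb', hbk⟩, ?_⟩
      dsimp only
      rw [← hw]
      funext i
      have hi : (fun j => b'.1 j + (i j : ℕ)) ∈ cube b'.1 b'.2 :=
        mem_cube.2 fun j => ⟨by omega, by have := (i j).2; omega⟩
      refine (hyx _ (Finset.mem_sdiff.2 ⟨hZ'.1 b' hb' hi, fun hc' => ?_⟩)).symm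
      exact Finset.disjoint_left.1 hdis hc' (mem_cover.2 ⟨b', hb', hi⟩)
    · rw [← Real.rpow_add hA0]
      refine Real.rpow_le_rpow_of_exponent_le hA1 ?_
      have : 4 * η * (n : ℝ) ^ d ≤ α₀ * vol Y.1 := by
        rw [hη, show 4 * (α₀ * c / 4) * (n : ℝ) ^ d = α₀ * (c * (n : ℝ) ^ d) by ring]
        exact mul_le_mul_of_nonneg_left hYv hα₀.le
      linarith
  have hCpat : ∀ᶠ n : ℕ in atTop,
      (pat (C n) (cube 0 n) : ℝ) ≤ (A : ℝ) ^ ((n : ℝ) ^ d * (h - η)) := by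
    filter_upwards [eventually_ge_atTop n₁] with n hn
    calc (pat (C n) (cube 0 n) : ℝ) ≤ ∑ Y ∈ F n, (pat (W n Y) (cube 0 n) : ℝ) := by
          exact_mod_cast pat_biUnion_le (F n) subset_rfl (cube 0 n)
      _ ≤ ∑ Y ∈ F n, (A : ℝ) ^ ((n : ℝ) ^ d * (h - 3 * η)) :=
          Finset.sum_le_sum fun Z hZ => hWpat n hn Z hZ
      _ ≤ (A : ℝ) ^ (η * (n : ℝ) ^ d) * (A : ℝ) ^ (η * (n : ℝ) ^ d) *
            (A : ℝ) ^ ((n : ℝ) ^ d * (h - 3 * η)) := by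
          rw [Finset.sum_const, nsmul_eq_mul]
          refine mul_le_mul_of_nonneg_right ?_ (Real.rpow_nonneg hA0.le _)
          have hf := hfams n₁ (by omega) n
          refine le_trans ?_ (mul_le_mul hf hf (Nat.cast_nonneg _) (Real.rpow_nonneg hA0.le _))
          rw [← Nat.cast_mul, ← Finset.card_product]
          exact Nat.cast_le.2 (Finset.card_le_card (Finset.filter_subset _ _))
      _ = (A : ℝ) ^ ((n : ℝ) ^ d * (h - η)) := by
          rw [← Real.rpow_add hA0, ← Real.rpow_add hA0]; congr 1; ring
  filter_upwards [hgood, hμ.ae_eventually_not_mem hA hd hh hη0 hCpat] with x hx hxC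
  filter_upwards [hx, hxC, eventually_ge_atTop 1] with n hn hnC hn1 Z Z' hZ hZ' hdis hZk hZk' hcard
    hcopy
  by_contra! hcon
  have hxG : x ∈ Good n := by
    by_contra hxG
    have := hn {(0, n)} ⟨by simp, by simp⟩ (by simpa [shift_zero] using hxG)
    simp only [vol, Finset.sum_singleton] at this
    push_cast at this
    have hn0 : (0 : ℝ) < (n : ℝ) ^ d := by positivity
    linarith
  refine hnC (Set.mem_biUnion (x := (Z, Z')) (Finset.mem_filter.2 ⟨Finset.mem_product.2
    ⟨mem_fams hd hn₁1 hZ hZk, mem_fams hd hn₁1 hZ' hZk'⟩, hcon, hdis, hcard⟩) ⟨hxG, hcopy⟩)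

/-- There are sets of words of the size given by the entropy rate such that almost surely disjoint
cubes with words outside these sets fill a small fraction of every large `Λ_n`. -/
theorem ErgodicShift.exists_ae_vol_atypical_le (hA : 2 ≤ A) (hd : 1 ≤ d)
    {μ : Measure (Config A d)} [IsProbabilityMeasure μ] (hμ : ErgodicShift μ) {h η lam : ℝ}
    (hh : HasEntropyRate μ h) (hη : 0 < η) (hlam : 0 < lam) :
    ∃ (T : (k : ℕ) → Finset (Word A d k)) (k₁ : ℕ),
      (∀ k ≥ k₁, ((T k).card : ℝ) ≤ (A : ℝ) ^ ((k : ℝ) ^ d * (h + η))) ∧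
      ∀ᵐ x ∂μ, ∀ᶠ n : ℕ in atTop, ∀ Z : Finset (Site d × ℕ), CubeFam Z n →
        (∀ b ∈ Z, wordAt x b.2 b.1 ∉ T b.2) → (vol Z : ℝ) ≤ lam * (n : ℝ) ^ d := by
  classical
  obtain ⟨Good, k₁, -, hgood, hpat⟩ := hμ.exists_good_sets hA hd hh hη hlam
  refine ⟨fun k => (Set.toFinite ((fun x : Config A d => wordAt x k 0) '' Good k)).toFinset, k₁,
    fun k hk => ?_, ?_⟩
  · rw [← Set.ncard_eq_toFinset_card _ (Set.toFinite _), ← pat_cube]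
    refine (hpat k hk ∅ ⟨by simp, by simp⟩ (by simp) (Good k) subset_rfl 1 zero_le_one
      fun x _ => ?_).trans (le_of_eq ?_)
    · have h1 := pat_le_of_determined (F := cube 0 k) (F₁ := ∅)
        (V := {y ∈ Good k | ∀ i ∈ cube 0 k \ cover ∅, y i = x i}) fun y hy z hz _ i hi => by
          have hi' : i ∈ cube 0 k \ cover ∅ := by simpa [cover] using hi
          rw [hy.2 i hi', hz.2 i hi']
      exact_mod_cast h1.trans (by simpa using pat_le _ (∅ : Finset (Site d)))
    · simp only [vol, Finset.sum_empty, Nat.cast_zero, sub_zero, one_mul]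
      congr 1; ring
  · filter_upwards [hgood] with x hx
    filter_upwards [hx] with n hn Z hZ hb
    refine hn Z hZ fun b hbZ hxb => hb b hbZ ?_
    rw [Set.Finite.mem_toFinset]
    exact ⟨shift b.1 x, hxb, by simp only [wordAt_shift, zero_add]⟩

theorem mem_tuples {d n : ℕ} {r : Fin d → ℕ} : r ∈ tuples d n ↔ ∀ j, r j < n := by
  induction d with
  | zero => simp [tuples, Subsingleton.elim r fun i => i.elim0]
  | succ d ih =>
    simp only [tuples, List.mem_flatMap, List.mem_range, List.mem_map, ih]
    constructor
    · rintro ⟨a, ha, t, ht, rfl⟩ j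
      refine Fin.cases ?_ (fun i => ?_) j
      · simpa using ha
      · simpa using ht i
    · exact fun h => ⟨r 0, h 0, Fin.tail r, fun j => h j.succ, Fin.cons_self_tail r⟩

theorem nodup_tuples (d n : ℕ) : (tuples d n).Nodup := by
  induction d with
  | zero => simp [tuples]
  | succ d ih =>
    rw [tuples, List.nodup_flatMap]
    refine ⟨fun a _ => ih.map (Fin.cons_right_injective (α := fun _ => ℕ) a), ?_⟩
    refine List.nodup_range.imp fun {a b} hab => ?_
    simp only [Function.onFun, List.disjoint_left, List.mem_map]
    rintro _ ⟨t, _, rfl⟩ ⟨t', _, h⟩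
    exact hab (by simpa using (congrFun h 0).symm)

/-- The corner of the block of side `k` with block coordinates `r`. -/
def corner (k : ℕ) (r : Site d) : Site d := fun j => k * r j

/-- Block coordinates of the blocks between `Λ_a` and `Λ_b`. -/
def shell (d a b : ℕ) : Finset (Site d) := cube 0 b \ cube 0 a

open scoped Classical in
/-- The number of block coordinates in `F` whose `k`-words occur at least twice. -/
noncomputable def rep (x : Config A d) (k : ℕ) (F : Finset (Site d)) : ℕ :=
  (F.filter fun r => ∃ r' ∈ F, r' ≠ r ∧
    wordAt x k (corner k r') = wordAt x k (corner k r)).card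

theorem mem_shell {a b : ℕ} {r : Site d} : r ∈ shell d a b ↔ (∀ j, r j < b) ∧ ¬ ∀ j, r j < a := by
  rw [shell, Finset.mem_sdiff, mem_cube_zero, mem_cube_zero]

theorem card_shell {a b : ℕ} (h : a ≤ b) : (shell d a b).card = b ^ d - a ^ d := by
  rw [shell, Finset.card_sdiff_of_subset (cube_zero_mono h), card_cube, card_cube]

theorem length_filter_of_nodup {α : Type*} [DecidableEq α] {l : List α} (hl : l.Nodup)
    (p : α → Prop) [DecidablePred p] :
    (l.filter fun a => decide (p a)).length = (l.toFinset.filter p).card := by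
  rw [← List.toFinset_card_of_nodup (hl.filter _), List.toFinset_filter]
  congr 1
  ext; simp

theorem Jval_eq (x : Config A d) {P : List (Site d × ℕ)} {k : ℕ} {l : List (Site d)}
    (hl : l.Nodup) (hP : P.filter (fun b => decide (b.2 = k)) = l.map fun r => (corner k r, k)) :
    Jval x P k = (rep x k l.toFinset : ℝ) / (l.toFinset.card : ℝ) := by
  classical
  simp only [Jval, hP, List.filter_map, List.length_map, Function.comp_def]
  rw [List.toFinset_card_of_nodup hl, length_filter_of_nodup hl, rep]
  congr 3
  refine Finset.filter_congr fun r hr => ?_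
  rw [length_filter_of_nodup hl]
  constructor
  · intro h
    obtain ⟨r', hr', hne⟩ := Finset.exists_mem_ne (show 1 < _ from h) r
    exact ⟨r', (Finset.mem_filter.1 hr').1, hne, (Finset.mem_filter.1 hr').2⟩
  · rintro ⟨r', hr', hne, hw⟩
    exact Finset.one_lt_card.2 ⟨r', Finset.mem_filter.2 ⟨hr', hw⟩, r,
      Finset.mem_filter.2 ⟨hr, rfl⟩, hne⟩

/-- The parser is in the phase of block size `k`, which started at `⌊m / k⌋ = a`, and the
`k`-blocks parsed so far are those between `Λ_{ka}` and `Λ_{kb}`. -/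
structure InPhase (s : PState d) (k a b : ℕ) : Prop where
  k_eq : s.k = k
  le : a ≤ b
  div_eq : s.m / k = b
  m_eq : a < b → s.m = k * b
  blocks : ∃ l : List (Site d), l.Nodup ∧ l.toFinset = shell d a b ∧
    s.blocks.filter (fun c => decide (c.2 = k)) = l.map fun r => (corner k r, k)
  side : ∀ c ∈ s.blocks, 1 ≤ c.2 ∧ c.2 ≤ k

theorem InPhase.Jval_eq {s : PState d} {k a b : ℕ} (h : InPhase s k a b) (x : Config A d) :
    Jval x s.blocks s.k = (rep x k (shell d a b) : ℝ) / ((shell d a b).card : ℝ) := by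
  obtain ⟨l, hl, hl', hP⟩ := h.blocks
  rw [h.k_eq, SRU1408.Jval_eq x hl hP, hl']

theorem InPhase.step_of_lt {φ : ℝ} {x : Config A d} {s : PState d} {k a b : ℕ} (hk : 1 ≤ k)
    (h : InPhase s k a b) (hJ : Jval x s.blocks s.k < φ) : InPhase (step φ x s) k a (b + 1) := by
  classical
  rw [step, if_neg (not_le.2 hJ)]
  obtain ⟨l, hl, hl', hP⟩ := h.blocks
  have hk' := h.k_eq
  have hdiv := h.div_eq
  subst hk'
  rw [hdiv]
  have hm : b * s.k + s.k = s.k * (b + 1) := by ring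
  refine ⟨rfl, by have := h.le; omega, ?_, fun _ => hm, ?_, ?_⟩
  · dsimp only; rw [hm, Nat.mul_div_cancel_left _ hk]
  · refine ⟨l ++ (tuples d (b + 1)).filter fun r => decide (¬ ∀ j, r j < b), ?_, ?_, ?_⟩
    · refine List.Nodup.append hl ((nodup_tuples _ _).filter _) ?_
      rw [List.disjoint_left]
      intro r hr hr'
      have h1 : r ∈ shell d a b := hl' ▸ List.mem_toFinset.2 hr
      have h2 := (List.mem_filter.1 hr').2
      simp only [decide_eq_true_eq] at h2
      exact h2 (mem_shell.1 h1).1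
    · ext r
      rw [List.toFinset_append, Finset.mem_union, hl', mem_shell, mem_shell, List.mem_toFinset,
        List.mem_filter, mem_tuples, decide_eq_true_eq]
      have hab := h.le
      constructor
      · rintro (⟨h1, h2⟩ | ⟨h1, h2⟩)
        · exact ⟨fun j => (h1 j).trans (Nat.lt_succ_self b), h2⟩
        · exact ⟨h1, fun h3 => h2 fun j => (h3 j).trans_le hab⟩
      · rintro ⟨h1, h2⟩
        by_cases h3 : ∀ j, r j < b
        · exact Or.inl ⟨h3, h2⟩
        · exact Or.inr ⟨h1, h3⟩
    · dsimp only
      rw [List.filter_append, hP, List.map_append]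
      congr 1
      rw [List.filter_eq_self.2]
      · rfl
      · intro c hc
        obtain ⟨r, -, rfl⟩ := List.mem_map.1 hc
        simp
  · intro c hc
    dsimp only at hc
    rcases List.mem_append.1 hc with hc | hc
    · exact h.side c hc
    · obtain ⟨r, -, rfl⟩ := List.mem_map.1 hc
      exact ⟨hk, le_rfl⟩

theorem InPhase.step_of_le {φ : ℝ} {x : Config A d} {s : PState d} {k a b : ℕ}
    (h : InPhase s k a b) (hab : a < b) (hJ : φ ≤ Jval x s.blocks s.k) :
    InPhase (step φ x s) (k + 1) (k * b / (k + 1)) (k * b / (k + 1)) := by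
  classical
  rw [step, if_pos hJ]
  refine ⟨by simp [h.k_eq], le_rfl, by simp [h.m_eq hab], fun h => absurd h (lt_irrefl _),
    ⟨[], List.nodup_nil, by simp [shell], ?_⟩, fun c hc => ?_⟩
  · rw [List.map_nil, List.filter_eq_nil_iff]
    intro c hc
    have := (h.side c hc).2
    simp; omega
  · have := h.side c hc
    omega

theorem inPhase_zero (φ : ℝ) (x : Config A d) : InPhase (iter φ x 0) 1 0 0 :=
  ⟨rfl, le_rfl, by simp [iter], fun h => absurd h (lt_irrefl _),
    ⟨[], List.nodup_nil, by simp [shell], rfl⟩,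
    fun c hc => by simp [iter] at hc⟩

/-- The number of blocks exceeds the number of repeated ones at most by the number of words. -/
theorem card_sub_rep_le (x : Config A d) (k : ℕ) (F : Finset (Site d)) :
    F.card ≤ rep x k F + A ^ k ^ d := by
  classical
  rw [rep, ← Finset.card_filter_add_card_filter_not (s := F) (p := fun r => ∃ r' ∈ F, r' ≠ r ∧
    wordAt x k (corner k r') = wordAt x k (corner k r))]
  refine Nat.add_le_add_left ?_ _
  refine (Finset.card_le_card_of_injOn (t := (Finset.univ : Finset (Word A d k)))
    (fun r => wordAt x k (corner k r)) (fun _ _ => Finset.mem_coe.2 (Finset.mem_univ _)) ?_).trans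
    (le_of_eq ?_)
  · intro r hr r' hr' hw
    rw [Finset.mem_coe, Finset.mem_filter] at hr hr'
    by_contra hne
    exact hr'.2 ⟨r, hr.1, hne, hw⟩
  · simp [Finset.card_univ]

/-- Every phase ends. -/
theorem InPhase.exists_end (hd : 1 ≤ d) {φ : ℝ} (hφ0 : 0 < φ) (hφ1 : φ < 1) {x : Config A d}
    {t k a : ℕ} (hk : 1 ≤ k) (h : InPhase (iter φ x t) k a a) :
    ∃ u, 0 < u ∧ InPhase (iter φ x (t + u)) k a (a + u) ∧
      InPhase (iter φ x (t + u + 1)) (k + 1) (k * (a + u) / (k + 1)) (k * (a + u) / (k + 1)) ∧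
      φ * (shell d a (a + u)).card ≤ rep x k (shell d a (a + u)) ∧
      (rep x k (shell d a (a + u - 1)) : ℝ) ≤ φ * (shell d a (a + u - 1)).card := by
  classical
  set J : ℕ → ℝ := fun u => Jval x (iter φ x (t + u)).blocks (iter φ x (t + u)).k with hJ
  have hphase : ∀ u, (∀ v < u, J v < φ) → InPhase (iter φ x (t + u)) k a (a + u) := by
    intro u
    induction u with
    | zero => exact fun _ => h
    | succ u ih =>
      intro hu
      exact (ih fun v hv => hu v (hv.trans (Nat.lt_succ_self u))).step_of_lt hk
        (hu u (Nat.lt_succ_self u))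
  have hex : ∃ u, φ ≤ J u := by
    by_contra! hcon
    obtain ⟨u, hu⟩ := exists_nat_gt ((A : ℝ) ^ k ^ d / (1 - φ))
    have h1 := hphase u fun v _ => hcon v
    have h2 := hcon u
    rw [hJ] at h2; dsimp only at h2
    rw [h1.Jval_eq x] at h2
    have h3 : (u : ℝ) ≤ (shell d a (a + u)).card := by
      rw [card_shell (Nat.le_add_right a u)]
      have h4 : a ^ d + u ^ d ≤ (a + u) ^ d := pow_add_pow_le (by omega) (by omega) (by omega)
      have h5 : u ≤ u ^ d := Nat.le_self_pow (by omega) u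
      exact_mod_cast (by omega : u ≤ (a + u) ^ d - a ^ d)
    have h1φ : 0 < 1 - φ := by linarith
    have hu0 : (0 : ℝ) < u := lt_of_le_of_lt (by positivity) hu
    rw [div_lt_iff₀ (by linarith)] at h2
    have h6 : ((shell d a (a + u)).card : ℝ) ≤ rep x k (shell d a (a + u)) + (A : ℝ) ^ k ^ d := by
      exact_mod_cast card_sub_rep_le x k (shell d a (a + u))
    rw [div_lt_iff₀ h1φ] at hu
    nlinarith
  have hend : InPhase (iter φ x (t + Nat.find hex)) k a (a + Nat.find hex) :=
    hphase _ fun v hv => not_le.1 (Nat.find_min hex hv)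
  have hfind := Nat.find_spec hex
  have hpos : 0 < Nat.find hex := by
    rw [Nat.pos_iff_ne_zero]
    intro h0
    rw [h0] at hfind
    have := h.Jval_eq x
    simp only [shell, sdiff_self, Finset.bot_eq_empty, Finset.card_empty, Nat.cast_zero,
      div_zero] at this
    rw [hJ] at hfind
    dsimp only [add_zero] at hfind
    rw [add_zero, this] at hfind
    linarith
  refine ⟨Nat.find hex, hpos, hend, hend.step_of_le (by omega) hfind, ?_, ?_⟩
  · have hf := hfind
    change φ ≤ Jval x (iter φ x (t + Nat.find hex)).blocks (iter φ x (t + Nat.find hex)).k at hf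
    rw [hend.Jval_eq x] at hf
    rcases Nat.eq_zero_or_pos (shell d a (a + Nat.find hex)).card with h0 | h0
    · rw [h0]; simp
    · exact (le_div_iff₀ (by exact_mod_cast h0)).1 hf
  · have h1 : J (Nat.find hex - 1) < φ := not_le.1 (Nat.find_min hex (by omega))
    have h2 := hphase (Nat.find hex - 1) fun v hv => not_le.1 (Nat.find_min hex (by omega))
    change Jval x (iter φ x (t + (Nat.find hex - 1))).blocks
      (iter φ x (t + (Nat.find hex - 1))).k < φ at h1
    rw [h2.Jval_eq x] at h1
    rw [Nat.add_sub_assoc hpos]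
    rcases Nat.eq_zero_or_pos (shell d a (a + (Nat.find hex - 1))).card with h0 | h0
    · rw [h0]
      have : rep x k (shell d a (a + (Nat.find hex - 1))) ≤ 0 := h0 ▸ Finset.card_filter_le _ _
      simpa using this
    · exact ((div_lt_iff₀ (by exact_mod_cast h0)).1 h1).le

theorem step_cases (φ : ℝ) (x : Config A d) (s : PState d) :
    ((step φ x s).k = s.k + 1 ∧ (step φ x s).blocks = s.blocks) ∨
      ((step φ x s).k = s.k ∧ ∃ P, (step φ x s).blocks = s.blocks ++ P ∧ ∀ b ∈ P, b.2 = s.k) := by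
  classical
  rw [step]
  split_ifs
  · exact Or.inl ⟨rfl, rfl⟩
  · refine Or.inr ⟨rfl, _, rfl, fun b hb => ?_⟩
    obtain ⟨r, -, rfl⟩ := List.mem_map.1 hb
    rfl

theorem blocks_mono {φ : ℝ} {x : Config A d} {t t' : ℕ} (h : t ≤ t') {b : Site d × ℕ}
    (hb : b ∈ (iter φ x t).blocks) : b ∈ (iter φ x t').blocks := by
  induction t', h using Nat.le_induction with
  | base => exact hb
  | succ t' _ ih =>
    rcases step_cases φ x (iter φ x t') with ⟨-, h⟩ | ⟨-, P, h, -⟩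
    · rw [iter, h]; exact ih
    · rw [iter, h]; exact List.mem_append_left _ ih

theorem k_mono {φ : ℝ} {x : Config A d} {t t' : ℕ} (h : t ≤ t') :
    (iter φ x t).k ≤ (iter φ x t').k := by
  induction t', h using Nat.le_induction with
  | base => exact le_rfl
  | succ t' _ ih =>
    rw [iter]
    rcases step_cases φ x (iter φ x t') with ⟨h, -⟩ | ⟨h, -⟩ <;> omega

theorem mem_blocks_of_side_lt {φ : ℝ} {x : Config A d} {t t' : ℕ} (h : t ≤ t') {b : Site d × ℕ}
    (hk : b.2 < (iter φ x t).k) (hb : b ∈ (iter φ x t').blocks) : b ∈ (iter φ x t).blocks := by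
  induction t', h using Nat.le_induction with
  | base => exact hb
  | succ t' ht ih =>
    rw [iter] at hb
    rcases step_cases φ x (iter φ x t') with ⟨-, h⟩ | ⟨-, P, h, hP⟩
    · exact ih (h ▸ hb)
    · rw [h] at hb
      rcases List.mem_append.1 hb with hb | hb
      · exact ih hb
      · have h1 := hP b hb
        have h2 := k_mono (φ := φ) (x := x) ht
        omega

/-- The `k`-blocks of the parsing of `x` are those between `Λ_{k q₀(k)}` and `Λ_{k q₁(k)}`. -/
structure Scales (φ : ℝ) (x : Config A d) (q₀ q₁ : ℕ → ℕ) : Prop where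
  lt : ∀ k ≥ 1, q₀ k < q₁ k
  succ : ∀ k ≥ 1, q₀ (k + 1) = k * q₁ k / (k + 1)
  blocks : ∀ k ≥ 1, ∀ c, (∃ t, (c, k) ∈ (iter φ x t).blocks) ↔
    ∃ r ∈ shell d (q₀ k) (q₁ k), corner k r = c
  pos : ∀ t, ∀ b ∈ (iter φ x t).blocks, 1 ≤ b.2
  rep_ge : ∀ k ≥ 1, φ * (shell d (q₀ k) (q₁ k)).card ≤ rep x k (shell d (q₀ k) (q₁ k))
  rep_le : ∀ k ≥ 1, (rep x k (shell d (q₀ k) (q₁ k - 1)) : ℝ) ≤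
    φ * (shell d (q₀ k) (q₁ k - 1)).card

theorem InPhase.mem_blocks_iff {s : PState d} {k a b : ℕ} (h : InPhase s k a b) (c : Site d) :
    (c, k) ∈ s.blocks ↔ ∃ r ∈ shell d a b, corner k r = c := by
  obtain ⟨l, -, hl, hP⟩ := h.blocks
  have : (c, k) ∈ s.blocks ↔ (c, k) ∈ s.blocks.filter fun c => decide (c.2 = k) := by simp
  rw [this, hP, ← hl]
  simp

theorem exists_scales (hd : 1 ≤ d) {φ : ℝ} (hφ0 : 0 < φ) (hφ1 : φ < 1) (x : Config A d) :
    ∃ q₀ q₁, Scales φ x q₀ q₁ := by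
  have hend : ∀ t k a, ∃ u, 1 ≤ k → InPhase (iter φ x t) k a a →
      0 < u ∧ InPhase (iter φ x (t + u)) k a (a + u) ∧
      InPhase (iter φ x (t + u + 1)) (k + 1) (k * (a + u) / (k + 1)) (k * (a + u) / (k + 1)) ∧
      φ * (shell d a (a + u)).card ≤ rep x k (shell d a (a + u)) ∧
      (rep x k (shell d a (a + u - 1)) : ℝ) ≤ φ * (shell d a (a + u - 1)).card :=
    fun t k a => by
      by_cases h : 1 ≤ k ∧ InPhase (iter φ x t) k a a
      · obtain ⟨u, hu⟩ := h.2.exists_end hd hφ0 hφ1 h.1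
        exact ⟨u, fun _ _ => hu⟩
      · exact ⟨0, fun h1 h2 => absurd ⟨h1, h2⟩ h⟩
  choose u hu using hend
  let st : ℕ → ℕ × ℕ := fun i => Nat.rec (0, 0) (fun i p =>
    (p.1 + u p.1 (i + 1) p.2 + 1, (i + 1) * (p.2 + u p.1 (i + 1) p.2) / (i + 1 + 1))) i
  have hst : ∀ i, InPhase (iter φ x (st i).1) (i + 1) (st i).2 (st i).2 := by
    intro i
    induction i with
    | zero => exact inPhase_zero φ x
    | succ i ih => exact (hu _ _ _ (by omega) ih).2.2.1
  have hu' := fun i => hu _ _ _ (by omega) (hst i)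
  refine ⟨fun k => (st (k - 1)).2, fun k => (st (k - 1)).2 + u (st (k - 1)).1 k (st (k - 1)).2,
    ?_, ?_, ?_, ?_, ?_, ?_⟩
  · intro k hk
    obtain ⟨i, rfl⟩ := Nat.exists_eq_add_of_le' hk
    have := (hu' i).1
    simpa using this
  · intro k hk
    obtain ⟨i, rfl⟩ := Nat.exists_eq_add_of_le' hk
    rfl
  · intro k hk c
    obtain ⟨i, rfl⟩ := Nat.exists_eq_add_of_le' hk
    simp only [Nat.add_sub_cancel]
    rw [← (hu' i).2.1.mem_blocks_iff]
    constructor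
    · rintro ⟨t, ht⟩
      set e := (st i).1 + u (st i).1 (i + 1) (st i).2 with he
      rcases le_or_gt t e with hte | hte
      · exact blocks_mono hte ht
      · have hk1 : (iter φ x (e + 1)).k = i + 1 + 1 := (hu' i).2.2.1.k_eq
        have h1 := mem_blocks_of_side_lt (Nat.succ_le_of_lt hte) (by rw [hk1]; simp) ht
        have h2 : (iter φ x e).k = i + 1 := (hu' i).2.1.k_eq
        rcases step_cases φ x (iter φ x e) with ⟨-, h⟩ | ⟨h, -⟩
        · rwa [Nat.succ_eq_add_one, iter, h] at h1
        · rw [iter] at hk1; omega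
    · exact fun h => ⟨_, h⟩
  · intro t b hb
    by_contra hlt
    have h0 : (iter φ x 0).k = 1 := rfl
    have := mem_blocks_of_side_lt (Nat.zero_le t) (by rw [h0]; omega) hb
    simp [iter] at this
  · intro k hk
    obtain ⟨i, rfl⟩ := Nat.exists_eq_add_of_le' hk
    exact (hu' i).2.2.2.1
  · intro k hk
    obtain ⟨i, rfl⟩ := Nat.exists_eq_add_of_le' hk
    exact (hu' i).2.2.2.2

theorem mem_cube_corner {k : ℕ} (hk : 1 ≤ k) {r i : Site d} :
    i ∈ cube (corner k r) k ↔ ∀ j, i j / k = r j := by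
  rw [mem_cube]
  refine forall_congr' fun j => ?_
  rw [corner, Nat.div_eq_iff (by omega), mul_comm]
  constructor <;> intro h <;> omega

/-- The largest coordinate of a site. -/
def radius (i : Site d) : ℕ := Finset.univ.sup i

theorem radius_mem_Ico {a b : ℕ} {i : Site d} (hi : i ∈ shell d a b) :
    radius i ∈ Set.Ico a b := by
  obtain ⟨h1, h2⟩ := mem_shell.1 hi
  push Not at h2
  obtain ⟨j, hj⟩ := h2
  refine ⟨hj.trans (Finset.le_sup (f := i) (Finset.mem_univ j)), ?_⟩
  exact (Finset.sup_lt_iff (by have := h1 j; simp; omega)).2 fun j _ => h1 j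

theorem mem_shell_of_radius (hd : 1 ≤ d) {a b : ℕ} {i : Site d} (hi : radius i ∈ Set.Ico a b) :
    i ∈ shell d a b := by
  refine mem_shell.2 ⟨fun j => lt_of_le_of_lt (Finset.le_sup (f := i) (Finset.mem_univ j)) hi.2,
    fun h => ?_⟩
  rcases Nat.eq_zero_or_pos a with rfl | ha
  · exact absurd (h ⟨0, hd⟩) (Nat.not_lt_zero _)
  · exact absurd hi.1 (not_le.2 ((Finset.sup_lt_iff (by simpa using ha)).2 fun j _ => h j))

theorem mem_shell_of_mem_cube_corner {k a b : ℕ} (hk : 1 ≤ k) {r i : Site d}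
    (hr : r ∈ shell d a b) (hi : i ∈ cube (corner k r) k) : i ∈ shell d (k * a) (k * b) := by
  rw [mem_cube_corner hk] at hi
  rw [mem_shell] at hr ⊢
  refine ⟨fun j => ?_, fun h => hr.2 fun j => ?_⟩
  · have := hr.1 j
    rw [← hi j, Nat.div_lt_iff_lt_mul (by omega)] at this
    rwa [mul_comm]
  · rw [← hi j, Nat.div_lt_iff_lt_mul (by omega), mul_comm]
    exact h j

/-- The blocks of sides `k ∈ u` with block coordinates in `F k`. -/
def blockFam (u : Finset ℕ) (F : ℕ → Finset (Site d)) : Finset (Site d × ℕ) :=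
  u.biUnion fun k => (F k).image fun r => (corner k r, k)

theorem mem_blockFam {u : Finset ℕ} {F : ℕ → Finset (Site d)} {b : Site d × ℕ} :
    b ∈ blockFam u F ↔ ∃ k ∈ u, ∃ r ∈ F k, (corner k r, k) = b := by
  simp [blockFam]

theorem corner_injective {k : ℕ} (hk : 1 ≤ k) :
    Function.Injective (corner k : Site d → Site d) := fun r r' h => by
  funext j
  exact Nat.eq_of_mul_eq_mul_left hk (congrFun h j)

theorem card_blockFam_filter {u : Finset ℕ} {F : ℕ → Finset (Site d)} {k : ℕ} :
    ((blockFam u F).filter fun b => b.2 = k).card ≤ if k ∈ u then (F k).card else 0 := by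
  classical
  split_ifs with hk
  · refine le_trans (Finset.card_le_card (t := (F k).image fun r => (corner k r, k)) ?_)
      Finset.card_image_le
    intro b hb
    obtain ⟨hb', hbk⟩ := Finset.mem_filter.1 hb
    obtain ⟨k', -, r, hr, rfl⟩ := mem_blockFam.1 hb'
    obtain rfl : k' = k := hbk
    exact Finset.mem_image_of_mem _ hr
  · rw [Nat.le_zero, Finset.card_eq_zero, Finset.filter_eq_empty_iff]
    rintro b hb rfl
    obtain ⟨k, hk', r, hr, rfl⟩ := mem_blockFam.1 hb
    exact hk hk'

theorem vol_blockFam {u : Finset ℕ} {F : ℕ → Finset (Site d)} (hu : ∀ k ∈ u, 1 ≤ k) :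
    vol (blockFam u F) = ∑ k ∈ u, (F k).card * k ^ d := by
  rw [vol, blockFam, Finset.sum_biUnion]
  · refine Finset.sum_congr rfl fun k hk => ?_
    rw [Finset.sum_image fun r _ r' _ h => corner_injective (hu k hk) (Prod.mk.inj h).1]
    simp only [Finset.sum_const, smul_eq_mul]
  · intro k _ k' _ hkk
    rw [Function.onFun, Finset.disjoint_left]
    rintro b hb hb'
    obtain ⟨r, -, rfl⟩ := Finset.mem_image.1 hb
    obtain ⟨r', -, h⟩ := Finset.mem_image.1 hb'
    exact hkk (Prod.mk.inj h).2.symm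

section
variable {u : Finset ℕ} {a b : ℕ → ℕ}

theorem eq_of_mem_cube_corner (hu : ∀ k ∈ u, 1 ≤ k)
    (hdis : (u : Set ℕ).PairwiseDisjoint fun k => Set.Ico (k * a k) (k * b k)) {k k' : ℕ}
    (hk : k ∈ u) (hk' : k' ∈ u) {r r' i : Site d} (hr : r ∈ shell d (a k) (b k))
    (hr' : r' ∈ shell d (a k') (b k')) (hi : i ∈ cube (corner k r) k)
    (hi' : i ∈ cube (corner k' r') k') : k = k' ∧ r = r' := by
  have h1 := radius_mem_Ico (mem_shell_of_mem_cube_corner (hu k hk) hr hi)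
  have h2 := radius_mem_Ico (mem_shell_of_mem_cube_corner (hu k' hk') hr' hi')
  have hkk : k = k' := by
    by_contra hne
    exact Set.disjoint_left.1 (hdis hk hk' hne) h1 h2
  subst hkk
  rw [mem_cube_corner (hu k hk)] at hi hi'
  exact ⟨rfl, funext fun j => (hi j).symm.trans (hi' j)⟩

theorem cubeFam_blockFam {n : ℕ} (hu : ∀ k ∈ u, 1 ≤ k)
    (hdis : (u : Set ℕ).PairwiseDisjoint fun k => Set.Ico (k * a k) (k * b k))
    (hn : ∀ k ∈ u, k * b k ≤ n) {F : ℕ → Finset (Site d)}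
    (hF : ∀ k ∈ u, F k ⊆ shell d (a k) (b k)) : CubeFam (blockFam u F) n := by
  refine ⟨fun c hc i hi => ?_, fun c hc c' hc' hne => ?_⟩
  · obtain ⟨k, hk, r, hr, rfl⟩ := mem_blockFam.1 hc
    refine mem_cube_zero.2 fun j => ?_
    exact ((mem_shell.1 (mem_shell_of_mem_cube_corner (hu k hk) (hF k hk hr) hi)).1 j).trans_le
      (hn k hk)
  · obtain ⟨k, hk, r, hr, rfl⟩ := mem_blockFam.1 (Finset.mem_coe.1 hc)
    obtain ⟨k', hk', r', hr', rfl⟩ := mem_blockFam.1 (Finset.mem_coe.1 hc')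
    rw [Function.onFun, Finset.disjoint_left]
    intro i hi hi'
    obtain ⟨rfl, rfl⟩ := eq_of_mem_cube_corner hu hdis hk hk' (hF k hk hr) (hF k' hk' hr') hi hi'
    exact hne rfl

theorem disjoint_cover_blockFam (hu : ∀ k ∈ u, 1 ≤ k)
    (hdis : (u : Set ℕ).PairwiseDisjoint fun k => Set.Ico (k * a k) (k * b k))
    {F F' : ℕ → Finset (Site d)} (hF : ∀ k ∈ u, F k ⊆ shell d (a k) (b k))
    (hF' : ∀ k ∈ u, F' k ⊆ shell d (a k) (b k)) (hFF : ∀ k ∈ u, Disjoint (F k) (F' k)) :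
    Disjoint (cover (blockFam u F)) (cover (blockFam u F')) := by
  rw [Finset.disjoint_left]
  intro i hi hi'
  obtain ⟨c, hc, hi⟩ := mem_cover.1 hi
  obtain ⟨c', hc', hi'⟩ := mem_cover.1 hi'
  obtain ⟨k, hk, r, hr, rfl⟩ := mem_blockFam.1 hc
  obtain ⟨k', hk', r', hr', rfl⟩ := mem_blockFam.1 hc'
  obtain ⟨rfl, rfl⟩ := eq_of_mem_cube_corner hu hdis hk hk' (hF k hk hr) (hF' k' hk' hr') hi hi'
  exact Finset.disjoint_left.1 (hFF k hk) hr hr'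

end

theorem mul_pow_pred_le_pow_sub_pow {s m : ℕ} (hd : 1 ≤ d) (h : s ≤ m) :
    (m - s) * m ^ (d - 1) ≤ m ^ d - s ^ d := by
  obtain ⟨e, rfl⟩ := Nat.exists_eq_add_of_le' hd
  rw [Nat.add_sub_cancel]
  refine Nat.le_sub_of_add_le ?_
  have h1 : s ^ (e + 1) ≤ s * m ^ e := by
    rw [pow_succ, mul_comm]; exact Nat.mul_le_mul_left _ (Nat.pow_le_pow_left h e)
  calc (m - s) * m ^ e + s ^ (e + 1) ≤ (m - s) * m ^ e + s * m ^ e := Nat.add_le_add_left h1 _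
    _ = m ^ (e + 1) := by rw [← add_mul, Nat.sub_add_cancel h, pow_succ, mul_comm]

theorem pow_sub_pow_le_mul_pow_pred (d : ℕ) {s m : ℕ} (h : s ≤ m) :
    m ^ d - s ^ d ≤ d * ((m - s) * m ^ (d - 1)) := by
  rw [Nat.sub_le_iff_le_add]
  induction d with
  | zero => simp
  | succ e ih =>
    rw [Nat.add_sub_cancel]
    rcases e with _ | e
    · simp; omega
    · rw [Nat.add_sub_cancel] at ih
      obtain ⟨l, rfl⟩ := Nat.exists_eq_add_of_le h
      rw [Nat.add_sub_cancel_left] at ih ⊢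
      calc (s + l) ^ (e + 1 + 1) = (s + l) ^ (e + 1) * s + l * (s + l) ^ (e + 1) := by ring
        _ ≤ ((e + 1) * (l * (s + l) ^ e) + s ^ (e + 1)) * s + l * (s + l) ^ (e + 1) := by gcongr
        _ ≤ (e + 1) * (l * (s + l) ^ e) * (s + l) + s ^ (e + 1) * s + l * (s + l) ^ (e + 1) := by
            rw [add_mul]; gcongr
        _ = _ := by ring

/-- Vitali covering for shells. -/
theorem exists_disjoint_shells (hd : 1 ≤ d) (K : Finset ℕ) {s m : ℕ → ℕ}
    (hsm : ∀ k ∈ K, s k < m k) :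
    ∃ u ⊆ K, (u : Set ℕ).PairwiseDisjoint (fun k => Set.Ico (s k) (m k)) ∧
      (K.biUnion fun k => shell d (s k) (m k)).card ≤
        5 * d * 3 ^ d * ∑ k ∈ u, (shell d (s k) (m k)).card := by
  classical
  obtain ⟨u, huK, hdis, hcov⟩ := Vitali.exists_disjoint_subfamily_covering_enlargement
    (fun k : ℕ => Set.Ico (s k) (m k)) (K : Set ℕ) (fun k => ((m k - s k : ℕ) : ℝ))
    2 (by norm_num) (fun _ _ => Nat.cast_nonneg _) ((K.sup fun k => m k - s k : ℕ) : ℝ)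
    (fun k hk => Nat.cast_le.2 (Finset.le_sup (f := fun k => m k - s k) hk))
    (fun k hk => ⟨s k, le_rfl, hsm k hk⟩)
  lift u to Finset ℕ using K.finite_toSet.subset huK
  have huK' : u ⊆ K := by exact_mod_cast huK
  refine ⟨u, huK', hdis, ?_⟩
  set L : ℕ → ℕ := fun k => m k - s k
  have hsub : (K.biUnion fun k => shell d (s k) (m k)) ⊆
      u.biUnion fun k => shell d (s k - 2 * L k) (m k + 2 * L k) := by
    intro i hi
    obtain ⟨k, hk, hi⟩ := Finset.mem_biUnion.1 hi
    obtain ⟨b, hb, ⟨t, ht, ht'⟩, hle⟩ := hcov k hk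
    refine Finset.mem_biUnion.2 ⟨b, hb, mem_shell_of_radius hd ?_⟩
    have h1 := radius_mem_Ico hi
    have h2 : m k - s k ≤ 2 * L b := by exact_mod_cast hle
    rw [Set.mem_Ico] at h1 ht ht' ⊢
    omega
  refine (Finset.card_le_card hsub).trans (Finset.card_biUnion_le.trans ?_)
  rw [Finset.mul_sum]
  refine Finset.sum_le_sum fun k hk => ?_
  have hlt := hsm k (huK' hk)
  rw [card_shell (by omega), card_shell hlt.le]
  have h1 : s k - 2 * L k ≤ m k + 2 * L k := by omega
  have h2 : L k = m k - s k := rfl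
  calc (m k + 2 * L k) ^ d - (s k - 2 * L k) ^ d
      ≤ d * ((m k + 2 * L k - (s k - 2 * L k)) * (m k + 2 * L k) ^ (d - 1)) :=
        pow_sub_pow_le_mul_pow_pred d h1
    _ ≤ d * (5 * L k * (3 * m k) ^ (d - 1)) := by
        gcongr <;> omega
    _ = 5 * d * 3 ^ (d - 1) * ((m k - s k) * m k ^ (d - 1)) := by rw [mul_pow]; ring
    _ ≤ 5 * d * 3 ^ d * (m k ^ d - s k ^ d) := by
        gcongr
        · norm_num
        · omega
        · exact mul_pow_pred_le_pow_sub_pow hd hlt.le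

theorem exists_representatives (x : Config A d) (k : ℕ) (F : Finset (Site d)) :
    ∃ R ⊆ F, R.card = (F.image fun r => wordAt x k (corner k r)).card ∧
      (∀ r ∈ F, ∃ r' ∈ R, wordAt x k (corner k r') = wordAt x k (corner k r)) ∧
      rep x k F ≤ 2 * (F \ R).card := by
  classical
  set w : Site d → Word A d k := fun r => wordAt x k (corner k r)
  obtain ⟨R, hRF, hinj, hR⟩ : ∃ R ⊆ F, Set.InjOn w R ∧ R.image w = F.image w := by
    obtain ⟨u, hu, h⟩ := Set.SurjOn.exists_bijOn_subset (Set.surjOn_image w (F : Set (Site d)))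
    lift u to Finset (Site d) using F.finite_toSet.subset hu
    exact ⟨u, by exact_mod_cast hu, h.injOn, by exact_mod_cast h.image_eq⟩
  refine ⟨R, hRF, ?_, ?_, ?_⟩
  · rw [← hR, Finset.card_image_of_injOn hinj]
  · intro r hr
    have : w r ∈ R.image w := hR ▸ Finset.mem_image_of_mem w hr
    exact Finset.mem_image.1 this
  · set P : Site d → Prop := fun r => ∃ r' ∈ F, r' ≠ r ∧ w r' = w r
    have h1 : ((R.filter P).card) ≤ (F \ R).card := by
      refine Finset.card_le_card_of_forall_subsingleton (fun r r' => w r' = w r) ?_ ?_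
      · intro r hr
        obtain ⟨hrR, r', hr', hne, hw⟩ := Finset.mem_filter.1 hr
        exact ⟨r', Finset.mem_sdiff.2 ⟨hr', fun h => hne (hinj h hrR hw)⟩, hw⟩
      · intro r' _ a ha b hb
        exact hinj (Finset.mem_filter.1 ha.1).1 (Finset.mem_filter.1 hb.1).1 (ha.2.symm.trans hb.2)
    calc rep x k F = (F.filter P).card := by rw [rep]
      _ ≤ (R.filter P ∪ F \ R).card := by
          refine Finset.card_le_card fun r hr => ?_
          obtain ⟨hr, hP⟩ := Finset.mem_filter.1 hr
          by_cases h : r ∈ R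
          · exact Finset.mem_union_left _ (Finset.mem_filter.2 ⟨h, hP⟩)
          · exact Finset.mem_union_right _ (Finset.mem_sdiff.2 ⟨hr, h⟩)
      _ ≤ (R.filter P).card + (F \ R).card := Finset.card_union_le _ _
      _ ≤ 2 * (F \ R).card := by omega

/-- The blocks of `F` whose words avoid a finite set `T` of words. -/
theorem card_sub_rep_le_card_add (x : Config A d) (k : ℕ) (F : Finset (Site d))
    (T : Finset (Word A d k)) :
    F.card ≤ rep x k F + T.card + (F.filter fun r => wordAt x k (corner k r) ∉ T).card := by
  classical
  set w : Site d → Word A d k := fun r => wordAt x k (corner k r)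
  set P : Site d → Prop := fun r => ∃ r' ∈ F, r' ≠ r ∧ w r' = w r
  have h1 : (F.filter fun r => ¬ P r ∧ w r ∈ T).card ≤ T.card := by
    refine Finset.card_le_card_of_injOn w (fun r hr => ?_) fun r hr r' hr' h => ?_
    · exact (Finset.mem_filter.1 hr).2.2
    · by_contra hne
      exact (Finset.mem_filter.1 hr').2.1 ⟨r, (Finset.mem_filter.1 hr).1, hne, h⟩
  have h2 : F ⊆ F.filter P ∪ (F.filter fun r => ¬ P r ∧ w r ∈ T) ∪ F.filter fun r => w r ∉ T := by
    intro r hr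
    simp only [Finset.mem_union, Finset.mem_filter]
    tauto
  calc F.card ≤ _ := Finset.card_le_card h2
    _ ≤ (F.filter P).card + (F.filter fun r => ¬ P r ∧ w r ∈ T).card +
          (F.filter fun r => w r ∉ T).card :=
        (Finset.card_union_le _ _).trans (Nat.add_le_add_right (Finset.card_union_le _ _) _)
    _ ≤ _ := by
        refine Nat.add_le_add_right (Nat.add_le_add (le_of_eq ?_) h1) _
        rw [rep]

namespace Scales
variable {φ : ℝ} {x : Config A d} {q₀ q₁ : ℕ → ℕ}

theorem le_succ (h : Scales φ x q₀ q₁) {k : ℕ} (hk : 1 ≤ k) :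
    k * q₁ k ≤ (k + 1) * q₀ (k + 1) + k := by
  rw [h.succ k hk]
  have := Nat.div_add_mod (k * q₁ k) (k + 1)
  have := Nat.mod_lt (k * q₁ k) (show 0 < k + 1 by omega)
  omega

theorem add_le_add (h : Scales φ x q₀ q₁) {k k' : ℕ} (hk : 1 ≤ k) (hkk : k ≤ k') :
    k * q₁ k + k' ≤ k' * q₁ k' + k := by
  induction k', hkk using Nat.le_induction with
  | base => exact le_rfl
  | succ j hj ih =>
    have h1 := h.le_succ (hk.trans hj)
    have h2 := Nat.mul_le_mul_left (j + 1) (h.lt (j + 1) (by omega))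
    rw [Nat.mul_succ] at h2
    omega

theorem le_add (h : Scales φ x q₀ q₁) {k k' : ℕ} (hk : 1 ≤ k) (hkk : k < k') :
    k * q₁ k ≤ k' * q₀ k' + k := by
  obtain ⟨j, rfl⟩ : ∃ j, k' = j + 1 := ⟨k' - 1, by omega⟩
  have h1 := h.le_succ (k := j) (by omega)
  have h2 := h.add_le_add hk (Nat.lt_succ_iff.1 hkk)
  omega

theorem pairwiseDisjoint (h : Scales φ x q₀ q₁) {u : Set ℕ} (hu : ∀ k ∈ u, 1 ≤ k) :
    u.PairwiseDisjoint fun k => Set.Ico (k * q₀ k) (k * (q₁ k - 1)) := by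
  have key : ∀ k k', 1 ≤ k → k < k' →
      Disjoint (Set.Ico (k * q₀ k) (k * (q₁ k - 1))) (Set.Ico (k' * q₀ k') (k' * (q₁ k' - 1))) := by
    intro k k' hk hkk
    have h1 := h.le_add hk hkk
    have h2 : k * (q₁ k - 1) ≤ k' * q₀ k' := by
      rw [Nat.mul_sub, mul_one]; omega
    exact Set.disjoint_left.2 fun i hi hi' => by
      have := hi.2; have := hi'.1; omega
  intro k hk k' hk' hne
  rcases lt_or_gt_of_ne hne with hlt | hlt
  · exact key k k' (hu k hk) hlt
  · exact (key k' k (hu k' hk') hlt).symm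

theorem le_end (h : Scales φ x q₀ q₁) {k : ℕ} (hk : 1 ≤ k) : k ≤ k * q₁ k :=
  Nat.le_mul_of_pos_right k ((Nat.zero_le _).trans_lt (h.lt k hk))

theorem Lregion_subset (h : Scales φ x q₀ q₁) {k : ℕ} (hk : 1 ≤ k) :
    Lregion φ x k ⊆ shell d (k * q₀ k) (k * q₁ k) := by
  rintro i ⟨t, ⟨c, l⟩, hb, hl, hi⟩
  obtain rfl : l = k := hl
  obtain ⟨r, hr, rfl⟩ := (h.blocks l hk c).1 ⟨t, hb⟩
  exact mem_shell_of_mem_cube_corner hk hr (mem_cube.2 hi)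

theorem Lregion_zero (h : Scales φ x q₀ q₁) : Lregion φ x 0 = ∅ := by
  refine Set.eq_empty_of_forall_notMem ?_
  rintro i ⟨t, b, hb, h0, -⟩
  have := h.pos t b hb
  omega

theorem Mk_eq (h : Scales φ x q₀ q₁) {k : ℕ} (hk : 1 ≤ k) :
    Mk φ x k = ((shell d (q₀ k) (q₁ k)).image fun r => wordAt x k (corner k r)).card := by
  rw [Mk, ← Set.ncard_coe_finset]
  congr 1
  ext w
  simp only [Set.mem_ofPred_eq, Finset.coe_image, Set.mem_image, Finset.mem_coe]
  constructor
  · rintro ⟨t, ⟨c, l⟩, hb, hl, hw⟩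
    obtain rfl : l = k := hl
    obtain ⟨r, hr, rfl⟩ := (h.blocks l hk c).1 ⟨t, hb⟩
    exact ⟨r, hr, hw⟩
  · rintro ⟨r, hr, hw⟩
    obtain ⟨t, ht⟩ := (h.blocks k hk _).2 ⟨r, hr, rfl⟩
    exact ⟨t, _, ht, rfl, hw⟩

theorem Mk_le (h : Scales φ x q₀ q₁) {k : ℕ} (hk : 1 ≤ k) :
    Mk φ x k ≤ (shell d (q₀ k) (q₁ k)).card :=
  h.Mk_eq hk ▸ Finset.card_image_le

end Scales

theorem finite_cubeSet (d n : ℕ) : (cubeSet d n).Finite := by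
  rw [← coe_cube_zero]; exact Finset.finite_toSet _

/-- Eventually `S` has density at most `ε` in the cubes `Λ_n`. -/
def DensityLE (S : Set (Site d)) (ε : ℝ) : Prop :=
  ∀ᶠ n : ℕ in atTop, (Set.ncard (S ∩ cubeSet d n) : ℝ) ≤ ε * (n : ℝ) ^ d

theorem DensityLE.mono {S S' : Set (Site d)} {ε : ℝ} (h : DensityLE S' ε) (hS : S ⊆ S') :
    DensityLE S ε := by
  filter_upwards [h] with n hn
  exact le_trans (Nat.cast_le.2 (Set.ncard_le_ncard (Set.inter_subset_inter_left _ hS)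
    ((finite_cubeSet d n).inter_of_right _))) hn

theorem DensityLE.union {S S' : Set (Site d)} {ε ε' : ℝ} (h : DensityLE S ε)
    (h' : DensityLE S' ε') : DensityLE (S ∪ S') (ε + ε') := by
  filter_upwards [h, h'] with n hn hn'
  rw [Set.union_inter_distrib_right, add_mul]
  refine le_trans (Nat.cast_le.2 (Set.ncard_union_le _ _)) ?_
  rw [Nat.cast_add]
  exact add_le_add hn hn'

theorem densityLE_of_finite (hd : 1 ≤ d) {S : Set (Site d)} (hS : S.Finite) {ε : ℝ} (hε : 0 < ε) :
    DensityLE S ε := by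
  have h : Tendsto (fun n : ℕ => ε * (n : ℝ) ^ d) atTop atTop :=
    ((tendsto_pow_atTop (by omega)).comp tendsto_natCast_atTop_atTop).const_mul_atTop hε
  filter_upwards [h.eventually_ge_atTop (S.ncard : ℝ)] with n hn
  exact le_trans (Nat.cast_le.2 (Set.ncard_le_ncard Set.inter_subset_left hS)) hn

theorem upperDensity_eq_zero {S : Set (Site d)} (h : ∀ ε > 0, DensityLE S ε) :
    upperDensity S = 0 := by
  have : Tendsto (fun n : ℕ => (Set.ncard (S ∩ cubeSet d n) : ℝ) / (n : ℝ) ^ d) atTop (𝓝 0) := by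
    refine Metric.tendsto_nhds.2 fun ε hε => ?_
    filter_upwards [h (ε / 2) (half_pos hε), eventually_gt_atTop 0] with n hn hn0
    rw [Real.dist_eq, sub_zero, abs_of_nonneg (by positivity)]
    exact ((div_le_iff₀ (by positivity)).2 hn).trans_lt (half_lt_self hε)
  exact this.limsup_eq

/-- A density bound for finite unions of shells inside the cubes `Λ_n` also controls the shells
that stick out of `Λ_n`. -/
theorem densityLE_iUnion_shell {K : Set ℕ} {s e : ℕ → ℕ} {ε : ℝ} (hε : 0 ≤ ε)
    (hK : ∀ k ∈ K, s k ≤ e k ∧ k ≤ e k)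
    (H : ∀ᶠ n : ℕ in atTop, ∀ u : Finset ℕ, (u : Set ℕ) ⊆ K → (∀ k ∈ u, e k ≤ n) →
      ((u.biUnion fun k => shell d (s k) (e k)).card : ℝ) ≤ ε * (n : ℝ) ^ d) :
    DensityLE (⋃ k ∈ K, (shell d (s k) (e k) : Set (Site d))) (2 * ε) := by
  classical
  obtain ⟨n₀, H⟩ := eventually_atTop.1 H
  filter_upwards [eventually_ge_atTop n₀] with n hn
  set u : Finset ℕ := (Finset.range (n + 1)).filter fun k => k ∈ K ∧ e k ≤ n
  have hu := H n hn u (fun k hk => (Finset.mem_filter.1 hk).2.1)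
    (fun k hk => (Finset.mem_filter.1 hk).2.2)
  obtain ⟨F, hF, hsub⟩ : ∃ F : Finset (Site d), (F.card : ℝ) ≤ ε * (n : ℝ) ^ d ∧
      (⋃ k ∈ K, (shell d (s k) (e k) : Set (Site d))) ∩ cubeSet d n ⊆
        ↑((u.biUnion fun k => shell d (s k) (e k)) ∪ F) := by
    have mem_u : ∀ k ∈ K, e k ≤ n → k ∈ u := fun k hk he =>
      Finset.mem_filter.2 ⟨Finset.mem_range.2 (by have := (hK k hk).2; omega), hk, he⟩
    by_cases hex : ∃ k, k ∈ K ∧ n < e k ∧ s k < n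
    · obtain ⟨j, ⟨hj, hej, hsj⟩, hmin⟩ := exists_minimalFor_of_wellFoundedLT _ s hex
      refine ⟨shell d (s j) n, ?_, ?_⟩
      · rw [card_shell hsj.le, Nat.cast_sub (Nat.pow_le_pow_left hsj.le d)]
        push_cast
        have h1 := H (e j) (by omega) {j} (by simpa using hj) (by simp)
        rw [Finset.singleton_biUnion, card_shell (hK j hj).1,
          Nat.cast_sub (Nat.pow_le_pow_left (hK j hj).1 d)] at h1
        push_cast at h1
        have h2 : (n : ℝ) ^ d ≤ (e j : ℝ) ^ d := by gcongr
        have h3 : (0 : ℝ) ≤ (s j : ℝ) ^ d := by positivity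
        have h4 : (0 : ℝ) ≤ (n : ℝ) ^ d := by positivity
        rcases le_total 1 ε with h | h <;> nlinarith
      · rintro i ⟨hi, hin⟩
        obtain ⟨k, hk, hi⟩ := Set.mem_iUnion₂.1 hi
        rw [Finset.coe_union]
        rcases le_or_gt (e k) n with he | he
        · exact Or.inl (Finset.mem_coe.2 (Finset.mem_biUnion.2 ⟨k, mem_u k hk he, hi⟩))
        · refine Or.inr (mem_shell.2 ⟨hin, fun hlt => ?_⟩)
          obtain ⟨-, hns⟩ := mem_shell.1 (Finset.mem_coe.1 hi)
          rcases lt_or_ge (s k) n with hsn | hsn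
          · have hle : s j ≤ s k := by
              rcases le_total (s j) (s k) with h | h
              · exact h
              · exact hmin ⟨hk, he, hsn⟩ h
            exact hns fun l => (hlt l).trans_le hle
          · exact hns fun l => (hin l).trans_le hsn
    · push Not at hex
      refine ⟨∅, by simp; positivity, ?_⟩
      rintro i ⟨hi, hin⟩
      obtain ⟨k, hk, hi⟩ := Set.mem_iUnion₂.1 hi
      rw [Finset.union_empty]
      rcases le_or_gt (e k) n with he | he
      · exact Finset.mem_coe.2 (Finset.mem_biUnion.2 ⟨k, mem_u k hk he, hi⟩)
      · exact absurd (fun l => (hin l).trans_le (hex k hk he))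
          (mem_shell.1 (Finset.mem_coe.1 hi)).2
  have h1 : ((Set.ncard ((⋃ k ∈ K, (shell d (s k) (e k) : Set (Site d))) ∩ cubeSet d n) : ℕ) : ℝ)
      ≤ (((u.biUnion fun k => shell d (s k) (e k)) ∪ F).card : ℕ) := by
    rw [← Set.ncard_coe_finset]
    exact Nat.cast_le.2 (Set.ncard_le_ncard hsub (Finset.finite_toSet _))
  have h2 : ((((u.biUnion fun k => shell d (s k) (e k)) ∪ F).card : ℕ) : ℝ) ≤
      ((u.biUnion fun k => shell d (s k) (e k)).card : ℝ) + (F.card : ℝ) := by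
    exact_mod_cast Finset.card_union_le _ _
  linarith

theorem card_shell_mul (d k : ℕ) {a b : ℕ} (h : a ≤ b) :
    (shell d (k * a) (k * b)).card = (shell d a b).card * k ^ d := by
  rw [card_shell (Nat.mul_le_mul_left k h), card_shell h, mul_pow, mul_pow, ← Nat.mul_sub, mul_comm]

theorem Scales.densityLE_low (hd : 1 ≤ d) {φ : ℝ} (hφ0 : 0 < φ) {x : Config A d} {q₀ q₁ : ℕ → ℕ}
    (h : Scales φ x q₀ q₁) {a ε : ℝ} (hε : 0 ≤ ε) {k₁ : ℕ} (hk₁ : 1 ≤ k₁)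
    (H : ∀ᶠ n : ℕ in atTop, ∀ Z Z' : Finset (Site d × ℕ), CubeFam Z n → CubeFam Z' n →
      Disjoint (cover Z) (cover Z') → (∀ b ∈ Z, k₁ ≤ b.2) → (∀ b ∈ Z', k₁ ≤ b.2) →
      (∀ k, ((Z'.filter fun b => b.2 = k).card : ℝ) ≤ (A : ℝ) ^ ((k : ℝ) ^ d * a)) →
      (∀ b ∈ Z, ∃ b' ∈ Z', b'.2 = b.2 ∧ wordAt x b.2 b'.1 = wordAt x b.2 b.1) →
      (vol Z : ℝ) < ε * φ / (2 * (5 * d * 3 ^ d)) * (n : ℝ) ^ d) :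
    DensityLE (⋃ k ∈ {k : ℕ | k₁ ≤ k ∧ (Mk φ x k : ℝ) ≤ (A : ℝ) ^ ((k : ℝ) ^ d * a)},
      Lregion φ x k) (2 * ε) := by
  refine (densityLE_iUnion_shell (s := fun k => k * q₀ k) (e := fun k => k * q₁ k) hε ?_ ?_).mono
    (Set.iUnion₂_mono fun k hk => h.Lregion_subset (hk₁.trans hk.1))
  · exact fun k hk => ⟨Nat.mul_le_mul_left k (h.lt k (hk₁.trans hk.1)).le,
      h.le_end (hk₁.trans hk.1)⟩
  filter_upwards [H] with n hn u hu hun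
  have hu1 : ∀ k ∈ u, 1 ≤ k := fun k hk => hk₁.trans (hu hk).1
  obtain ⟨v, hvu, hdis, hle⟩ := exists_disjoint_shells hd u (s := fun k => k * q₀ k)
    (m := fun k => k * q₁ k) fun k hk => Nat.mul_lt_mul_of_pos_left (h.lt k (hu1 k hk)) (hu1 k hk)
  choose R hRF hRcard hRex hRrep using
    fun k => exists_representatives x k (shell d (q₀ k) (q₁ k))
  have hv1 : ∀ k ∈ v, 1 ≤ k := fun k hk => hu1 k (hvu hk)
  have hvn : ∀ k ∈ v, k * q₁ k ≤ n := fun k hk => hun k (hvu hk)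
  have hside : ∀ F : ℕ → Finset (Site d), ∀ b ∈ blockFam v F, k₁ ≤ b.2 := by
    intro F b hb
    obtain ⟨k, hk, r, -, rfl⟩ := mem_blockFam.1 hb
    exact (hu (hvu hk)).1
  have hvol := hn (blockFam v fun k => shell d (q₀ k) (q₁ k) \ R k) (blockFam v R)
    (cubeFam_blockFam hv1 hdis hvn fun k _ => Finset.sdiff_subset)
    (cubeFam_blockFam hv1 hdis hvn fun k _ => hRF k)
    (disjoint_cover_blockFam hv1 hdis (fun k _ => Finset.sdiff_subset) (fun k _ => hRF k)
      fun k _ => Finset.sdiff_disjoint)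
    (hside _) (hside _)
    (fun k => by
      refine le_trans (Nat.cast_le.2 card_blockFam_filter) ?_
      split_ifs with hk
      · rw [hRcard, ← h.Mk_eq (hv1 k hk)]
        exact (hu (hvu hk)).2
      · rw [Nat.cast_zero]; positivity)
    (fun b hb => by
      obtain ⟨k, hk, r, hr, rfl⟩ := mem_blockFam.1 hb
      obtain ⟨r', hr', hw⟩ := hRex k r (Finset.mem_sdiff.1 hr).1
      exact ⟨_, mem_blockFam.2 ⟨k, hk, r', hr', rfl⟩, rfl, hw⟩)
  rw [vol_blockFam hv1, lt_iff_not_ge] at hvol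
  have hsum : φ * ((∑ k ∈ v, (shell d (k * q₀ k) (k * q₁ k)).card : ℕ) : ℝ) ≤
      2 * ((∑ k ∈ v, (shell d (q₀ k) (q₁ k) \ R k).card * k ^ d : ℕ) : ℝ) := by
    push_cast
    rw [Finset.mul_sum, Finset.mul_sum]
    refine Finset.sum_le_sum fun k hk => ?_
    rw [card_shell_mul d k (h.lt k (hv1 k hk)).le]
    have h1 := h.rep_ge k (hv1 k hk)
    have h2 : (rep x k (shell d (q₀ k) (q₁ k)) : ℝ) ≤
        2 * ((shell d (q₀ k) (q₁ k) \ R k).card : ℝ) := by exact_mod_cast hRrep k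
    push_cast
    rw [← mul_assoc, ← mul_assoc]
    exact mul_le_mul_of_nonneg_right (h1.trans h2) (by positivity)
  have hle' : ((u.biUnion fun k => shell d (k * q₀ k) (k * q₁ k)).card : ℝ) ≤
      5 * d * 3 ^ d * ((∑ k ∈ v, (shell d (k * q₀ k) (k * q₁ k)).card : ℕ) : ℝ) := by
    exact_mod_cast hle
  rw [not_le] at hvol
  have hd0 : (0 : ℝ) < d := by exact_mod_cast hd
  have hC : (0 : ℝ) < 5 * d * 3 ^ d := by positivity
  generalize (5 * d * 3 ^ d : ℝ) = C at *
  rw [div_mul_eq_mul_div, lt_div_iff₀ (by positivity)] at hvol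
  generalize ((∑ k ∈ v, (shell d (k * q₀ k) (k * q₁ k)).card : ℕ) : ℝ) = S at *
  refine hle'.trans (le_of_mul_le_mul_left ?_ hφ0)
  have := mul_le_mul_of_nonneg_left hsum hC.le
  linarith

theorem Scales.densityLE_thick {φ : ℝ} (hφ1 : φ < 1) {x : Config A d} {q₀ q₁ : ℕ → ℕ}
    (h : Scales φ x q₀ q₁) {T : (k : ℕ) → Finset (Word A d k)} {ε : ℝ} (hε : 0 ≤ ε)
    (H : ∀ᶠ n : ℕ in atTop, ∀ Z : Finset (Site d × ℕ), CubeFam Z n →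
      (∀ b ∈ Z, wordAt x b.2 b.1 ∉ T b.2) → (vol Z : ℝ) ≤ ε * (1 - φ) / 2 * (n : ℝ) ^ d) :
    DensityLE (⋃ k ∈ {k : ℕ | 1 ≤ k ∧ q₀ k + 1 < q₁ k ∧
        2 * ((T k).card : ℝ) ≤ (1 - φ) * ((shell d (q₀ k) (q₁ k - 1)).card : ℝ)},
      (shell d (k * q₀ k) (k * (q₁ k - 1)) : Set (Site d))) (2 * ε) := by
  classical
  refine densityLE_iUnion_shell hε (fun k hk => ⟨Nat.mul_le_mul_left k ?_,
    Nat.le_mul_of_pos_right k ?_⟩) ?_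
  · have := hk.2.1; omega
  · have := hk.2.1; omega
  filter_upwards [H] with n hn u hu hun
  have hu1 : ∀ k ∈ u, 1 ≤ k := fun k hk => (hu hk).1
  have hvol := hn (blockFam u fun k => (shell d (q₀ k) (q₁ k - 1)).filter
      fun r => wordAt x k (corner k r) ∉ T k)
    (cubeFam_blockFam hu1 (h.pairwiseDisjoint hu1) hun fun k _ => Finset.filter_subset _ _)
    (fun b hb => by
      obtain ⟨k, hk, r, hr, rfl⟩ := mem_blockFam.1 hb
      exact (Finset.mem_filter.1 hr).2)
  rw [vol_blockFam hu1] at hvol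
  have hsum : (1 - φ) * ((u.biUnion fun k => shell d (k * q₀ k) (k * (q₁ k - 1))).card : ℝ) ≤
      2 * ((∑ k ∈ u, ((shell d (q₀ k) (q₁ k - 1)).filter
        fun r => wordAt x k (corner k r) ∉ T k).card * k ^ d : ℕ) : ℝ) := by
    refine le_trans (mul_le_mul_of_nonneg_left (Nat.cast_le.2 Finset.card_biUnion_le)
      (sub_nonneg.2 hφ1.le)) ?_
    push_cast
    rw [Finset.mul_sum, Finset.mul_sum]
    refine Finset.sum_le_sum fun k hk => ?_
    have hlt := (hu hk).2.1
    rw [card_shell_mul d k (by omega)]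
    have h1 := h.rep_le k (hu1 k hk)
    have h2 : ((shell d (q₀ k) (q₁ k - 1)).card : ℝ) ≤
        rep x k (shell d (q₀ k) (q₁ k - 1)) + (T k).card +
          ((shell d (q₀ k) (q₁ k - 1)).filter fun r => wordAt x k (corner k r) ∉ T k).card := by
      exact_mod_cast card_sub_rep_le_card_add x k _ (T k)
    have h3 := (hu hk).2.2
    push_cast
    rw [← mul_assoc, ← mul_assoc]
    refine mul_le_mul_of_nonneg_right ?_ (by positivity)
    linarith
  refine le_of_mul_le_mul_left ?_ (sub_pos.2 hφ1)
  linarith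

theorem exists_densityLE_thin (d : ℕ) (C : ℕ) {ε : ℝ} (hε : 0 < ε) :
    ∃ k₁, ∀ e : ℕ → ℕ, DensityLE (⋃ k ∈ {k : ℕ | k₁ ≤ k ∧ k ^ 3 ≤ e k},
      (shell d (e k - C * k) (e k) : Set (Site d))) (2 * ε) := by
  have hδ : 0 < ε / (d * C + 1 : ℝ) := by positivity
  obtain ⟨s, hs⟩ := summable_iff_vanishing_norm.1
    (Real.summable_one_div_nat_pow.2 (by norm_num : 1 < 2)) _ hδ
  refine ⟨s.sup id + 1, fun e => densityLE_iUnion_shell hε.le (fun k hk => ⟨Nat.sub_le _ _,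
    (Nat.le_self_pow (by norm_num) k).trans hk.2⟩) (Eventually.of_forall fun n u hu hun => ?_)⟩
  have hdis : Disjoint u s := Finset.disjoint_left.2 fun k hk hks => by
    have h1 := (hu hk).1
    have h2 : k ≤ s.sup id := Finset.le_sup (f := id) hks
    omega
  have htail := (le_abs_self _).trans (hs u hdis).le
  have hterm : ∀ k ∈ u, ((shell d (e k - C * k) (e k)).card : ℝ) ≤
      d * C * (n : ℝ) ^ d * (1 / (k : ℝ) ^ 2) := by
    intro k hk
    have hk0 : 0 < k := by have := (hu hk).1; omega
    have hk3 := (hu hk).2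
    rw [mul_one_div, le_div_iff₀ (by positivity), card_shell (Nat.sub_le _ _)]
    have h1 := pow_sub_pow_le_mul_pow_pred d (Nat.sub_le (e k) (C * k))
    rcases Nat.eq_zero_or_pos d with rfl | hd
    · simp
    have h2 : (e k ^ d - (e k - C * k) ^ d) * k ^ 2 ≤ d * C * n ^ d :=
      calc (e k ^ d - (e k - C * k) ^ d) * k ^ 2
          ≤ d * ((C * k) * e k ^ (d - 1)) * k ^ 2 := by
            refine Nat.mul_le_mul_right _ (h1.trans ?_)
            gcongr
            omega
        _ = d * C * (k ^ 3 * e k ^ (d - 1)) := by ring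
        _ ≤ d * C * (e k * e k ^ (d - 1)) := by gcongr
        _ = d * C * e k ^ d := by rw [← pow_succ', Nat.sub_add_cancel hd]
        _ ≤ d * C * n ^ d := by have := hun k hk; gcongr
    exact_mod_cast h2
  calc ((u.biUnion fun k => shell d (e k - C * k) (e k)).card : ℝ)
      ≤ ∑ k ∈ u, ((shell d (e k - C * k) (e k)).card : ℝ) := by
        exact_mod_cast Finset.card_biUnion_le
    _ ≤ ∑ k ∈ u, d * C * (n : ℝ) ^ d * (1 / (k : ℝ) ^ 2) := Finset.sum_le_sum hterm
    _ = d * C * (n : ℝ) ^ d * ∑ k ∈ u, 1 / (k : ℝ) ^ 2 := by rw [Finset.mul_sum]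
    _ ≤ d * C * (n : ℝ) ^ d * (ε / (d * C + 1 : ℝ)) := by gcongr
    _ = (d * C * (ε / (d * C + 1 : ℝ))) * (n : ℝ) ^ d := by ring
    _ ≤ ε * (n : ℝ) ^ d := by
        gcongr
        rw [mul_div_assoc', div_le_iff₀ (by positivity)]
        nlinarith

/-- Scales with many distinct words are either thick relative to the number of typical words, or
consist of boundedly many layers. -/
theorem eventually_thick_or_thin (hA : 2 ≤ A) (hd : 1 ≤ d) {φ : ℝ} (hφ1 : φ < 1) {h α : ℝ}
    (hh : 0 ≤ h) (hα : 0 < α) :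
    ∀ᶠ k : ℕ in atTop, ∀ a b : ℕ, a < b →
      (A : ℝ) ^ ((k : ℝ) ^ d * (h + α)) ≤ ((shell d a b).card : ℝ) →
      k ^ 3 ≤ k * b ∧ (b ≤ a + 2 * d ∨ a + 1 < b ∧ ∀ t : ℝ,
        t ≤ (A : ℝ) ^ ((k : ℝ) ^ d * (h + α / 2)) →
          2 * t ≤ (1 - φ) * ((shell d a (b - 1)).card : ℝ)) := by
  have hA1 : (1 : ℝ) < A := by exact_mod_cast (by omega : 1 < A)
  have hA0 : (0 : ℝ) < A := by linarith
  have hr : 1 < (A : ℝ) ^ α := Real.one_lt_rpow hA1 hα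
  have hr2 : 1 < (A : ℝ) ^ (α / 2) := Real.one_lt_rpow hA1 (by positivity)
  have e1 := (isLittleO_pow_const_const_pow_of_one_lt (R := ℝ) (2 * d) hr).bound one_pos
  have e2 := (tendsto_pow_atTop_atTop_of_one_lt hr2).eventually_ge_atTop (4 / (1 - φ))
  filter_upwards [e1, e2, eventually_ge_atTop 1] with k h1 h2 hk a b hab hcard
  have hkd : (k : ℝ) ≤ (k : ℝ) ^ d := le_self_pow₀ (by exact_mod_cast hk) (by omega)
  have hcard' := hcard
  rw [card_shell hab.le] at hcard'
  have hpow : ∀ β : ℝ, ((A : ℝ) ^ β) ^ k = (A : ℝ) ^ ((k : ℝ) * β) := fun β => by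
    rw [mul_comm, Real.rpow_mul hA0.le, Real.rpow_natCast]
  constructor
  · have hkb : (k ^ 2) ^ d ≤ b ^ d := by
      have h3 : ((k : ℝ) ^ 2) ^ d ≤ (b : ℝ) ^ d := by
        calc ((k : ℝ) ^ 2) ^ d = (k : ℝ) ^ (2 * d) := by rw [← pow_mul]
          _ ≤ ((A : ℝ) ^ α) ^ k := by
              rw [one_mul, Real.norm_of_nonneg (by positivity),
                Real.norm_of_nonneg (by positivity)] at h1
              exact h1
          _ = (A : ℝ) ^ ((k : ℝ) * α) := hpow α
          _ ≤ (A : ℝ) ^ ((k : ℝ) ^ d * (h + α)) := by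
              refine Real.rpow_le_rpow_of_exponent_le hA1.le ?_
              have : α ≤ h + α := by linarith
              gcongr
          _ ≤ ((b ^ d - a ^ d : ℕ) : ℝ) := hcard'
          _ ≤ ((b ^ d : ℕ) : ℝ) := Nat.cast_le.2 (Nat.sub_le _ _)
          _ = (b : ℝ) ^ d := by push_cast; rfl
      exact_mod_cast h3
    have := (Nat.pow_le_pow_iff_left (by omega : d ≠ 0)).1 hkb
    calc k ^ 3 = k * k ^ 2 := by ring
      _ ≤ k * b := Nat.mul_le_mul_left k this
  · by_contra! hcon
    obtain ⟨hlong, hthin⟩ := hcon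
    obtain ⟨t, ht, hlt⟩ := hthin (by omega)
    have h3 : 4 / (1 - φ) * (A : ℝ) ^ ((k : ℝ) ^ d * (h + α / 2)) ≤
        (A : ℝ) ^ ((k : ℝ) ^ d * (h + α)) := by
      calc 4 / (1 - φ) * (A : ℝ) ^ ((k : ℝ) ^ d * (h + α / 2))
          ≤ (A : ℝ) ^ ((k : ℝ) * (α / 2)) * (A : ℝ) ^ ((k : ℝ) ^ d * (h + α / 2)) := by
            rw [← hpow]; gcongr
        _ = (A : ℝ) ^ ((k : ℝ) * (α / 2) + (k : ℝ) ^ d * (h + α / 2)) :=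
            (Real.rpow_add hA0 _ _).symm
        _ ≤ (A : ℝ) ^ ((k : ℝ) ^ d * (h + α)) := by
            refine Real.rpow_le_rpow_of_exponent_le hA1.le ?_
            nlinarith
    rw [div_mul_eq_mul_div, div_le_iff₀ (sub_pos.2 hφ1)] at h3
    have h4 : 2 * ((shell d a (b - 1)).card : ℝ) < (shell d a b).card := by
      refine lt_of_mul_lt_mul_right ?_ (sub_pos.2 hφ1).le
      have := mul_le_mul_of_nonneg_right hcard (sub_pos.2 hφ1).le
      linarith
    have h5 : 2 * (shell d a (b - 1)).card < (shell d a b).card := by exact_mod_cast h4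
    rw [card_shell hab.le, card_shell (by omega)] at h5
    have h6 := mul_pow_pred_le_pow_sub_pow hd hab.le
    have h7 := pow_sub_pow_le_mul_pow_pred d (Nat.sub_le b 1)
    have h8 : b - (b - 1) = 1 := by omega
    have h9 : a ^ d ≤ (b - 1) ^ d := Nat.pow_le_pow_left (by omega) d
    have h10 : (b - 1) ^ d ≤ b ^ d := Nat.pow_le_pow_left (by omega) d
    rw [h8, one_mul] at h7
    have h11 : (b - a) * b ^ (d - 1) ≤ 2 * d * b ^ (d - 1) := by
      rw [mul_assoc]; omega
    have h12 := Nat.le_of_mul_le_mul_right h11 (pow_pos (by omega) _)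
    omega

theorem ae_densityLE_atypical (hA : 2 ≤ A) (hd : 1 ≤ d) {μ : Measure (Config A d)}
    [IsProbabilityMeasure μ] (hμ : ErgodicShift μ) {h : ℝ} (hh : HasEntropyRate μ h) {φ : ℝ}
    (hφ0 : 0 < φ) (hφ1 : φ < 1) {α ε : ℝ} (hα : 0 < α) (hε : 0 < ε) :
    ∀ᵐ x ∂μ, DensityLE (⋃ k ∈ {k : ℕ |
      (A : ℝ) ^ ((k : ℝ) ^ d * (h + α)) ≤ (Mk φ x k : ℝ) ∨
      (Mk φ x k : ℝ) ≤ (A : ℝ) ^ ((k : ℝ) ^ d * (h - α))}, Lregion φ x k)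
      (2 * ε + 2 * ε + 2 * ε + ε) := by
  have hd0 : (0 : ℝ) < d := by exact_mod_cast hd
  have hφ2 := sub_pos.2 hφ1
  obtain ⟨k₁, hk₁, H₁⟩ := hμ.exists_ae_vol_copies_lt hA hd hh hα
    (c := ε * φ / (2 * (5 * d * 3 ^ d))) (by positivity)
  obtain ⟨T, k₂, hT, H₂⟩ := hμ.exists_ae_vol_atypical_le hA hd hh (half_pos hα)
    (lam := ε * (1 - φ) / 2) (by positivity)
  obtain ⟨k₃, H₃⟩ := exists_densityLE_thin d (2 * d) hε
  obtain ⟨k₄, H₄⟩ := eventually_atTop.1 (eventually_thick_or_thin hA hd hφ1 (hh.nonneg hA) hα)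
  filter_upwards [H₁, H₂] with x hx₁ hx₂
  obtain ⟨q₀, q₁, hS⟩ := exists_scales hd hφ0 hφ1 x
  have hfin : (⋃ k ∈ (Finset.range (k₁ + k₂ + k₃ + k₄) : Set ℕ),
      (shell d (k * q₀ k) (k * q₁ k) : Set (Site d))).Finite :=
    (Finset.finite_toSet _).biUnion fun k _ => Finset.finite_toSet _
  refine (((hS.densityLE_low hd hφ0 hε.le hk₁ hx₁).union
    (hS.densityLE_thick hφ1 hε.le hx₂)).union (H₃ fun k => k * q₁ k)).union
      (densityLE_of_finite hd hfin hε) |>.mono ?_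
  intro i hi
  obtain ⟨k, hk, hi⟩ := Set.mem_iUnion₂.1 hi
  have hk0 : 1 ≤ k := by
    by_contra h0
    obtain rfl : k = 0 := by omega
    rw [hS.Lregion_zero] at hi
    exact hi
  have his := hS.Lregion_subset hk0 hi
  rcases lt_or_ge k (k₁ + k₂ + k₃ + k₄) with hlt | hge
  · exact Or.inr (Set.mem_iUnion₂.2 ⟨k, by simpa using hlt, his⟩)
  refine Or.inl ?_
  rcases hk with hk | hk
  swap
  · exact Or.inl (Or.inl (Set.mem_iUnion₂.2 ⟨k, ⟨by omega, hk⟩, hi⟩))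
  obtain ⟨hcube, hcases⟩ := H₄ k (by omega) (q₀ k) (q₁ k) (hS.lt k hk0)
    (hk.trans (Nat.cast_le.2 (hS.Mk_le hk0)))
  have hrad := radius_mem_Ico his
  have thin : k * q₁ k - 2 * d * k ≤ radius i → i ∈ ⋃ k ∈ {k : ℕ | k₃ ≤ k ∧ k ^ 3 ≤ k * q₁ k},
      (shell d (k * q₁ k - 2 * d * k) (k * q₁ k) : Set (Site d)) := fun hle =>
    Set.mem_iUnion₂.2 ⟨k, ⟨by omega, hcube⟩, mem_shell_of_radius hd ⟨hle, hrad.2⟩⟩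
  rcases hcases with hthin | ⟨hlong, hthick⟩
  · refine Or.inr (thin (le_trans ?_ hrad.1))
    have := Nat.mul_le_mul_left k hthin
    rw [Nat.mul_add, mul_comm k (2 * d)] at this
    omega
  · rcases lt_or_ge (radius i) (k * (q₁ k - 1)) with hr | hr
    · exact Or.inl (Or.inr (Set.mem_iUnion₂.2 ⟨k, ⟨hk0, hlong, hthick _ (hT k (by omega))⟩,
        mem_shell_of_radius hd ⟨hrad.1, hr⟩⟩))
    · refine Or.inr (thin (le_trans ?_ hr))
      rw [Nat.mul_sub, mul_one]
      have : k ≤ 2 * d * k := Nat.le_mul_of_pos_left k (by omega)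
      omega

/-- The regions parsed at scales `k` with an atypical number `M_k` of
distinct parsed `k`-words have upper asymptotic density zero, almost surely. -/
theorem sru_atypical_scales_null_density
    (A d : ℕ) (hA : 2 ≤ A) (hd : 1 ≤ d)
    (μ : Measure (Config A d)) [IsProbabilityMeasure μ] (hμ : ErgodicShift μ)
    (hμ' : ℝ) (hrate : HasEntropyRate μ hμ')
    (φ : ℝ) (hφ0 : 0 < φ) (hφ1 : φ < 1) (α0 : ℝ) (hα0 : 0 < α0) :
    ∀ᵐ x ∂μ,
      upperDensity (⋃ k ∈ {k : ℕ |
          (A : ℝ) ^ ((k : ℝ) ^ d * (hμ' + α0)) ≤ (Mk φ x k : ℝ) ∨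
          (Mk φ x k : ℝ) ≤ (A : ℝ) ^ ((k : ℝ) ^ d * (hμ' - α0))}, Lregion φ x k) = 0 := by
  have key := ae_all_iff.2 fun j : ℕ =>
    ae_densityLE_atypical hA hd hμ hrate hφ0 hφ1 hα0 (Nat.one_div_pos_of_nat (α := ℝ) (n := j))
  filter_upwards [key] with x hx
  refine upperDensity_eq_zero fun ε hε => ?_
  obtain ⟨j, hj⟩ := exists_nat_one_div_lt (show 0 < ε / 7 by positivity)
  filter_upwards [hx j] with n hn
  refine hn.trans ?_
  gcongr
  linarith

end SRU1408
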